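/- arXiv:2405.02526 — 2 statements merged into one kernel-verified Lean document; each statement's English description precedes it below -/
import Mathlib

section
/- (Stability and uniqueness, single interface.) Let ρ_o, σ_o ∈ L∞(ℝ;[0,1]), y ∈ W^{1,∞}_loc((0,∞);ℝ), and q, r ∈ L∞_loc((0,∞);ℝ) be such that (ẏ(t), q(t)) and (ẏ(t), r(t)) are admissible slope–constraint pairs for a.e. t > 0. Let ρ be a G_{ẏ}(q)-entropy solution with initial datum ρ_o and σ a G_{ẏ}(r)-entropy solution with initial datum σ_o. Then for a.e. T > 0: ∫_ℝ |ρ(x,T) − σ(x,T)| dx ≤ ∫_ℝ |ρ_o(x) − σ_o(x)| dx + 2∫₀^T |q(t) − r(t)| dt (inequality in [0,∞]). In particular, if ρ_o = σ_o a.e. and q = r a.e., then ρ = σ a.e. on ℝ×(0,∞). -/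
/-!
Off the interface both functions are Kruzhkov entropy solutions, so the classical doubling of
variables gives `∂ₜ|ρ - σ| + ∂ₓΦ(ρ, σ) ≤ 0` there, with initial datum `|ρo - σo|`. To treat the
datum and the interior at once, each solution is prolonged to `t ≤ 0` by its datum and the flux is
switched on at `t = 0` by a Heaviside factor (`KE`, `KE_of_sol`). The switch is discontinuous, but a
mollifier much finer in time than in space makes the resulting error vanish (`exists_kernel`,
`doubling`).

Admissibility bounds the slope of the interface by a Lipschitz constant `L` of the flux, and the
constraint levels by `2L` (`adm_bound`); hence the interface extends to a globally Lipschitz curve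
`Y`. Testing with functions cut off in an `ε`-neighbourhood of `Y` and letting `ε → 0` extends the
inequality across the interface, at the price of the jump of the normal entropy flux
`Φ(ρ, σ) - Y' |ρ - σ|` between its one-sided limits (`interface_ineq`), which the strong traces
identify (`pair_lim`). Since both pairs of traces lie in germs and the flux is concave, this jump is
at most `2|q - r|` (`germ_ineq`), which gives `weak_contraction`.

Finally the test function is taken to be a smooth weight decreasing outwards along cones of speed
`L`, times a cutoff at time `T`. The cone absorbs the flux term; letting the cutoff become sharp at a
Lebesgue point `T` and then the cone exhaust the line yields `global_contraction`. Uniqueness follows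
by Fubini.
-/

open MeasureTheory Set Filter Topology

noncomputable section

/-- The normal flux `F_s(ρ) = f(ρ) - s·ρ` through the line of slope `s`. -/
def Flx (f : ℝ → ℝ) (s ρ : ℝ) : ℝ := f ρ - s * ρ

/-- The Kruzhkov entropy flux `Φ_s(a,b) = sgn(a-b)(F_s(a) - F_s(b))`. -/
def EFlx (f : ℝ → ℝ) (s a b : ℝ) : ℝ := Real.sign (a - b) * (Flx f s a - Flx f s b)

/-- `f` is a bell-shaped flux with critical density `ρb`:
`f` is `C²` on `[0,1]`, vanishes at `0` and `1`, is concave on `[0,1]`, and its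
derivative has the sign of `ρb - ρ` a.e. on `(0,1)`. -/
structure BellShaped (f : ℝ → ℝ) (ρb : ℝ) : Prop where
  smooth : ContDiffOn ℝ 2 f (Icc 0 1)
  zero_at_zero : f 0 = 0
  zero_at_one : f 1 = 0
  concave : ConcaveOn ℝ (Icc 0 1) f
  crit_mem : ρb ∈ Ioo (0:ℝ) 1
  deriv_sign : ∀ᵐ ρ ∂(volume.restrict (Ioo (0:ℝ) 1)),
    0 < derivWithin f (Icc 0 1) ρ * (ρb - ρ)

/-- `max_{[0,1]} F_s`. -/
def maxFlx (f : ℝ → ℝ) (s : ℝ) : ℝ := sSup (Flx f s '' Icc 0 1)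

/-- Admissible slope–constraint pair `(s,q)`. -/
def AdmissiblePair (f : ℝ → ℝ) (s q : ℝ) : Prop :=
  (0 ≤ s ∧ 0 ≤ q ∧ q < maxFlx f s) ∨ (s < 0 ∧ -s ≤ q ∧ q < maxFlx f s)

/-- The admissibility germ `G_s(q) = G¹ ∪ G² ∪ G³`. -/
def Germ (f : ℝ → ℝ) (s q : ℝ) : Set (ℝ × ℝ) :=
  {p | p.1 ∈ Icc (0:ℝ) 1 ∧ p.2 ∈ Icc (0:ℝ) 1 ∧
    ((p.2 < p.1 ∧ Flx f s p.1 = q ∧ Flx f s p.2 = q) ∨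
     (p.1 = p.2 ∧ Flx f s p.1 ≤ q) ∨
     (p.1 < p.2 ∧ Flx f s p.1 = Flx f s p.2 ∧ Flx f s p.1 ≤ q))}

/-- The constraint remainder `ℛ_s(κ,q) = 2(F_s(κ) - min{F_s(κ), q})`. -/
def Rem (f : ℝ → ℝ) (s κ q : ℝ) : ℝ := 2 * (Flx f s κ - min (Flx f s κ) q)

/-- `∂_t φ`. -/
def pT (φ : ℝ × ℝ → ℝ) (p : ℝ × ℝ) : ℝ := fderiv ℝ φ p (0, 1)

/-- `∂_x φ`. -/
def pX (φ : ℝ × ℝ → ℝ) (p : ℝ × ℝ) : ℝ := fderiv ℝ φ p (1, 0)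

/-- A nonnegative smooth compactly supported test function on `ℝ × ℝ`
(first variable `x`, second variable `t`). -/
def TestFun (φ : ℝ × ℝ → ℝ) : Prop :=
  ContDiff ℝ (⊤ : ℕ∞) φ ∧ HasCompactSupport φ ∧ ∀ p, 0 ≤ φ p

/-- `y ∈ W^{1,∞}_loc((0,∞))`: locally Lipschitz on `(0,∞)`. -/
def LocLip (y : ℝ → ℝ) : Prop :=
  ∀ K : Set ℝ, IsCompact K → K ⊆ Ioi 0 → ∃ C : NNReal, LipschitzOnWith C y K

/-- `q ∈ L∞_loc((0,∞))`: locally essentially bounded on `(0,∞)`. -/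
def LocBdd (q : ℝ → ℝ) : Prop :=
  ∀ K : Set ℝ, IsCompact K → K ⊆ Ioi 0 → ∃ M : ℝ,
    ∀ᵐ t ∂(volume.restrict K), |q t| ≤ M

/-- The interface `Γ = {(y(t), t) : t > 0}`. -/
def Gam (y : ℝ → ℝ) : Set (ℝ × ℝ) := {p | ∃ t, 0 < t ∧ p = (y t, t)}

/-- Interior term of the Kruzhkov entropy inequality. -/
def interiorTerm (f : ℝ → ℝ) (ρ : ℝ → ℝ → ℝ) (κ : ℝ) (φ : ℝ × ℝ → ℝ) : ℝ :=
  ∫ t in Ioi (0:ℝ), ∫ x : ℝ,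
    (|ρ x t - κ| * pT φ (x, t) + EFlx f 0 (ρ x t) κ * pX φ (x, t))

/-- Initial-datum term of the entropy inequality. -/
def initTerm (ρo : ℝ → ℝ) (κ : ℝ) (φ : ℝ × ℝ → ℝ) : ℝ :=
  ∫ x : ℝ, |ρo x - κ| * φ (x, 0)

/-- Remainder term of the entropy inequality, along the interface. -/
def remTerm (f : ℝ → ℝ) (y q : ℝ → ℝ) (κ : ℝ) (φ : ℝ × ℝ → ℝ) : ℝ :=
  ∫ t in Ioi (0:ℝ), Rem f (deriv y t) κ (q t) * φ (y t, t)

/-- Admissible entropy solution of the constrained Cauchy problem (Definition 2.1):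
entropy inequalities with remainder, and weak form of the flux constraint. -/
def IsAdmSol (f : ℝ → ℝ) (ρo y q : ℝ → ℝ) (ρ : ℝ → ℝ → ℝ) : Prop :=
  (∀ κ ∈ Icc (0:ℝ) 1, ∀ φ : ℝ × ℝ → ℝ, TestFun φ →
     0 ≤ interiorTerm f ρ κ φ + initTerm ρo κ φ + remTerm f y q κ φ) ∧
  (∀ φ : ℝ × ℝ → ℝ, TestFun φ → tsupport φ ⊆ univ ×ˢ Ioi (0:ℝ) →
     -(∫ t in Ioi (0:ℝ), ∫ x in Ioi (y t),
         (ρ x t * pT φ (x, t) + f (ρ x t) * pX φ (x, t)))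
       ≤ ∫ t in Ioi (0:ℝ), q t * φ (y t, t))

/-- `ρ` admits strong one-sided traces `ρm` (left) and `ρp` (right) along `Γ`. -/
def HasTraces (y : ℝ → ℝ) (ρ : ℝ → ℝ → ℝ) (ρm ρp : ℝ → ℝ) : Prop :=
  ∀ T : ℝ, 0 < T →
    Tendsto (fun ε : ℝ => ∫ t in Ioo (0:ℝ) T, |ρ (y t - ε) t - ρm t|)
      (𝓝[>] 0) (𝓝 0) ∧
    Tendsto (fun ε : ℝ => ∫ t in Ioo (0:ℝ) T, |ρ (y t + ε) t - ρp t|)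
      (𝓝[>] 0) (𝓝 0)

/-- `G_{ẏ}(q)`-entropy solution (Definition 2.4): entropy inequalities for test
functions supported away from `Γ`, plus the germ condition on the traces. -/
def IsGermSol (f : ℝ → ℝ) (ρo y q : ℝ → ℝ) (ρ : ℝ → ℝ → ℝ) (ρm ρp : ℝ → ℝ) : Prop :=
  (∀ κ ∈ Icc (0:ℝ) 1, ∀ φ : ℝ × ℝ → ℝ, TestFun φ → Disjoint (tsupport φ) (Gam y) →
     0 ≤ interiorTerm f ρ κ φ + initTerm ρo κ φ) ∧
  HasTraces y ρ ρm ρp ∧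
  (∀ᵐ t ∂(volume.restrict (Ioi (0:ℝ))), (ρm t, ρp t) ∈ Germ f (deriv y t) (q t))


/-! ### Entropy flux, germs and admissible slopes -/

/-- The Kruzhkov flux `g (a ∨ b) - g (a ∧ b)` of a globally Lipschitz flux `g`. It agrees with
`EFlx f 0 a b` for `a b ∈ [0,1]` when `g` extends `f`, and is continuous on all of `ℝ × ℝ`. -/
def EE (g : ℝ → ℝ) (a b : ℝ) : ℝ := g (max a b) - g (min a b)

lemma EFlx_eq {f g : ℝ → ℝ} (hfg : EqOn f g (Icc 0 1)) (s : ℝ) {a b : ℝ}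
    (ha : a ∈ Icc (0:ℝ) 1) (hb : b ∈ Icc (0:ℝ) 1) :
    EFlx f s a b = EE g a b - s * |a - b| := by
  unfold EFlx EE Flx
  rw [hfg ha, hfg hb]
  rcases lt_trichotomy a b with h | h | h
  · rw [Real.sign_of_neg (by linarith), max_eq_right h.le, min_eq_left h.le,
      abs_of_neg (by linarith)]
    ring
  · subst h; simp
  · rw [Real.sign_of_pos (by linarith), max_eq_left h.le, min_eq_right h.le,
      abs_of_pos (by linarith)]
    ring

lemma EE_symm (g : ℝ → ℝ) (a b : ℝ) : EE g a b = EE g b a := by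
  unfold EE; rw [max_comm, min_comm]

lemma EE_abs {g : ℝ → ℝ} {L : NNReal} (hg : LipschitzWith L g) (a b : ℝ) :
    |EE g a b| ≤ L * |a - b| := by
  have := hg.dist_le_mul (max a b) (min a b)
  rw [Real.dist_eq, Real.dist_eq, max_sub_min_eq_abs', abs_abs] at this
  exact this

lemma EE_diff {g : ℝ → ℝ} {L : NNReal} (hg : LipschitzWith L g) (a b a' b' : ℝ) :
    |EE g a b - EE g a' b'| ≤ 2 * L * (|a - a'| + |b - b'|) := by
  have h1 := hg.dist_le_mul (max a b) (max a' b')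
  have h2 := hg.dist_le_mul (min a b) (min a' b')
  rw [Real.dist_eq, Real.dist_eq] at h1 h2
  have h3 : |max a b - max a' b'| ≤ |a - a'| + |b - b'| :=
    (abs_max_sub_max_le_max _ _ _ _).trans
      (max_le (le_add_of_nonneg_right (abs_nonneg _)) (le_add_of_nonneg_left (abs_nonneg _)))
  have h4 : |min a b - min a' b'| ≤ |a - a'| + |b - b'| :=
    (abs_min_sub_min_le_max _ _ _ _).trans
      (max_le (le_add_of_nonneg_right (abs_nonneg _)) (le_add_of_nonneg_left (abs_nonneg _)))
  have h5 : EE g a b - EE g a' b'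
      = (g (max a b) - g (max a' b')) - (g (min a b) - g (min a' b')) := by unfold EE; ring
  rw [h5]
  have hL : (0:ℝ) ≤ L := L.2
  calc _ ≤ |g (max a b) - g (max a' b')| + |g (min a b) - g (min a' b')| := abs_sub _ _
    _ ≤ L * (|a - a'| + |b - b'|) + L * (|a - a'| + |b - b'|) :=
        add_le_add (h1.trans (by gcongr)) (h2.trans (by gcongr))
    _ = _ := by ring

lemma EE_cont {g : ℝ → ℝ} {L : NNReal} (hg : LipschitzWith L g) :
    Continuous fun p : ℝ × ℝ => EE g p.1 p.2 := by
  unfold EE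
  have := hg.continuous
  fun_prop

lemma EE_meas {α : Type*} [MeasurableSpace α] {g : ℝ → ℝ} {L : NNReal} (hg : LipschitzWith L g)
    {u v : α → ℝ} (hu : Measurable u) (hv : Measurable v) :
    Measurable fun z => EE g (u z) (v z) :=
  (EE_cont hg).measurable.comp (hu.prodMk hv)

/-- A bounded measurable function vanishing off a set of finite measure is integrable. -/
lemma intg {α : Type*} [MeasurableSpace α] {μ : Measure α} {F : α → ℝ} (hm : Measurable F)
    (K : Set α) (hKm : MeasurableSet K) (hK : μ K < ⊤) (C : ℝ) (hb : ∀ x ∈ K, |F x| ≤ C)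
    (h0 : ∀ x, x ∉ K → F x = 0) : Integrable F μ := by
  have h1 : IntegrableOn F K μ := by
    refine Measure.integrableOn_of_bounded (M := C) hK.ne hm.aestronglyMeasurable ?_
    filter_upwards [ae_restrict_mem hKm] with x hx using hb x hx
  exact (integrableOn_iff_integrable_of_support_subset (fun x hx => by
    by_contra h; exact hx (h0 x h))).1 h1

/-- Being `C²` on the compact interval `[0,1]`, the flux is Lipschitz there; extending it to a
Lipschitz function on the line removes the domain restriction from all later estimates. -/
lemma BellShaped.exists_ext {f : ℝ → ℝ} {ρb : ℝ} (hf : BellShaped f ρb) :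
    ∃ (L : NNReal) (g : ℝ → ℝ), LipschitzWith L g ∧ EqOn f g (Icc 0 1) := by
  have h1 : ContDiffOn ℝ 1 f (Icc 0 1) := hf.smooth.of_le (by norm_num)
  have h2 : LocallyLipschitzOn (Icc 0 1) f := by
    intro x hx
    obtain ⟨K, t, ht, h⟩ := (h1 x hx).exists_lipschitzOnWith (convex_Icc 0 1)
    exact ⟨K, t, ht, h⟩
  obtain ⟨L, hL⟩ := h2.exists_lipschitzOnWith_of_compact isCompact_Icc
  obtain ⟨g, hg, hfg⟩ := hL.extend_real
  exact ⟨L, g, hg, hfg⟩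

/-- One half of the dissipation estimate across the interface; the other half exchanges the two
pairs. -/
lemma germ_aux {F : ℝ → ℝ} (hF : ConcaveOn ℝ (Icc 0 1) F) {a b c d q r : ℝ}
    (ha : a ∈ Icc (0:ℝ) 1) (hb : b ∈ Icc (0:ℝ) 1)
    (hab : F a = F b) (hq : F a ≤ q)
    (hc : d < c ∧ F c = r ∨ c ≤ d) (h : F c < F a) (h1 : a < c) (h2 : d < b) :
    F a - F c ≤ |q - r| := by
  rcases hc with hc | hc
  · have := le_abs_self (q - r)
    linarith [hc.2]
  · have := hF.min_le_of_mem_Icc ha hb ⟨h1.le, hc.trans h2.le⟩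
    rw [hab, min_self] at this
    linarith

/-- All that the dissipation estimate uses of a germ: both traces carry the same flux, at most `q`,
and the trace may decrease across the interface only if the constraint is saturated. -/
lemma germ_facts {f : ℝ → ℝ} {s q : ℝ} {p : ℝ × ℝ} (h : p ∈ Germ f s q) :
    Flx f s p.1 = Flx f s p.2 ∧ Flx f s p.1 ≤ q ∧
      (p.2 < p.1 ∧ Flx f s p.1 = q ∨ p.1 ≤ p.2) := by
  obtain ⟨-, -, h | h | h⟩ := h
  · exact ⟨h.2.1.trans h.2.2.symm, h.2.1.le, Or.inl ⟨h.1, h.2.1⟩⟩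
  · exact ⟨by rw [h.1], h.2, Or.inr h.1.le⟩
  · exact ⟨h.2.1, h.2.2, Or.inr h.1.le⟩

lemma Flx_concave {f : ℝ → ℝ} (hf : ConcaveOn ℝ (Icc 0 1) f) (s : ℝ) :
    ConcaveOn ℝ (Icc 0 1) (Flx f s) := by
  refine ⟨hf.1, fun x hx y hy a b ha hb hab => ?_⟩
  have := hf.2 hx hy ha hb hab
  simp only [Flx, smul_eq_mul] at *
  nlinarith

/-- Dissipation across the interface: traces in the germs of levels `q` and `r` produce at most
`2|q - r|`. -/
lemma germ_ineq {f : ℝ → ℝ} (hf : ConcaveOn ℝ (Icc 0 1) f) {s q r : ℝ} {p p' : ℝ × ℝ}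
    (h : p ∈ Germ f s q) (h' : p' ∈ Germ f s r) :
    EFlx f s p.2 p'.2 - EFlx f s p.1 p'.1 ≤ 2 * |q - r| := by
  have hF := Flx_concave hf s
  obtain ⟨e1, e2, e3⟩ := germ_facts h
  obtain ⟨k1, k2, k3⟩ := germ_facts h'
  obtain ⟨a, b⟩ := p
  obtain ⟨c, d⟩ := p'
  have ha := h.1
  have hb := h.2.1
  have hc := h'.1
  have hd := h'.2.1
  simp only at *
  unfold EFlx
  have h0 : 0 ≤ |q - r| := abs_nonneg _
  rw [← e1, ← k1]
  rcases lt_trichotomy a c with hac | rfl | hac <;> rcases lt_trichotomy b d with hbd | rfl | hbd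
  · rw [Real.sign_of_neg (sub_neg.2 hac), Real.sign_of_neg (sub_neg.2 hbd)]; linarith
  · have : Flx f s a = Flx f s c := by linarith
    simp [this]
  · rw [Real.sign_of_neg (sub_neg.2 hac), Real.sign_of_pos (sub_pos.2 hbd)]
    rcases le_or_gt (Flx f s a) (Flx f s c) with hle | hlt
    · linarith
    · have := germ_aux hF ha hb e1 e2 k3 hlt hac hbd
      linarith
  · simp
  · simp
  · simp
  · rw [Real.sign_of_pos (sub_pos.2 hac), Real.sign_of_neg (sub_neg.2 hbd)]
    rcases le_or_gt (Flx f s c) (Flx f s a) with hle | hlt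
    · linarith
    · have := germ_aux hF hc hd k1 k2 e3 hlt hac hbd
      rw [abs_sub_comm] at this
      linarith
  · have : Flx f s a = Flx f s c := by linarith
    simp [this]
  · rw [Real.sign_of_pos (sub_pos.2 hac), Real.sign_of_pos (sub_pos.2 hbd)]; linarith

/-- Admissibility forces the interface to be no faster than the characteristic speeds, and bounds
the constraint level. -/
lemma adm_bound {f g : ℝ → ℝ} {L : NNReal} (hg : LipschitzWith L g) (hfg : EqOn f g (Icc 0 1))
    (f0 : f 0 = 0) (f1 : f 1 = 0) {s q : ℝ} (h : AdmissiblePair f s q) :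
    |s| ≤ L ∧ 0 ≤ q ∧ q ≤ 2 * L := by
  have key : q < maxFlx f s → ∃ x ∈ Icc (0:ℝ) 1, q < f x - s * x := by
    intro hq
    obtain ⟨_, ⟨x, hx, rfl⟩, h⟩ := exists_lt_of_lt_csSup (by simp) hq
    exact ⟨x, hx, h⟩
  have l0 : ∀ x ∈ Icc (0:ℝ) 1, f x ≤ L * x := by
    intro x hx
    have := hg.dist_le_mul x 0
    rw [Real.dist_eq, Real.dist_eq, ← hfg hx, ← hfg (by simp), f0, sub_zero, sub_zero,
      abs_of_nonneg hx.1] at this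
    exact (le_abs_self _).trans this
  have l1 : ∀ x ∈ Icc (0:ℝ) 1, f x ≤ L * (1 - x) := by
    intro x hx
    have := hg.dist_le_mul x 1
    rw [Real.dist_eq, Real.dist_eq, ← hfg hx, ← hfg (by simp), f1, sub_zero, abs_sub_comm,
      abs_of_nonneg (sub_nonneg.2 hx.2)] at this
    exact (le_abs_self _).trans this
  have hL : (0:ℝ) ≤ L := L.2
  rcases h with ⟨hs, hq0, hq⟩ | ⟨hs, hq0, hq⟩
  · obtain ⟨x, hx, h⟩ := key hq
    have h2 := l0 x hx
    have hsL : s ≤ L := by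
      by_contra hc
      push Not at hc
      nlinarith [hx.1]
    refine ⟨by rwa [abs_of_nonneg hs], hq0, ?_⟩
    nlinarith [hx.1, hx.2, mul_nonneg hs hx.1]
  · obtain ⟨x, hx, h⟩ := key hq
    have h2 := l1 x hx
    have hsL : -s ≤ L := by
      by_contra hc
      push Not at hc
      nlinarith [hx.2]
    refine ⟨by rwa [abs_of_neg hs], by linarith, ?_⟩
    nlinarith [hx.1, hx.2, l0 x hx]

/-- A locally Lipschitz curve on `(0,∞)` whose slope is a.e. bounded by `L` is the restriction of
a globally `L`-Lipschitz one. -/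
lemma exists_lip_curve {y : ℝ → ℝ} (hy : LocLip y) {L : NNReal}
    (hd : ∀ᵐ t ∂(volume.restrict (Ioi (0:ℝ))), |deriv y t| ≤ L) :
    ∃ Y : ℝ → ℝ, LipschitzWith L Y ∧ EqOn y Y (Ioi 0) := by
  have h : LipschitzOnWith L y (Ioi 0) := by
    refine LipschitzOnWith.of_dist_le_mul fun a ha b hb => ?_
    have hsub : uIcc b a ⊆ Ioi 0 := fun t ht => lt_of_lt_of_le (lt_min hb ha) ht.1
    obtain ⟨C, hC⟩ := hy (uIcc b a) isCompact_uIcc hsub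
    rw [Real.dist_eq, ← hC.absolutelyContinuousOnInterval.integral_deriv_eq_sub, Real.dist_eq,
      ← Real.norm_eq_abs]
    refine intervalIntegral.norm_integral_le_of_norm_le_const_ae ?_
    have := (ae_restrict_iff' measurableSet_Ioi).1 hd
    filter_upwards [this] with t ht htm
    exact ht (hsub (uIoc_subset_uIcc htm))
  exact h.extend_real

/-- Continuity of translations in `L¹`, localised to a compact set. -/
lemma translate_cont {v : ℝ × ℝ → ℝ} (hv : Measurable v) (hb : ∀ z, |v z| ≤ 1)
    {K : Set (ℝ × ℝ)} (hK : IsCompact K) {ε : ℝ} (hε : 0 < ε) :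
    ∃ δ > 0, ∀ w : ℝ × ℝ, ‖w‖ < δ → ∫ z in K, |v (z + w) - v z| ≤ ε := by
  set K' := Metric.cthickening 1 K with hK'
  have hK'c : IsCompact K' := hK.cthickening
  set V : ℝ × ℝ → ℝ := K'.indicator v with hV
  have hVm : Measurable V := hv.indicator hK'c.isClosed.measurableSet
  have hVi : Integrable V := intg hVm K' hK'c.isClosed.measurableSet hK'c.measure_lt_top 1
    (fun x hx => by simp [hV, hx, hb]) (fun x hx => by simp [hV, hx])
  let G : ℝ × ℝ → C(ℝ × ℝ, ℝ × ℝ) := fun w => ⟨fun z => z + w, by fun_prop⟩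
  have hG : Continuous G :=
    ContinuousMap.continuous_of_continuous_uncurry _ (by
      show Continuous fun p : (ℝ × ℝ) × (ℝ × ℝ) => p.2 + p.1
      fun_prop)
  have hGm : ∀ w, MeasurePreserving (G w) (volume : Measure (ℝ × ℝ)) volume :=
    fun w => measurePreserving_add_right volume w
  have hVL : MemLp V 1 volume := memLp_one_iff_integrable.2 hVi
  have hcont : Continuous fun w => Lp.compMeasurePreserving (G w) (hGm w) (hVL.toLp V) :=
    continuous_const.compMeasurePreservingLp hG hGm (by simp)
  have h0 := Metric.continuous_iff.1 hcont 0 ε hε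
  obtain ⟨δ, hδ, h⟩ := h0
  refine ⟨min δ 1, lt_min hδ one_pos, fun w hw => ?_⟩
  have hw1 := h w (by simpa using hw.trans_le (min_le_left _ _))
  rw [Lp.toLp_compMeasurePreserving, Lp.toLp_compMeasurePreserving, Lp.dist_def] at hw1
  have e1 : eLpNorm (⇑(MemLp.toLp (V ∘ G w) (hVL.comp_measurePreserving (hGm w)))
      - ⇑(MemLp.toLp (V ∘ G 0) (hVL.comp_measurePreserving (hGm 0)))) 1 volume
      = eLpNorm (fun z => V (z + w) - V z) 1 volume := by
    refine eLpNorm_congr_ae ?_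
    filter_upwards [MemLp.coeFn_toLp (hVL.comp_measurePreserving (hGm w)),
      MemLp.coeFn_toLp (hVL.comp_measurePreserving (hGm 0))] with z h1 h2
    rw [Pi.sub_apply, h1, h2]
    simp [G]
  rw [e1] at hw1
  have hwi : Integrable (fun z => V (z + w) - V z) := (hVi.comp_add_right w).sub hVi
  rw [eLpNorm_one_eq_lintegral_enorm, ← integral_norm_eq_lintegral_enorm hwi.1] at hw1
  have : ∫ z in K, |v (z + w) - v z| = ∫ z in K, ‖V (z + w) - V z‖ := by
    refine setIntegral_congr_fun hK.isClosed.measurableSet fun z hz => ?_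
    have h1 : z ∈ K' := Metric.self_subset_cthickening K hz
    have h2 : z + w ∈ K' := by
      refine Metric.mem_cthickening_of_dist_le _ z _ _ hz ?_
      simpa [dist_eq_norm] using (hw.trans_le (min_le_right _ _)).le
    simp [hV, h1, h2]
  rw [this]
  exact (setIntegral_le_integral hwi.norm (Eventually.of_forall fun z => norm_nonneg _)).trans
    hw1.le

/-! ### Calculus of test functions -/

lemma pT_eq {φ : ℝ × ℝ → ℝ} {x t d : ℝ} (hφ : DifferentiableAt ℝ φ (x, t))
    (h : HasDerivAt (fun s => φ (x, s)) d t) : pT φ (x, t) = d := by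
  have h1 : HasDerivAt (fun s : ℝ => (x, s)) ((0:ℝ), (1:ℝ)) t :=
    (hasDerivAt_const t x).prodMk (hasDerivAt_id t)
  exact (hφ.hasFDerivAt.comp_hasDerivAt t h1).unique h

lemma pX_eq {φ : ℝ × ℝ → ℝ} {x t d : ℝ} (hφ : DifferentiableAt ℝ φ (x, t))
    (h : HasDerivAt (fun s => φ (s, t)) d x) : pX φ (x, t) = d := by
  have h1 : HasDerivAt (fun s : ℝ => (s, t)) ((1:ℝ), (0:ℝ)) x :=
    (hasDerivAt_id x).prodMk (hasDerivAt_const x t)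
  exact (hφ.hasFDerivAt.comp_hasDerivAt x h1).unique h

lemma pT_hasDerivAt {φ : ℝ × ℝ → ℝ} {x t : ℝ} (hφ : DifferentiableAt ℝ φ (x, t)) :
    HasDerivAt (fun s => φ (x, s)) (pT φ (x, t)) t := by
  have h1 : HasDerivAt (fun s : ℝ => (x, s)) ((0:ℝ), (1:ℝ)) t :=
    (hasDerivAt_const t x).prodMk (hasDerivAt_id t)
  exact hφ.hasFDerivAt.comp_hasDerivAt t h1

lemma pX_hasDerivAt {φ : ℝ × ℝ → ℝ} {x t : ℝ} (hφ : DifferentiableAt ℝ φ (x, t)) :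
    HasDerivAt (fun s => φ (s, t)) (pX φ (x, t)) x := by
  have h1 : HasDerivAt (fun s : ℝ => (s, t)) ((1:ℝ), (0:ℝ)) x :=
    (hasDerivAt_id x).prodMk (hasDerivAt_const x t)
  exact hφ.hasFDerivAt.comp_hasDerivAt x h1

section TestFun
variable {φ : ℝ × ℝ → ℝ}

lemma TestFun.diff (h : TestFun φ) : Differentiable ℝ φ := h.1.differentiable (by simp)

lemma TestFun.cont (h : TestFun φ) : Continuous φ := h.1.continuous

lemma TestFun.cont_pT (h : TestFun φ) : Continuous (pT φ) :=
  (h.1.continuous_fderiv (by simp)).clm_apply continuous_const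

lemma TestFun.cont_pX (h : TestFun φ) : Continuous (pX φ) :=
  (h.1.continuous_fderiv (by simp)).clm_apply continuous_const

lemma TestFun.zero (_h : TestFun φ) {z : ℝ × ℝ} (hz : z ∉ tsupport φ) : φ z = 0 :=
  image_eq_zero_of_notMem_tsupport hz

lemma TestFun.pT_zero (_h : TestFun φ) {z : ℝ × ℝ} (hz : z ∉ tsupport φ) : pT φ z = 0 := by
  have : fderiv ℝ φ z = 0 := by
    by_contra hc
    exact hz (support_fderiv_subset ℝ hc)
  simp [pT, this]

lemma TestFun.pX_zero (_h : TestFun φ) {z : ℝ × ℝ} (hz : z ∉ tsupport φ) : pX φ z = 0 := by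
  have : fderiv ℝ φ z = 0 := by
    by_contra hc
    exact hz (support_fderiv_subset ℝ hc)
  simp [pX, this]

lemma bdd_of_cont {F : ℝ × ℝ → ℝ} {K : Set (ℝ × ℝ)} (hF : Continuous F) (hK : IsCompact K)
    (h0 : ∀ z ∉ K, F z = 0) : ∃ M, 0 ≤ M ∧ ∀ z, |F z| ≤ M := by
  obtain ⟨M, hM⟩ := hK.exists_bound_of_continuousOn hF.continuousOn
  refine ⟨max M 0, le_max_right _ _, fun z => ?_⟩
  by_cases hz : z ∈ K
  · exact (hM z hz).trans (le_max_left _ _)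
  · simp [h0 z hz]

lemma TestFun.bound (h : TestFun φ) :
    ∃ M, 0 ≤ M ∧ ∀ z, |φ z| ≤ M ∧ |pT φ z| ≤ M ∧ |pX φ z| ≤ M := by
  obtain ⟨a, ha, ha'⟩ := bdd_of_cont h.cont h.2.1 (fun z hz => h.zero hz)
  obtain ⟨b, hb, hb'⟩ := bdd_of_cont h.cont_pT h.2.1 (fun z hz => h.pT_zero hz)
  obtain ⟨c, hc, hc'⟩ := bdd_of_cont h.cont_pX h.2.1 (fun z hz => h.pX_zero hz)
  exact ⟨a + b + c, by positivity, fun z => ⟨(ha' z).trans (by linarith),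
    (hb' z).trans (by linarith), (hc' z).trans (by linarith)⟩⟩

/-- Integrability of a pairing of bounded coefficients with the derivatives of a test function. -/
lemma TestFun.integrable_pair (h : TestFun φ) {P Q : ℝ × ℝ → ℝ} (hP : Measurable P)
    (hQ : Measurable Q) {C D : ℝ} (hPb : ∀ z, |P z| ≤ C) (hQb : ∀ z, |Q z| ≤ D) :
    Integrable fun z => P z * pT φ z + Q z * pX φ z := by
  obtain ⟨M, hM, hb⟩ := h.bound
  refine intg ((hP.mul h.cont_pT.measurable).add (hQ.mul h.cont_pX.measurable)) (tsupport φ)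
    (isClosed_tsupport φ).measurableSet h.2.1.measure_lt_top (C * M + D * M) (fun z _ => ?_)
    (fun z hz => by simp [h.pT_zero hz, h.pX_zero hz])
  calc _ ≤ |P z * pT φ z| + |Q z * pX φ z| := abs_add_le _ _
    _ = |P z| * |pT φ z| + |Q z| * |pX φ z| := by rw [abs_mul, abs_mul]
    _ ≤ _ := by
      have hC := (abs_nonneg _).trans (hPb z)
      have hD := (abs_nonneg _).trans (hQb z)
      gcongr
      exacts [hPb z, (hb z).2.1, hQb z, (hb z).2.2]

end TestFun

/-! ### The Cauchy problem as an entropy inequality on the whole plane -/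

/-- The Heaviside function switching the flux on at `t = 0`. -/
def Th (t : ℝ) : ℝ := (Ioi (0:ℝ)).indicator 1 t

lemma Th_meas : Measurable Th := measurable_one.indicator measurableSet_Ioi

lemma Th_abs (t : ℝ) : |Th t| ≤ 1 := by
  unfold Th indicator; split_ifs <;> simp

/-- `u` is a Kruzhkov entropy solution on `ℝ²`, off the set `S`, of
`∂ₜu + ∂ₓ(1_{t > 0} g(u)) = 0`. Prolonging a solution of the Cauchy problem to `t ≤ 0` by its
initial datum gives such a `u`, so that the datum needs no separate treatment when variables are
doubled. -/
def KE (g : ℝ → ℝ) (u : ℝ × ℝ → ℝ) (S : Set (ℝ × ℝ)) : Prop :=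
  ∀ κ ∈ Icc (0:ℝ) 1, ∀ φ : ℝ × ℝ → ℝ, TestFun φ → Disjoint (tsupport φ) S →
    0 ≤ ∫ z, (|u z - κ| * pT φ z + Th z.2 * EE g (u z) κ * pX φ z)

/-- The open upper half plane `{t > 0}`. -/
def HP : Set (ℝ × ℝ) := univ ×ˢ Ioi (0:ℝ)

lemma HP_meas : MeasurableSet HP := MeasurableSet.univ.prod measurableSet_Ioi

lemma mem_HP {z : ℝ × ℝ} : z ∈ HP ↔ 0 < z.2 := by simp [HP]

lemma volume_HP : (volume : Measure (ℝ × ℝ)).restrict HP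
    = (volume : Measure ℝ).prod (volume.restrict (Ioi 0)) := by
  rw [HP, Measure.volume_eq_prod, ← Measure.prod_restrict, Measure.restrict_univ]

lemma integral_HP {F : ℝ × ℝ → ℝ} (hF : IntegrableOn F HP) :
    ∫ z in HP, F z = ∫ t in Ioi (0:ℝ), ∫ x, F (x, t) := by
  rw [IntegrableOn, volume_HP] at hF
  rw [volume_HP, integral_prod_symm _ hF]

/-- Integrating out the region `t ≤ 0`, where the solution is frozen, produces the initial-datum
term. -/
lemma split_initial {w : ℝ → ℝ} (hw : Measurable w) {P Q : ℝ × ℝ → ℝ} (hP : Measurable P)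
    (hQ : Measurable Q) {C D : ℝ} (hwb : ∀ x, |w x| ≤ C) (hPb : ∀ z, |P z| ≤ C)
    (hQb : ∀ z, |Q z| ≤ D) {φ : ℝ × ℝ → ℝ} (h : TestFun φ) {U : ℝ × ℝ → ℝ}
    (hU : ∀ z, U z = if 0 < z.2 then P z else w z.1) :
    ∫ z, (U z * pT φ z + Th z.2 * Q z * pX φ z)
      = (∫ z in HP, (P z * pT φ z + Q z * pX φ z)) + ∫ x, w x * φ (x, 0) := by
  have hUm : Measurable U := by
    rw [funext hU]
    exact Measurable.ite (measurable_snd measurableSet_Ioi) hP (hw.comp measurable_fst)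
  have hUb : ∀ z, |U z| ≤ C := by
    intro z; rw [hU z]; split_ifs
    exacts [hPb z, hwb z.1]
  have hint : Integrable fun z => U z * pT φ z + Th z.2 * Q z * pX φ z := by
    refine h.integrable_pair (P := U) (Q := fun z => Th z.2 * Q z) hUm
      ((Th_meas.comp measurable_snd).mul hQ) (D := D) hUb (fun z => ?_)
    rw [abs_mul]
    calc _ ≤ 1 * |Q z| := by gcongr; exact Th_abs _
      _ ≤ D := by rw [one_mul]; exact hQb z
  rw [← integral_add_compl HP_meas hint]
  congr 1
  · refine setIntegral_congr_fun HP_meas fun z hz => ?_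
    have hz' : 0 < z.2 := mem_HP.1 hz
    simp [hU z, hz', Th]
  · have e1 : ∫ z in HPᶜ, (U z * pT φ z + Th z.2 * Q z * pX φ z)
        = ∫ z in (univ : Set ℝ) ×ˢ Iic (0:ℝ), w z.1 * pT φ z := by
      have : HPᶜ = (univ : Set ℝ) ×ˢ Iic (0:ℝ) := by ext z; simp [HP]
      rw [this]
      refine setIntegral_congr_fun (MeasurableSet.univ.prod measurableSet_Iic) fun z hz => ?_
      have hz' : ¬ 0 < z.2 := not_lt.2 hz.2
      simp [hU z, hz', Th]
    have hi : Integrable fun z : ℝ × ℝ => w z.1 * pT φ z := by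
      have := h.integrable_pair (P := fun z => w z.1) (Q := fun _ => 0)
        (hw.comp measurable_fst) measurable_const (C := C) (D := 0) (fun z => hwb _) (by simp)
      simpa using this
    rw [e1, Measure.volume_eq_prod, setIntegral_prod _ hi.integrableOn, Measure.restrict_univ]
    refine integral_congr_ae (Eventually.of_forall fun x => ?_)
    simp only
    rw [integral_const_mul]
    congr 1
    have hd : ∀ t, HasDerivAt (fun s => φ (x, s)) (pT φ (x, t)) t :=
      fun t => pT_hasDerivAt (h.diff _)
    have hcd : ContDiff ℝ 1 fun s => φ (x, s) :=
      (h.1.of_le (by simp)).comp (contDiff_const.prodMk contDiff_id)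
    have hcs : HasCompactSupport fun s => φ (x, s) := by
      refine HasCompactSupport.intro (h.2.1.image continuous_snd) fun s hs => ?_
      exact h.zero fun hc => hs ⟨_, hc, rfl⟩
    rw [← HasCompactSupport.integral_Iic_deriv_eq hcd hcs 0]
    exact integral_congr_ae (Eventually.of_forall fun t => (hd t).deriv.symm)

/-- A solution of the Cauchy problem, prolonged by its datum to `t ≤ 0`, satisfies `KE`: integrating
out `t ≤ 0` turns the whole-plane inequality into the one with the initial-datum term. -/
lemma KE_of_sol {f g : ℝ → ℝ} {L : NNReal} (hg : LipschitzWith L g) (hfg : EqOn f g (Icc 0 1))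
    {ρo : ℝ → ℝ} (hρo : Measurable ρo) (hρo01 : ∀ x, ρo x ∈ Icc (0:ℝ) 1)
    {ρ : ℝ → ℝ → ℝ} (hρ : Measurable fun p : ℝ × ℝ => ρ p.1 p.2)
    (hρ01 : ∀ x t, ρ x t ∈ Icc (0:ℝ) 1) {S : Set (ℝ × ℝ)}
    (h : ∀ κ ∈ Icc (0:ℝ) 1, ∀ φ : ℝ × ℝ → ℝ, TestFun φ → Disjoint (tsupport φ) S →
      0 ≤ interiorTerm f ρ κ φ + initTerm ρo κ φ) :
    KE g (fun z => if 0 < z.2 then ρ z.1 z.2 else ρo z.1) S := by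
  intro κ hκ φ hφ hS
  have hL : (0:ℝ) ≤ L := L.2
  have ab : ∀ {a b : ℝ}, a ∈ Icc (0:ℝ) 1 → b ∈ Icc (0:ℝ) 1 → |a - b| ≤ 1 := by
    intro a b ha hb
    rw [abs_le]; constructor <;> linarith [ha.1, ha.2, hb.1, hb.2]
  have hP : Measurable fun z : ℝ × ℝ => |ρ z.1 z.2 - κ| := (hρ.sub_const κ).abs
  have hQ : Measurable fun z : ℝ × ℝ => EE g (ρ z.1 z.2) κ := EE_meas hg hρ measurable_const
  have hPb : ∀ z : ℝ × ℝ, |(|ρ z.1 z.2 - κ|)| ≤ 1 := fun z => by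
    rw [abs_abs]; exact ab (hρ01 _ _) hκ
  have hQb : ∀ z : ℝ × ℝ, |EE g (ρ z.1 z.2) κ| ≤ L := fun z =>
    (EE_abs hg _ _).trans (mul_le_of_le_one_right hL (ab (hρ01 _ _) hκ))
  have key := split_initial (w := fun x => |ρo x - κ|) (hρo.sub_const κ).abs hP hQ (C := 1)
    (fun x => by rw [abs_abs]; exact ab (hρo01 _) hκ) hPb hQb hφ
    (U := fun z => |(if 0 < z.2 then ρ z.1 z.2 else ρo z.1) - κ|)
    (fun z => by split_ifs <;> rfl)
  have e : ∫ z : ℝ × ℝ, (|(if 0 < z.2 then ρ z.1 z.2 else ρo z.1) - κ| * pT φ z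
        + Th z.2 * EE g (if 0 < z.2 then ρ z.1 z.2 else ρo z.1) κ * pX φ z)
      = ∫ z : ℝ × ℝ, (|(if 0 < z.2 then ρ z.1 z.2 else ρo z.1) - κ| * pT φ z
        + Th z.2 * EE g (ρ z.1 z.2) κ * pX φ z) := by
    refine integral_congr_ae (Eventually.of_forall fun z => ?_)
    by_cases hz : 0 < z.2 <;> simp [hz, Th]
  rw [e, key, integral_HP (hφ.integrable_pair hP hQ hPb hQb).integrableOn]
  have := h κ hκ φ hφ hS
  unfold interiorTerm initTerm at this
  have e2 : ∀ x t, EFlx f 0 (ρ x t) κ = EE g (ρ x t) κ := fun x t => by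
    rw [EFlx_eq hfg 0 (hρ01 x t) hκ]; ring
  simpa only [e2] using this

/-! ### Doubling of variables -/

lemma exists_bump (δ : ℝ) (hδ : 0 < δ) : ∃ b : ℝ → ℝ, ContDiff ℝ (⊤ : ℕ∞) b ∧
    HasCompactSupport b ∧ (∀ x, 0 ≤ b x) ∧ ∫ x, b x = 1 ∧ ∀ x, δ ≤ |x| → b x = 0 := by
  let β : ContDiffBump (0:ℝ) := ⟨δ / 2, δ, by positivity, by linarith⟩
  refine ⟨β.normed volume, β.contDiff_normed, β.hasCompactSupport_normed,
    fun x => β.nonneg_normed x, β.integral_normed, fun x hx => ?_⟩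
  have : x ∉ Function.support (β.normed volume) := by
    rw [β.support_normed_eq]
    simpa [β] using hx
  simpa using this

/-- Anisotropic mollifier: the time scale is so much finer than the space scale that
`∫ |∂ₓω| |t|` is small, which controls the jump of the flux at `t = 0`. -/
lemma exists_kernel (δ : ℝ) (hδ : 0 < δ) : ∃ ω : ℝ × ℝ → ℝ, TestFun ω ∧ ∫ w, ω w = 1 ∧
    (∀ w, δ ≤ ‖w‖ → ω w = 0) ∧ ∫ w, |w.2| * |pX ω w| ≤ δ := by
  obtain ⟨b, hb, hbc, hb0, hb1, hbs⟩ := exists_bump δ hδ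
  set N := ∫ x, |deriv b x| with hN
  have hN0 : 0 ≤ N := integral_nonneg fun x => abs_nonneg _
  set η := min δ (δ / (1 + N)) with hη
  have hη0 : 0 < η := lt_min hδ (by positivity)
  obtain ⟨c, hc, hcc, hc0, hc1, hcs⟩ := exists_bump η hη0
  have hcd : ContDiff ℝ (⊤ : ℕ∞) fun w : ℝ × ℝ => b w.1 * c w.2 :=
    (hb.comp contDiff_fst).mul (hc.comp contDiff_snd)
  have hpX : ∀ w : ℝ × ℝ, pX (fun w : ℝ × ℝ => b w.1 * c w.2) w = deriv b w.1 * c w.2 := by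
    rintro ⟨x, t⟩
    refine pX_eq (hcd.differentiable (by simp) _) ?_
    exact ((hb.differentiable (by simp) x).hasDerivAt).mul_const (c t)
  refine ⟨fun w => b w.1 * c w.2, ⟨hcd, ?_, fun w => mul_nonneg (hb0 _) (hc0 _)⟩, ?_, ?_, ?_⟩
  · refine HasCompactSupport.intro (hbc.prod hcc) fun w hw => ?_
    by_contra h
    exact hw ⟨subset_tsupport _ (left_ne_zero_of_mul h), subset_tsupport _ (right_ne_zero_of_mul h)⟩
  · rw [Measure.volume_eq_prod, integral_prod_mul, hb1, hc1, one_mul]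
  · intro w hw
    rw [Prod.norm_def, le_max_iff] at hw
    rcases hw with hw | hw
    · simp [hbs _ hw]
    · simp [hcs _ ((min_le_left _ _).trans hw)]
  · have e : ∀ w : ℝ × ℝ, |w.2| * |pX (fun w : ℝ × ℝ => b w.1 * c w.2) w|
        = |deriv b w.1| * (|w.2| * c w.2) := by
      intro w; rw [hpX, abs_mul, abs_of_nonneg (hc0 w.2)]; ring
    simp_rw [e]
    rw [Measure.volume_eq_prod, integral_prod_mul (fun x => |deriv b x|) (fun t => |t| * c t), ← hN]
    have hci : Integrable c := hc.continuous.integrable_of_hasCompactSupport hcc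
    have h1 : ∫ t, |t| * c t ≤ ∫ t, η * c t := by
      refine integral_mono_of_nonneg (Eventually.of_forall fun t =>
        mul_nonneg (abs_nonneg _) (hc0 _)) (hci.const_mul η) (Eventually.of_forall fun t => ?_)
      rcases le_or_gt η |t| with h | h
      · simp [hcs t h]
      · exact mul_le_mul_of_nonneg_right h.le (hc0 t)
    rw [integral_const_mul, hc1, mul_one] at h1
    calc _ ≤ N * η := by gcongr
      _ ≤ N * (δ / (1 + N)) := by gcongr; exact min_le_right _ _
      _ ≤ δ := by
        rw [mul_div_assoc', div_le_iff₀ (by positivity)]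
        nlinarith

/-- The `L¹` modulus of continuity of the switch on a compact set is linear. -/
lemma Th_shift {K : Set (ℝ × ℝ)} (hK : IsCompact K) :
    ∃ C, 0 ≤ C ∧ ∀ τ, ∫ z in K, |Th (z.2 + τ) - Th z.2| ≤ C * |τ| := by
  obtain ⟨M, hM⟩ := (hK.image continuous_fst).isBounded.exists_norm_le
  have hM' : ∀ z ∈ K, |z.1| ≤ |M| := fun z hz =>
    (hM z.1 ⟨z, hz, rfl⟩).trans (le_abs_self _)
  refine ⟨2 * |M|, by positivity, fun τ => ?_⟩
  set A : Set (ℝ × ℝ) := Icc (-|M|) |M| ×ˢ uIcc 0 (-τ) with hA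
  have hAc : IsCompact A := isCompact_Icc.prod isCompact_uIcc
  have hpt : ∀ z ∈ K, |Th (z.2 + τ) - Th z.2| ≤ A.indicator 1 z := by
    intro z hz
    by_cases hzA : z ∈ A
    · rw [indicator_of_mem hzA]
      unfold Th indicator
      split_ifs <;> simp
    · rw [indicator_of_notMem hzA]
      have h2 : z.2 ∉ uIcc 0 (-τ) := fun h => hzA ⟨abs_le.1 (hM' z hz), h⟩
      rw [mem_uIcc] at h2
      push Not at h2
      unfold Th indicator
      simp only [mem_Ioi, Pi.one_apply]
      split_ifs with h3 h4 h4
      · simp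
      · have := h2.2 (by linarith); linarith
      · have := h2.1 h4.le; linarith
      · simp
  have hAi : Integrable (A.indicator (1 : ℝ × ℝ → ℝ)) :=
    (integrable_indicator_iff hAc.isClosed.measurableSet).2
      (integrableOn_const hAc.measure_lt_top.ne)
  calc _ ≤ ∫ z in K, A.indicator (1 : ℝ × ℝ → ℝ) z := by
        refine integral_mono_of_nonneg (Eventually.of_forall fun z => abs_nonneg _)
          hAi.integrableOn ?_
        filter_upwards [ae_restrict_mem hK.isClosed.measurableSet] with z hz using hpt z hz
    _ ≤ ∫ z, A.indicator (1 : ℝ × ℝ → ℝ) z :=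
        setIntegral_le_integral hAi (Eventually.of_forall fun z =>
          indicator_nonneg (fun _ _ => zero_le_one) _)
    _ = 2 * |M| * |τ| := by
        rw [integral_indicator_one hAc.isClosed.measurableSet, Measure.real, hA,
          Measure.volume_eq_prod, Measure.prod_prod, ENNReal.toReal_mul, Real.volume_Icc,
          Real.volume_interval, ENNReal.toReal_ofReal (by linarith [abs_nonneg M]),
          ENNReal.toReal_ofReal (abs_nonneg _)]
        have e : |-τ - 0| = |τ| := by simp
        rw [e]
        ring

lemma sub_abs_le_one {a b : ℝ} (ha : a ∈ Icc (0:ℝ) 1) (hb : b ∈ Icc (0:ℝ) 1) : |a - b| ≤ 1 := by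
  rw [abs_le]; constructor <;> linarith [ha.1, ha.2, hb.1, hb.2]

section
variable {φ ω : ℝ × ℝ → ℝ}

lemma pT_mul_refl (hφ : TestFun φ) (hω : TestFun ω) (z z' : ℝ × ℝ) :
    pT (fun z => φ z * ω (z' - z)) z = pT φ z * ω (z' - z) - φ z * pT ω (z' - z) := by
  obtain ⟨x, t⟩ := z
  obtain ⟨x', t'⟩ := z'
  refine pT_eq ?_ ?_
  · exact (hφ.diff _).mul ((hω.diff _).comp _ ((differentiableAt_const _).sub differentiableAt_id))
  · have h1 := pT_hasDerivAt (hφ.diff (x, t))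
    have h2 : HasDerivAt (fun s => ω (x' - x, t' - s)) (pT ω (x' - x, t' - t) * (-1)) t := by
      have := (pT_hasDerivAt (hω.diff (x' - x, t' - t)))
      exact HasDerivAt.comp t this ((hasDerivAt_id t).const_sub t')
    have h3 := h1.mul h2
    exact HasDerivAt.congr_deriv h3 (by simp only [Prod.mk_sub_mk]; ring)

lemma pX_mul_refl (hφ : TestFun φ) (hω : TestFun ω) (z z' : ℝ × ℝ) :
    pX (fun z => φ z * ω (z' - z)) z = pX φ z * ω (z' - z) - φ z * pX ω (z' - z) := by
  obtain ⟨x, t⟩ := z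
  obtain ⟨x', t'⟩ := z'
  refine pX_eq ?_ ?_
  · exact (hφ.diff _).mul ((hω.diff _).comp _ ((differentiableAt_const _).sub differentiableAt_id))
  · have h1 := pX_hasDerivAt (hφ.diff (x, t))
    have h2 : HasDerivAt (fun s => ω (x' - s, t' - t)) (pX ω (x' - x, t' - t) * (-1)) x := by
      have := (pX_hasDerivAt (hω.diff (x' - x, t' - t)))
      exact HasDerivAt.comp x this ((hasDerivAt_id x).const_sub x')
    have h3 := h1.mul h2
    exact HasDerivAt.congr_deriv h3 (by simp only [Prod.mk_sub_mk]; ring)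

lemma pT_const_shift (hω : TestFun ω) (c : ℝ) (z z' : ℝ × ℝ) :
    pT (fun z' => c * ω (z' - z)) z' = c * pT ω (z' - z) := by
  obtain ⟨x, t⟩ := z
  obtain ⟨x', t'⟩ := z'
  refine pT_eq ?_ ?_
  · exact ((hω.diff _).comp _ (differentiableAt_id.sub (differentiableAt_const _))).const_mul c
  · have h2 : HasDerivAt (fun s => ω (x' - x, s - t)) (pT ω (x' - x, t' - t) * 1) t' := by
      have := (pT_hasDerivAt (hω.diff (x' - x, t' - t)))
      exact HasDerivAt.comp t' this ((hasDerivAt_id t').sub_const t)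
    have h3 := h2.const_mul c
    rw [mul_one] at h3
    exact h3

lemma pX_const_shift (hω : TestFun ω) (c : ℝ) (z z' : ℝ × ℝ) :
    pX (fun z' => c * ω (z' - z)) z' = c * pX ω (z' - z) := by
  obtain ⟨x, t⟩ := z
  obtain ⟨x', t'⟩ := z'
  refine pX_eq ?_ ?_
  · exact ((hω.diff _).comp _ (differentiableAt_id.sub (differentiableAt_const _))).const_mul c
  · have h2 : HasDerivAt (fun s => ω (s - x, t' - t)) (pX ω (x' - x, t' - t) * 1) x' := by
      have := (pX_hasDerivAt (hω.diff (x' - x, t' - t)))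
      exact HasDerivAt.comp x' this ((hasDerivAt_id x').sub_const x)
    have h3 := h2.const_mul c
    rw [mul_one] at h3
    exact h3

lemma testFun_mul_refl (hφ : TestFun φ) (hω : TestFun ω) (z' : ℝ × ℝ) :
    TestFun fun z => φ z * ω (z' - z) :=
  ⟨hφ.1.mul (hω.1.comp (contDiff_const.sub contDiff_id)), hφ.2.1.mul_right,
    fun z => mul_nonneg (hφ.2.2 z) (hω.2.2 _)⟩

lemma testFun_const_shift (hω : TestFun ω) {c : ℝ} (hc : 0 ≤ c) (z : ℝ × ℝ) :
    TestFun fun z' => c * ω (z' - z) := by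
  refine ⟨contDiff_const.mul (hω.1.comp (contDiff_id.sub contDiff_const)), ?_,
    fun z' => mul_nonneg hc (hω.2.2 _)⟩
  exact HasCompactSupport.mul_left
    (hω.2.1.comp_homeomorph (Homeomorph.subRight z))

end

/-- The integrand of the doubled inequality at the pair of points `z`, `z + w`, once the entropy
inequalities for `u` (frozen `κ = v (z + w)`) and for `v` (frozen `κ = u z`) have been added. The
derivatives of the mollifier `ω` cancel except where the switch `Th` differs. -/
def dblInt (g : ℝ → ℝ) (u v φ ω : ℝ × ℝ → ℝ) (z w : ℝ × ℝ) : ℝ :=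
  (|u z - v (z + w)| * pT φ z + Th z.2 * EE g (u z) (v (z + w)) * pX φ z) * ω w
    + (Th (z.2 + w.2) - Th z.2) * EE g (u z) (v (z + w)) * φ z * pX ω w

/-- The sum of the two entropy inequalities, integrated over both variables. -/
lemma dbl_nonneg {g : ℝ → ℝ} {L : NNReal} (hg : LipschitzWith L g) {u v : ℝ × ℝ → ℝ}
    (hu : Measurable u) (hv : Measurable v) (hu01 : ∀ z, u z ∈ Icc (0:ℝ) 1)
    (hv01 : ∀ z, v z ∈ Icc (0:ℝ) 1) {S : Set (ℝ × ℝ)} (huS : KE g u S) (hvS : KE g v S)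
    {φ ω : ℝ × ℝ → ℝ} (hφ : TestFun φ) (hω : TestFun ω) (hφS : Disjoint (tsupport φ) S)
    (hωS : ∀ z, Disjoint (tsupport fun z' => φ z * ω (z' - z)) S) :
    Integrable (fun p : (ℝ × ℝ) × (ℝ × ℝ) => dblInt g u v φ ω p.1 p.2) ∧
    0 ≤ ∫ p : (ℝ × ℝ) × (ℝ × ℝ), dblInt g u v φ ω p.1 p.2 := by
  have hL : (0:ℝ) ≤ L := L.2
  obtain ⟨M, hM, hMb⟩ := hφ.bound
  obtain ⟨N, hN, hNb⟩ := hω.bound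
  have mφ := hφ.cont.measurable
  have mφt := hφ.cont_pT.measurable
  have mφx := hφ.cont_pX.measurable
  have mω := hω.cont.measurable
  have mωt := hω.cont_pT.measurable
  have mωx := hω.cont_pX.measurable
  have mT := Th_meas
  let A : ℝ × ℝ → ℝ × ℝ → ℝ := fun z w =>
    |u z - v (z + w)| * (pT φ z * ω w - φ z * pT ω w)
      + Th z.2 * EE g (u z) (v (z + w)) * (pX φ z * ω w - φ z * pX ω w)
  let B : ℝ × ℝ → ℝ × ℝ → ℝ := fun z w =>
    |v (z + w) - u z| * (φ z * pT ω w)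
      + Th (z.2 + w.2) * EE g (v (z + w)) (u z) * (φ z * pX ω w)
  have hAB : ∀ z w, dblInt g u v φ ω z w = A z w + B z w := by
    intro z w
    simp only [dblInt, A, B]
    rw [abs_sub_comm (v (z + w)), EE_symm g (v (z + w))]
    ring
  have mE : Measurable fun p : (ℝ × ℝ) × (ℝ × ℝ) => EE g (u p.1) (v (p.1 + p.2)) :=
    EE_meas hg (by fun_prop) (by fun_prop)
  have mE' : Measurable fun p : (ℝ × ℝ) × (ℝ × ℝ) => EE g (v (p.1 + p.2)) (u p.1) :=
    EE_meas hg (by fun_prop) (by fun_prop)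
  have mU : Measurable fun p : (ℝ × ℝ) × (ℝ × ℝ) => |u p.1 - v (p.1 + p.2)| := by fun_prop
  have mU' : Measurable fun p : (ℝ × ℝ) × (ℝ × ℝ) => |v (p.1 + p.2) - u p.1| := by fun_prop
  have mA : Measurable fun p : (ℝ × ℝ) × (ℝ × ℝ) => A p.1 p.2 := by
    simp only [A]; fun_prop
  have mB : Measurable fun p : (ℝ × ℝ) × (ℝ × ℝ) => B p.1 p.2 := by
    simp only [B]; fun_prop
  have hEb : ∀ {a b : ℝ}, a ∈ Icc (0:ℝ) 1 → b ∈ Icc (0:ℝ) 1 → |EE g a b| ≤ L := fun ha hb =>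
    (EE_abs hg _ _).trans (mul_le_of_le_one_right hL (sub_abs_le_one ha hb))
  have hKc : IsCompact (tsupport φ ×ˢ tsupport ω) := hφ.2.1.prod hω.2.1
  have z0 : ∀ p : (ℝ × ℝ) × (ℝ × ℝ), p ∉ tsupport φ ×ˢ tsupport ω →
      A p.1 p.2 = 0 ∧ B p.1 p.2 = 0 := by
    rintro ⟨z, w⟩ hp
    rw [mem_prod, not_and_or] at hp
    rcases hp with hp | hp
    · simp [A, B, hφ.zero hp, hφ.pT_zero hp, hφ.pX_zero hp]
    · simp [A, B, hω.zero hp, hω.pT_zero hp, hω.pX_zero hp]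
  -- Elementary bound for the two products of a coefficient with a bounded factor.
  have bd : ∀ {a b c d e α β γ : ℝ}, |a| ≤ 1 → |b| ≤ α → |c| ≤ 1 → |d| ≤ β → |e| ≤ γ →
      |a * b + c * d * e| ≤ α + β * γ := by
    intro a b c d e α β γ ha hb hc hd he
    have hβ := (abs_nonneg _).trans hd
    calc _ ≤ |a| * |b| + |c| * |d| * |e| := by
          refine (abs_add_le _ _).trans (le_of_eq ?_); simp only [abs_mul]
      _ ≤ 1 * α + 1 * β * γ := by gcongr
      _ = _ := by ring
  have bm : ∀ {a b c d : ℝ}, |a| ≤ M → |b| ≤ N → |c| ≤ M → |d| ≤ N →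
      |a * b - c * d| ≤ M * N + M * N := by
    intro a b c d ha hb hc hd
    refine (abs_sub _ _).trans ?_
    rw [abs_mul, abs_mul]
    gcongr
  have bm1 : ∀ {a b : ℝ}, |a| ≤ M → |b| ≤ N → |a * b| ≤ M * N := by
    intro a b ha hb
    rw [abs_mul]
    gcongr
  have iA : Integrable (fun p : (ℝ × ℝ) × (ℝ × ℝ) => A p.1 p.2) := by
    refine intg mA _ hKc.isClosed.measurableSet hKc.measure_lt_top
      ((M * N + M * N) + L * (M * N + M * N)) (fun p _ => ?_) (fun p hp => (z0 p hp).1)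
    refine bd ?_ (bm (hMb _).2.1 (hNb _).1 (hMb _).1 (hNb _).2.1) (Th_abs _)
      (hEb (hu01 _) (hv01 _)) (bm (hMb _).2.2 (hNb _).1 (hMb _).1 (hNb _).2.2)
    rw [abs_abs]; exact sub_abs_le_one (hu01 _) (hv01 _)
  have iB : Integrable (fun p : (ℝ × ℝ) × (ℝ × ℝ) => B p.1 p.2) := by
    refine intg mB _ hKc.isClosed.measurableSet hKc.measure_lt_top
      ((M * N) + L * (M * N)) (fun p _ => ?_) (fun p hp => (z0 p hp).2)
    refine bd ?_ (bm1 (hMb _).1 (hNb _).2.1) (Th_abs _)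
      (hEb (hv01 _) (hu01 _)) (bm1 (hMb _).1 (hNb _).2.2)
    rw [abs_abs]; exact sub_abs_le_one (hv01 _) (hu01 _)
  have pB : 0 ≤ ∫ p : (ℝ × ℝ) × (ℝ × ℝ), B p.1 p.2 := by
    rw [Measure.volume_eq_prod, integral_prod _ iB]
    refine integral_nonneg fun z => ?_
    change (0:ℝ) ≤ _
    have := hvS (u z) (hu01 z) _ (testFun_const_shift hω (hφ.2.2 z) z) (hωS z)
    rw [← integral_add_right_eq_self _ z] at this
    simpa only [pT_const_shift hω, pX_const_shift hω, add_sub_cancel_right, Prod.snd_add,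
      add_comm _ z, add_comm _ z.2, add_sub_cancel_left, B] using this
  have pA : 0 ≤ ∫ p : (ℝ × ℝ) × (ℝ × ℝ), A p.1 p.2 := by
    have hmp : MeasurePreserving (fun p : (ℝ × ℝ) × (ℝ × ℝ) => (p.1, p.2 - p.1))
        (volume.prod volume) (volume.prod volume) := measurePreserving_prod_sub volume volume
    have iA' : Integrable (fun p : (ℝ × ℝ) × (ℝ × ℝ) => A p.1 (p.2 - p.1)) :=
      hmp.integrable_comp_of_integrable iA
    have e1 : ∫ p : (ℝ × ℝ) × (ℝ × ℝ), A p.1 p.2 = ∫ z : ℝ × ℝ, ∫ z' : ℝ × ℝ, A z (z' - z) := by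
      rw [Measure.volume_eq_prod, integral_prod _ iA]
      refine integral_congr_ae (Eventually.of_forall fun z => ?_)
      exact (integral_sub_right_eq_self (fun w => A z w) z).symm
    have e2 : ∫ z : ℝ × ℝ, ∫ z' : ℝ × ℝ, A z (z' - z) = ∫ z' : ℝ × ℝ, ∫ z : ℝ × ℝ, A z (z' - z) :=
      integral_integral_swap iA'
    rw [e1, e2]
    refine integral_nonneg fun z' => ?_
    change (0:ℝ) ≤ _
    have := huS (v z') (hv01 z') _ (testFun_mul_refl hφ hω z')
      (hφS.mono_left (tsupport_mul_subset_left))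
    simpa only [pT_mul_refl hφ hω, pX_mul_refl hφ hω, A, add_sub_cancel] using this
  simp_rw [hAB]
  exact ⟨iA.add iB, by rw [integral_add iA iB]; exact add_nonneg pA pB⟩

/-- A product of an oscillation `h` over the compact set `K` with a mollifier-like weight `k` is
integrated by freezing the shift `w` first. -/
lemma strip_bound {h : ℝ × ℝ → ℝ × ℝ → ℝ}
    (mh : Measurable fun p : (ℝ × ℝ) × (ℝ × ℝ) => h p.1 p.2)
    (hb : ∀ z w, |h z w| ≤ 1) {k B : ℝ × ℝ → ℝ} (mk : Measurable k) {N : ℝ}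
    (kb : ∀ w, |k w| ≤ N) {K K' : Set (ℝ × ℝ)} (hK : IsCompact K) (hK' : IsCompact K')
    (k0 : ∀ w, w ∉ K' → k w = 0) (hB : Integrable B)
    (hkB : ∀ w, k w * ∫ z in K, h z w ≤ B w) :
    Integrable (fun p : (ℝ × ℝ) × (ℝ × ℝ) => K.indicator (fun z => h z p.2) p.1 * k p.2) ∧
    ∫ p : (ℝ × ℝ) × (ℝ × ℝ), K.indicator (fun z => h z p.2) p.1 * k p.2 ≤ ∫ w, B w := by
  have mK := hK.isClosed.measurableSet
  have e : (fun p : (ℝ × ℝ) × (ℝ × ℝ) => K.indicator (fun z => h z p.2) p.1)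
      = (K ×ˢ univ).indicator fun p => h p.1 p.2 := by
    funext p
    by_cases hp : p.1 ∈ K <;> simp [indicator, hp]
  have m1 : Measurable fun p : (ℝ × ℝ) × (ℝ × ℝ) => K.indicator (fun z => h z p.2) p.1 := by
    rw [e]; exact mh.indicator (mK.prod MeasurableSet.univ)
  have hKc : IsCompact (K ×ˢ K') := hK.prod hK'
  have hi : Integrable (fun p : (ℝ × ℝ) × (ℝ × ℝ) =>
      K.indicator (fun z => h z p.2) p.1 * k p.2) := by
    refine intg (by fun_prop) _ hKc.isClosed.measurableSet hKc.measure_lt_top (1 * N)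
      (fun p _ => ?_) (fun p hp => ?_)
    · rw [abs_mul]
      refine mul_le_mul ?_ (kb _) (abs_nonneg _) zero_le_one
      by_cases hp : p.1 ∈ K
      · rw [indicator_of_mem hp]; exact hb _ _
      · rw [indicator_of_notMem hp]; simp
    · rw [mem_prod, not_and_or] at hp
      rcases hp with hp | hp
      · rw [indicator_of_notMem hp, zero_mul]
      · rw [k0 _ hp, mul_zero]
  refine ⟨hi, ?_⟩
  rw [Measure.volume_eq_prod, integral_prod_symm _ hi]
  refine integral_mono (hi.integral_prod_right) hB fun w => ?_
  simp only
  rw [integral_mul_const, integral_indicator mK, mul_comm]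
  exact hkB w

/-- Kruzhkov's doubling of variables: two functions satisfying the entropy inequalities away from
the closed set `S` satisfy the contraction inequality away from `S`. -/
lemma doubling {g : ℝ → ℝ} {L : NNReal} (hg : LipschitzWith L g) {u v : ℝ × ℝ → ℝ}
    (hu : Measurable u) (hv : Measurable v) (hu01 : ∀ z, u z ∈ Icc (0:ℝ) 1)
    (hv01 : ∀ z, v z ∈ Icc (0:ℝ) 1) {S : Set (ℝ × ℝ)} (hS : IsClosed S) (huS : KE g u S)
    (hvS : KE g v S) {φ : ℝ × ℝ → ℝ} (hφ : TestFun φ) (hφS : Disjoint (tsupport φ) S) :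
    0 ≤ ∫ z, (|u z - v z| * pT φ z + Th z.2 * EE g (u z) (v z) * pX φ z) := by
  have hL : (0:ℝ) ≤ L := L.2
  obtain ⟨M, hM, hMb⟩ := hφ.bound
  set K := tsupport φ with hKdef
  have hK : IsCompact K := hφ.2.1
  obtain ⟨C, hC, hCb⟩ := Th_shift hK
  obtain ⟨δ₀, hδ₀, hdis⟩ := hφS.exists_cthickenings hK hS
  have mφt := hφ.cont_pT.measurable
  have mφx := hφ.cont_pX.measurable
  have mT := Th_meas
  set I : ℝ × ℝ → ℝ := fun z => |u z - v z| * pT φ z + Th z.2 * EE g (u z) (v z) * pX φ z with hI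
  have mE : Measurable fun z => EE g (u z) (v z) := EE_meas hg hu hv
  have hEb : ∀ {a b : ℝ}, a ∈ Icc (0:ℝ) 1 → b ∈ Icc (0:ℝ) 1 → |EE g a b| ≤ L := fun ha hb =>
    (EE_abs hg _ _).trans (mul_le_of_le_one_right hL (sub_abs_le_one ha hb))
  have iI : Integrable I := by
    refine intg (by fun_prop) K hK.isClosed.measurableSet hK.measure_lt_top (1 * M + 1 * L * M)
      (fun z _ => ?_) (fun z hz => ?_)
    · refine (abs_add_le _ _).trans ?_
      simp only [abs_mul, abs_abs]
      gcongr
      · exact sub_abs_le_one (hu01 z) (hv01 z)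
      · exact (hMb z).2.1
      · exact Th_abs _
      · exact hEb (hu01 z) (hv01 z)
      · exact (hMb z).2.2
    · simp [I, hφ.pT_zero hz, hφ.pX_zero hz]
  refine le_of_forall_pos_le_add fun ε hε => ?_
  -- `c₁` bounds the coefficients of the translation error of `v`, `c₂` those of the jump of the
  -- switch; the latter integrates to at most `C * |w.2|` by `Th_shift`.
  set c₁ := M * (1 + 2 * L) with hc₁
  set c₂ := L * M with hc₂
  have hc₁0 : 0 ≤ c₁ := by positivity
  have hc₂0 : 0 ≤ c₂ := by positivity
  set ε' := ε / (c₁ + c₂ * C + 1) with hε'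
  have hden : 0 < c₁ + c₂ * C + 1 := by positivity
  have hε'0 : 0 < ε' := by positivity
  have hv1 : ∀ z, |v z| ≤ 1 := fun z => by
    rw [abs_of_nonneg (hv01 z).1]; exact (hv01 z).2
  obtain ⟨δ₁, hδ₁, hδ₁b⟩ := translate_cont hv hv1 hK hε'0
  -- The radius `δ` keeps the supports off `S` (`δ₀`), makes the translation error of `v` small
  -- (`δ₁`), and bounds `∫ |w.2| |∂ₓω|` by the error budget.
  set δ := min (min δ₀ δ₁) ε' with hδ
  have hδ0 : 0 < δ := lt_min (lt_min hδ₀ hδ₁) hε'0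
  obtain ⟨ω, hω, hω1, hωs, hωx⟩ := exists_kernel δ hδ0
  obtain ⟨N, hN, hNb⟩ := hω.bound
  have mω := hω.cont.measurable
  have mωx := hω.cont_pX.measurable
  have iω : Integrable ω := hω.cont.integrable_of_hasCompactSupport hω.2.1
  have hωS : ∀ z, Disjoint (tsupport fun z' => φ z * ω (z' - z)) S := by
    intro z
    by_cases hz : φ z = 0
    · simp [hz, tsupport, Function.support]
    have hzK : z ∈ K := subset_tsupport _ hz
    refine hdis.mono ?_ (Metric.self_subset_cthickening _)
    have : (Function.support fun z' => φ z * ω (z' - z)) ⊆ Metric.closedBall z δ₀ := by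
      intro z' hz'
      rw [Metric.mem_closedBall, dist_eq_norm]
      by_contra h
      push Not at h
      exact hz' (by
        simp [hωs (z' - z) (((min_le_left _ _).trans (min_le_left _ _)).trans h.le)])
    exact (closure_minimal this Metric.isClosed_closedBall).trans
      (Metric.closedBall_subset_cthickening hzK _)
  obtain ⟨iD, hD⟩ := dbl_nonneg hg hu hv hu01 hv01 huS hvS hφ hω hφS hωS
  obtain ⟨i1, hi1⟩ := strip_bound (h := fun z w => |v (z + w) - v z|) (k := ω)
    (B := fun w => ε' * ω w) (N := N) (K := K) (K' := tsupport ω) (by fun_prop)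
    (fun z w => by rw [abs_abs]; exact sub_abs_le_one (hv01 _) (hv01 _)) mω
    (fun w => (hNb w).1) hK hω.2.1 (fun w hw => hω.zero hw) (iω.const_mul _) (fun w => by
      rcases le_or_gt δ ‖w‖ with hw | hw
      · simp [hωs w hw]
      · rw [mul_comm]
        exact mul_le_mul_of_nonneg_right
          (hδ₁b w (hw.trans_le ((min_le_left _ _).trans (min_le_right _ _)))) (hω.2.2 w))
  obtain ⟨i2, hi2⟩ := strip_bound (h := fun z w => |Th (z.2 + w.2) - Th z.2|)
    (k := fun w => |pX ω w|) (B := fun w => C * (|w.2| * |pX ω w|)) (N := N) (K := K)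
    (K' := tsupport ω) (by fun_prop)
    (fun z w => by
      rw [abs_abs]
      unfold Th indicator
      split_ifs <;> simp)
    (by fun_prop) (fun w => by rw [abs_abs]; exact (hNb w).2.2) hK hω.2.1
    (fun w hw => by rw [hω.pX_zero hw, abs_zero])
    (by
      refine Integrable.const_mul ?_ C
      refine Continuous.integrable_of_hasCompactSupport
        ((continuous_snd.abs).mul hω.cont_pX.abs) ?_
      exact HasCompactSupport.intro hω.2.1 fun w hw => by simp [hω.pX_zero hw])
    (fun w => by
      rw [mul_comm, ← mul_assoc]
      exact mul_le_mul_of_nonneg_right (hCb w.2) (abs_nonneg _))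
  rw [integral_const_mul, hω1, mul_one] at hi1
  rw [integral_const_mul] at hi2
  have i0 : Integrable fun p : (ℝ × ℝ) × (ℝ × ℝ) => I p.1 * ω p.2 := iI.mul_prod iω
  have hi0 : ∫ p : (ℝ × ℝ) × (ℝ × ℝ), I p.1 * ω p.2 = ∫ z, I z := by
    rw [Measure.volume_eq_prod, integral_prod_mul, hω1, mul_one]
  have hle : ∫ p : (ℝ × ℝ) × (ℝ × ℝ), dblInt g u v φ ω p.1 p.2 ≤
      ∫ p : (ℝ × ℝ) × (ℝ × ℝ), (I p.1 * ω p.2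
        + (c₁ * (K.indicator (fun z => |v (z + p.2) - v z|) p.1 * ω p.2)
          + c₂ * (K.indicator (fun z => |Th (z.2 + p.2.2) - Th z.2|) p.1 * |pX ω p.2|))) := by
    refine integral_mono iD (i0.add ((i1.const_mul _).add (i2.const_mul _))) ?_
    rintro ⟨z, w⟩
    simp only [dblInt, I]
    by_cases hz : z ∈ K
    · rw [indicator_of_mem hz, indicator_of_mem hz]
      have a1 : (|u z - v (z + w)| - |u z - v z|) * pT φ z ≤ |v (z + w) - v z| * M := by
        refine (le_abs_self _).trans ?_
        rw [abs_mul]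
        refine mul_le_mul ((abs_abs_sub_abs_le_abs_sub _ _).trans (le_of_eq ?_)) (hMb z).2.1
          (abs_nonneg _) (abs_nonneg _)
        rw [abs_sub_comm]; congr 1; ring
      have a2 : Th z.2 * (EE g (u z) (v (z + w)) - EE g (u z) (v z)) * pX φ z
          ≤ 1 * (2 * L * (|u z - u z| + |v (z + w) - v z|)) * M := by
        refine (le_abs_self _).trans ?_
        rw [abs_mul, abs_mul]
        gcongr
        · exact Th_abs _
        · exact EE_diff hg _ _ _ _
        · exact (hMb z).2.2
      have a3 : (Th (z.2 + w.2) - Th z.2) * EE g (u z) (v (z + w)) * φ z * pX ω w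
          ≤ |Th (z.2 + w.2) - Th z.2| * L * M * |pX ω w| := by
        refine (le_abs_self _).trans ?_
        rw [abs_mul, abs_mul, abs_mul]
        gcongr
        · exact hEb (hu01 _) (hv01 _)
        · exact (hMb z).1
      have hω0 := hω.2.2 w
      rw [sub_self, abs_zero, zero_add] at a2
      have a12 := mul_le_mul_of_nonneg_right (add_le_add a1 a2) hω0
      simp only [c₁, c₂]
      linarith
    · simp [indicator_of_notMem hz, hφ.zero hz, hφ.pT_zero hz, hφ.pX_zero hz]
  have i12 : Integrable fun p : (ℝ × ℝ) × (ℝ × ℝ) =>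
      c₁ * (K.indicator (fun z => |v (z + p.2) - v z|) p.1 * ω p.2)
        + c₂ * (K.indicator (fun z => |Th (z.2 + p.2.2) - Th z.2|) p.1 * |pX ω p.2|) :=
    (i1.const_mul _).add (i2.const_mul _)
  rw [integral_add i0 i12, integral_add (i1.const_mul _) (i2.const_mul _), integral_const_mul, integral_const_mul,
    hi0] at hle
  have h1 := mul_le_mul_of_nonneg_left hi1 hc₁0
  have h2 := mul_le_mul_of_nonneg_left (hi2.trans (mul_le_mul_of_nonneg_left
    (hωx.trans (min_le_right _ _)) hC)) hc₂0
  have h3 : c₁ * ε' + c₂ * (C * ε') ≤ ε := by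
    have : (c₁ + c₂ * C + 1) * ε' = ε := mul_div_cancel₀ _ hden.ne'
    nlinarith
  linarith

/-! ### Regularized cut-offs around the interface -/

/-- A smooth profile vanishing near `0` and equal to `1` far from `0`. The integrals of its
derivative over the half-lines are `1` and `-1`: they select the two traces at the interface. -/
structure Profile (χ : ℝ → ℝ) : Prop where
  smooth : ContDiff ℝ (⊤ : ℕ∞) χ
  mem : ∀ x, χ x ∈ Icc (0:ℝ) 1
  near : ∀ x, |x| ≤ 1 → χ x = 0
  far : ∀ x, 2 ≤ |x| → χ x = 1
  deriv_far : ∀ x, 2 < |x| → deriv χ x = 0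
  deriv_supp : HasCompactSupport (deriv χ)
  right : ∫ x in Ioi 0, deriv χ x = 1
  left : ∫ x in Iic 0, deriv χ x = -1

lemma exists_profile : ∃ χ : ℝ → ℝ, Profile χ := by
  let χ : ℝ → ℝ := fun x => Real.smoothTransition (x ^ 2 - 1)
  have hc : ContDiff ℝ (⊤ : ℕ∞) χ :=
    Real.smoothTransition.contDiff.comp ((contDiff_id.pow 2).sub contDiff_const)
  have h0 : ∀ x, |x| ≤ 1 → χ x = 0 := fun x hx =>
    Real.smoothTransition.zero_of_nonpos (by nlinarith [sq_abs x, abs_nonneg x])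
  have h1 : ∀ x, 2 ≤ |x| → χ x = 1 := fun x hx =>
    Real.smoothTransition.one_of_one_le (by nlinarith [sq_abs x, abs_nonneg x])
  have hd : ∀ x, 2 < |x| → deriv χ x = 0 := by
    intro x hx
    have : χ =ᶠ[𝓝 x] fun _ => 1 := by
      filter_upwards [continuous_abs.continuousAt.eventually (lt_mem_nhds hx)] with z hz
      exact h1 z (le_of_lt hz)
    rw [this.deriv_eq, deriv_const]
  have hcs : HasCompactSupport (deriv χ) :=
    HasCompactSupport.intro (isCompact_Icc (a := (-2:ℝ)) (b := 2)) fun x hx => hd x (by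
      by_contra h
      push Not at h
      exact hx (abs_le.1 h))
  have hi : Integrable (deriv χ) :=
    (hc.continuous_deriv (by simp)).integrable_of_hasCompactSupport hcs
  have hdiff : ∀ x, HasDerivAt χ (deriv χ x) x := fun x =>
    (hc.differentiable (by simp) x).hasDerivAt
  refine ⟨χ, hc, fun x => ⟨Real.smoothTransition.nonneg _, Real.smoothTransition.le_one _⟩, h0, h1,
    hd, hcs, ?_, ?_⟩
  · have ht : Tendsto χ atTop (𝓝 1) := by
      refine tendsto_const_nhds.congr' ?_
      filter_upwards [eventually_ge_atTop 2] with x hx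
      exact (h1 x (hx.trans (le_abs_self x))).symm
    rw [integral_Ioi_of_hasDerivAt_of_tendsto' (fun x _ => hdiff x) hi.integrableOn ht,
      h0 0 (by simp), sub_zero]
  · have ht : Tendsto χ atBot (𝓝 1) := by
      refine tendsto_const_nhds.congr' ?_
      filter_upwards [eventually_le_atBot (-2)] with x hx
      exact (h1 x (by rw [abs_of_nonpos (by linarith)]; linarith)).symm
    rw [integral_Iic_of_hasDerivAt_of_tendsto' (fun x _ => hdiff x) hi.integrableOn ht,
      h0 0 (by simp), zero_sub]

/-- Smooth approximations of the interface, converging uniformly with the same Lipschitz constant;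
their slopes converge at almost every time. -/
lemma exists_mollify {L : NNReal} {Y : ℝ → ℝ} (hY : LipschitzWith L Y) : ∃ Yn : ℕ → ℝ → ℝ,
    (∀ n, ContDiff ℝ (⊤ : ℕ∞) (Yn n)) ∧ (∀ t, Tendsto (fun n => Yn n t) atTop (𝓝 (Y t))) ∧
    (∀ η > 0, ∀ᶠ n in atTop, ∀ t, |Yn n t - Y t| < η) ∧ (∀ n t, |deriv (Yn n) t| ≤ L) ∧
    ∀ᵐ t, Tendsto (fun n => deriv (Yn n) t) atTop (𝓝 (deriv Y t)) := by
  let β : ℕ → ContDiffBump (0:ℝ) := fun n =>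
    ⟨(1 / ((n:ℝ) + 1)) / 2, 1 / ((n:ℝ) + 1), by positivity, by
      have : (0:ℝ) < 1 / ((n:ℝ) + 1) := by positivity
      linarith⟩
  let b : ℕ → ℝ → ℝ := fun n => (β n).normed volume
  have bint : ∀ n, Integrable (b n) := fun n => (β n).integrable_normed
  have b0 : ∀ n s, 0 ≤ b n s := fun n s => (β n).nonneg_normed s
  have b1 : ∀ n, ∫ s, b n s = 1 := fun n => (β n).integral_normed
  have bs : ∀ (n : ℕ) (s : ℝ), 1 / ((n:ℝ) + 1) ≤ |s| → b n s = 0 := by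
    intro n s hs
    have : s ∉ Function.support ((β n).normed volume) := by
      rw [(β n).support_normed_eq]
      simpa [β] using hs
    simpa using this
  have hYc := hY.continuous
  have hint : ∀ n t, Integrable fun s => b n s * Y (t - s) := fun n t =>
    Continuous.integrable_of_hasCompactSupport
      ((β n).continuous_normed.mul (hYc.comp (continuous_const.sub continuous_id)))
      ((β n).hasCompactSupport_normed.mul_right)
  let Yn : ℕ → ℝ → ℝ := fun n t => ∫ s, b n s * Y (t - s)
  have hdif : ∀ n t, HasDerivAt (Yn n) (∫ s, b n s * deriv Y (t - s)) t := by
    intro n t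
    refine (hasDerivAt_integral_of_dominated_loc_of_lip (bound := fun s => b n s * L)
      (s := univ) univ_mem ?_ (hint n t) ?_ ?_ ((bint n).mul_const _) ?_).2
    · exact Eventually.of_forall fun x => (hint n x).aestronglyMeasurable
    · exact ((bint n).aestronglyMeasurable).mul
        ((measurable_deriv Y).comp (measurable_const.sub measurable_id)).aestronglyMeasurable
    · refine Eventually.of_forall fun s => LipschitzWith.lipschitzOnWith ?_
      refine LipschitzWith.of_dist_le_mul fun x x' => ?_
      have e : |b n s * (L:ℝ)| = b n s * L := abs_of_nonneg (mul_nonneg (b0 n s) L.2)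
      rw [Real.dist_eq, ← mul_sub, abs_mul, Real.coe_nnabs, abs_of_nonneg (b0 n s), e, mul_assoc]
      refine mul_le_mul_of_nonneg_left ?_ (b0 n s)
      have := hY.dist_le_mul (x - s) (x' - s)
      simpa [Real.dist_eq] using this
    · have hd : ∀ᵐ s, DifferentiableAt ℝ Y s := hY.ae_differentiableAt
      have hq : ∀ᵐ s, DifferentiableAt ℝ Y (t - s) :=
        (quasiMeasurePreserving_sub_left volume t).ae hd
      filter_upwards [hq] with s hs
      have h2 : HasDerivAt (fun x => Y (x - s)) (deriv Y (t - s)) t := by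
        have := HasDerivAt.comp t hs.hasDerivAt ((hasDerivAt_id t).sub_const s)
        rw [mul_one] at this
        exact this
      exact h2.const_mul _
  have hdb : ∀ t, |deriv Y t| ≤ L := fun t => by
    simpa using norm_deriv_le_of_lipschitz (x₀ := t) hY
  have hclose : ∀ n t, |Yn n t - Y t| ≤ L * (1 / ((n:ℝ) + 1)) := by
    intro n t
    have e : Yn n t - Y t = ∫ s, b n s * (Y (t - s) - Y t) := by
      simp_rw [mul_sub]
      rw [integral_sub (hint n t) ((bint n).mul_const _), integral_mul_const, b1, one_mul]
    rw [e]
    have : ‖∫ s, b n s * (Y (t - s) - Y t)‖ ≤ ∫ s, b n s * (L * (1 / ((n:ℝ) + 1))) := by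
      refine norm_integral_le_of_norm_le ((bint n).mul_const _) (Eventually.of_forall fun s => ?_)
      rw [norm_mul, Real.norm_of_nonneg (b0 n s)]
      rcases le_or_gt (1 / ((n:ℝ) + 1)) |s| with h | h
      · simp [bs n s h]
      · refine mul_le_mul_of_nonneg_left ?_ (b0 n s)
        have h3 := hY.dist_le_mul (t - s) t
        rw [Real.dist_eq, Real.dist_eq, sub_sub_cancel_left, abs_neg] at h3
        exact h3.trans (mul_le_mul_of_nonneg_left h.le L.2)
    rwa [integral_mul_const, b1, one_mul] at this
  have hlim : Tendsto (fun n : ℕ => (L:ℝ) * (1 / ((n:ℝ) + 1))) atTop (𝓝 0) := by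
    simpa using tendsto_one_div_add_atTop_nhds_zero_nat.const_mul (L:ℝ)
  refine ⟨Yn, ?_, ?_, ?_, ?_, ?_⟩
  · intro n
    have : Yn n = MeasureTheory.convolution (b n) Y (ContinuousLinearMap.lsmul ℝ ℝ) volume := rfl
    rw [this]
    exact (β n).hasCompactSupport_normed.contDiff_convolution_left _ (β n).contDiff_normed
      hYc.locallyIntegrable
  · intro t
    rw [tendsto_iff_dist_tendsto_zero]
    exact squeeze_zero (fun n => dist_nonneg) (fun n => hclose n t) hlim
  · intro η hη
    filter_upwards [hlim.eventually (gt_mem_nhds hη)] with n hn t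
    exact (hclose n t).trans_lt hn
  · intro n t
    rw [(hdif n t).deriv]
    have : ‖∫ s, b n s * deriv Y (t - s)‖ ≤ ∫ s, b n s * L := by
      refine norm_integral_le_of_norm_le ((bint n).mul_const _) (Eventually.of_forall fun s => ?_)
      rw [norm_mul, Real.norm_of_nonneg (b0 n s)]
      exact mul_le_mul_of_nonneg_left (hdb _) (b0 n s)
    rwa [integral_mul_const, b1, one_mul] at this
  · have hli : LocallyIntegrable (deriv Y) := by
      refine (locallyIntegrable_const (L:ℝ)).mono (measurable_deriv Y).aestronglyMeasurable
        (Eventually.of_forall fun t => ?_)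
      exact (hdb t).trans (le_abs_self (L:ℝ))
    have := ContDiffBump.ae_convolution_tendsto_right_of_locallyIntegrable (φ := β) (K := 2)
      (l := atTop) (g := deriv Y) (μ := volume)
      (by simpa [β] using tendsto_one_div_add_atTop_nhds_zero_nat (𝕜 := ℝ))
      (Eventually.of_forall fun n => le_of_eq (by simp only [β]; ring)) hli
    filter_upwards [this] with t ht
    refine ht.congr fun n => ?_
    rw [(hdif n t).deriv]
    rfl

/-! ### Contraction up to an interface term -/

/-- The weak form of `∂ₜP + ∂ₓQ ≤ 0` in `{t > 0}`, with initial datum `w`, tested with `φ`. -/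
def weakForm (P Q : ℝ × ℝ → ℝ) (w : ℝ → ℝ) (φ : ℝ × ℝ → ℝ) : ℝ :=
  (∫ z in HP, (P z * pT φ z + Q z * pX φ z)) + ∫ x, w x * φ (x, 0)

/-- The integrand of the weak form of `∂ₜP + ∂ₓQ` for the test function `ψ` cut off by `χ` at
distance `ε` from the curve `x = a(t)`, where `d` stands for the derivative of `a`. -/
def cutInt (P Q ψ : ℝ × ℝ → ℝ) (χ : ℝ → ℝ) (ε : ℝ) (a d : ℝ → ℝ) (z : ℝ × ℝ) : ℝ :=
  (P z * pT ψ z + Q z * pX ψ z) * χ ((z.1 - a z.2) / ε)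
    + ψ z * (deriv χ ((z.1 - a z.2) / ε) / ε) * (Q z - d z.2 * P z)

section
variable {P Q ψ : ℝ × ℝ → ℝ} {χ : ℝ → ℝ} {C : ℝ}

lemma Profile.deriv_bdd (h : Profile χ) : ∃ B, 0 ≤ B ∧ ∀ x, |deriv χ x| ≤ B := by
  obtain ⟨B, hB⟩ := h.deriv_supp.exists_bound_of_continuous (h.smooth.continuous_deriv (by simp))
  exact ⟨B, (norm_nonneg _).trans (hB 0), hB⟩

lemma cutInt_meas (hP : Measurable P) (hQ : Measurable Q) (hψ : TestFun ψ) (hχ : Profile χ)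
    (ε : ℝ) {a d : ℝ → ℝ} (ha : Measurable a) (hd : Measurable d) :
    Measurable (cutInt P Q ψ χ ε a d) := by
  have m1 := hψ.cont.measurable
  have m2 := hψ.cont_pT.measurable
  have m3 := hψ.cont_pX.measurable
  have m4 := hχ.smooth.continuous.measurable
  have m5 : Measurable (deriv χ) := measurable_deriv χ
  unfold cutInt
  fun_prop

lemma cutInt_bdd (hPb : ∀ z, |P z| ≤ C) (hQb : ∀ z, |Q z| ≤ C) (hψ : TestFun ψ)
    (hχ : Profile χ) {ε : ℝ} (hε : 0 < ε) (L : ℝ) :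
    ∃ N, 0 ≤ N ∧ ∀ a d : ℝ → ℝ, (∀ t, |d t| ≤ L) → ∀ z,
      |cutInt P Q ψ χ ε a d z| ≤ (tsupport ψ).indicator (fun _ => N) z := by
  have hC : 0 ≤ C := (abs_nonneg _).trans (hPb 0)
  obtain ⟨M, hM, hMb⟩ := hψ.bound
  obtain ⟨B, hB, hBb⟩ := hχ.deriv_bdd
  refine ⟨(C * M + C * M) * 1 + M * (B / ε) * (C + |L| * C), by positivity, fun a d hd z => ?_⟩
  by_cases hz : z ∈ tsupport ψ
  · rw [indicator_of_mem hz]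
    unfold cutInt
    have h1 : |P z * pT ψ z + Q z * pX ψ z| ≤ C * M + C * M := by
      refine (abs_add_le _ _).trans ?_
      rw [abs_mul, abs_mul]
      gcongr
      · exact hPb z
      · exact (hMb z).2.1
      · exact hQb z
      · exact (hMb z).2.2
    have h2 : |χ ((z.1 - a z.2) / ε)| ≤ 1 := by
      rw [abs_of_nonneg (hχ.mem _).1]; exact (hχ.mem _).2
    have h3 : |Q z - d z.2 * P z| ≤ C + |L| * C := by
      refine (abs_sub _ _).trans ?_
      rw [abs_mul]
      exact add_le_add (hQb z) (mul_le_mul ((hd _).trans (le_abs_self _)) (hPb z)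
        (abs_nonneg _) (abs_nonneg _))
    have h4 : |deriv χ ((z.1 - a z.2) / ε) / ε| ≤ B / ε := by
      rw [abs_div, abs_of_pos hε]
      gcongr
      exact hBb _
    refine (abs_add_le _ _).trans ?_
    rw [abs_mul, abs_mul (_ * _) (Q z - _), abs_mul (ψ z)]
    gcongr
    exact (hMb z).1
  · rw [indicator_of_notMem hz]
    simp [cutInt, hψ.zero hz, hψ.pT_zero hz, hψ.pX_zero hz]

lemma indicator_supp_integrable (hψ : TestFun ψ) (N : ℝ) :
    Integrable ((tsupport ψ).indicator fun _ => N) :=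
  (integrable_indicator_iff hψ.2.1.isClosed.measurableSet).2
    (integrableOn_const hψ.2.1.measure_lt_top.ne)

/-- Off the interface, the weak inequality may be tested with `ψ χ((x - Y(t))/ε)`, although this
function is only Lipschitz continuous: the curve is mollified and the limit is taken. -/
lemma cutoff_ineq {L : NNReal} {Y : ℝ → ℝ} (hY : LipschitzWith L Y) {w : ℝ → ℝ}
    (hP : Measurable P) (hQ : Measurable Q) (hw : Measurable w)
    (hPb : ∀ z, |P z| ≤ C) (hQb : ∀ z, |Q z| ≤ C) (hwb : ∀ x, |w x| ≤ C)
    (H : ∀ φ, TestFun φ → Disjoint (tsupport φ) {p | p.1 = Y p.2} → 0 ≤ weakForm P Q w φ)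
    (hψ : TestFun ψ) (hχ : Profile χ) {ε : ℝ} (hε : 0 < ε) :
    0 ≤ (∫ z in HP, cutInt P Q ψ χ ε Y (deriv Y) z)
      + ∫ x, w x * (ψ (x, 0) * χ ((x - Y 0) / ε)) := by
  obtain ⟨Yn, hYs, hYt, hYu, hYd, hYdt⟩ := exists_mollify hY
  have hC : 0 ≤ C := (abs_nonneg _).trans (hPb 0)
  obtain ⟨M, hM, hMb⟩ := hψ.bound
  obtain ⟨N, hN, hNb⟩ := cutInt_bdd hPb hQb hψ hχ hε (L : ℝ)
  let φ : ℕ → ℝ × ℝ → ℝ := fun n z => ψ z * χ ((z.1 - Yn n z.2) / ε)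
  have hφ : ∀ n, TestFun (φ n) := fun n =>
    ⟨hψ.1.mul (hχ.smooth.comp ((contDiff_fst.sub ((hYs n).comp contDiff_snd)).div_const ε)),
      hψ.2.1.mul_right, fun z => mul_nonneg (hψ.2.2 z) (hχ.mem _).1⟩
  have hχd : ∀ x, HasDerivAt χ (deriv χ x) x := fun x =>
    (hχ.smooth.differentiable (by simp) x).hasDerivAt
  have eT : ∀ n z, pT (φ n) z = pT ψ z * χ ((z.1 - Yn n z.2) / ε)
      + ψ z * (deriv χ ((z.1 - Yn n z.2) / ε) * (-(deriv (Yn n) z.2) / ε)) := by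
    rintro n ⟨x, t⟩
    refine pT_eq ((hφ n).diff _) ?_
    have h1 : HasDerivAt (fun s => (x - Yn n s) / ε) (-(deriv (Yn n) t) / ε) t :=
      ((((hYs n).differentiable (by simp) t).hasDerivAt).const_sub x).div_const ε
    exact (pT_hasDerivAt (hψ.diff (x, t))).mul (HasDerivAt.comp t (hχd _) h1)
  have eX : ∀ n z, pX (φ n) z = pX ψ z * χ ((z.1 - Yn n z.2) / ε)
      + ψ z * (deriv χ ((z.1 - Yn n z.2) / ε) * (1 / ε)) := by
    rintro n ⟨x, t⟩
    refine pX_eq ((hφ n).diff _) ?_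
    have h1 : HasDerivAt (fun s => (s - Yn n t) / ε) (1 / ε) x :=
      ((hasDerivAt_id x).sub_const _).div_const ε
    exact (pX_hasDerivAt (hψ.diff (x, t))).mul (HasDerivAt.comp x (hχd _) h1)
  have e : ∀ n z, P z * pT (φ n) z + Q z * pX (φ n) z
      = cutInt P Q ψ χ ε (Yn n) (deriv (Yn n)) z := by
    intro n z; rw [eT, eX]; unfold cutInt; ring
  have hdis : ∀ᶠ n in atTop, Disjoint (tsupport (φ n)) {p | p.1 = Y p.2} := by
    filter_upwards [hYu ε hε] with n hn
    have hsub : tsupport (φ n) ⊆ {z | ε ≤ |z.1 - Yn n z.2|} := by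
      refine closure_minimal (fun z hz => ?_) (isClosed_le continuous_const
        (continuous_fst.sub ((hYs n).continuous.comp continuous_snd)).abs)
      by_contra h
      simp only [mem_ofPred_eq, not_le] at h
      refine hz ?_
      have : χ ((z.1 - Yn n z.2) / ε) = 0 := by
        refine hχ.near _ ?_
        rw [abs_div, abs_of_pos hε, div_le_one hε]
        exact h.le
      simp [φ, this]
    rw [Set.disjoint_left]
    intro z hz hz'
    have h1 := hsub hz
    have h2 := hn z.2
    simp only [mem_ofPred_eq] at h1 hz'
    rw [hz', abs_sub_comm] at h1
    linarith
  have lim1 : Tendsto (fun n => ∫ z in HP, cutInt P Q ψ χ ε (Yn n) (deriv (Yn n)) z) atTop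
      (𝓝 (∫ z in HP, cutInt P Q ψ χ ε Y (deriv Y) z)) := by
    refine tendsto_integral_of_dominated_convergence ((tsupport ψ).indicator fun _ => N)
      (fun n => (cutInt_meas hP hQ hψ hχ ε (hYs n).continuous.measurable
        (measurable_deriv _)).aestronglyMeasurable)
      (indicator_supp_integrable hψ N).integrableOn
      (fun n => Eventually.of_forall fun z => hNb _ _ (hYd n) z) ?_
    refine ae_restrict_of_ae ?_
    have : ∀ᵐ z : ℝ × ℝ, Tendsto (fun n => deriv (Yn n) z.2) atTop (𝓝 (deriv Y z.2)) :=
      Measure.quasiMeasurePreserving_snd.ae hYdt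
    filter_upwards [this] with z hz
    have ht : Tendsto (fun n => (z.1 - Yn n z.2) / ε) atTop (𝓝 ((z.1 - Y z.2) / ε)) :=
      (tendsto_const_nhds.sub (hYt z.2)).div_const ε
    have h1 := (hχ.smooth.continuous.tendsto _).comp ht
    have h2 := ((hχ.smooth.continuous_deriv (by simp)).tendsto _).comp ht
    exact (tendsto_const_nhds.mul h1).add ((tendsto_const_nhds.mul (h2.div_const ε)).mul
      (tendsto_const_nhds.sub (hz.mul tendsto_const_nhds)))
  have mψ0 : Measurable fun x : ℝ => ψ (x, 0) :=
    (hψ.cont.comp (by fun_prop : Continuous fun x : ℝ => (x, (0:ℝ)))).measurable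
  have iψ0 : Integrable fun x : ℝ => C * ψ (x, 0) := by
    refine (Continuous.integrable_of_hasCompactSupport
      (hψ.cont.comp (by fun_prop : Continuous fun x : ℝ => (x, (0:ℝ)))) ?_).const_mul C
    refine HasCompactSupport.intro (hψ.2.1.image continuous_fst) fun x hx => ?_
    by_contra h
    exact hx ⟨(x, 0), subset_tsupport _ h, rfl⟩
  have lim2 : Tendsto (fun n => ∫ x, w x * φ n (x, 0)) atTop
      (𝓝 (∫ x, w x * (ψ (x, 0) * χ ((x - Y 0) / ε)))) := by
    have mχ := hχ.smooth.continuous.measurable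
    refine tendsto_integral_of_dominated_convergence (fun x => C * ψ (x, 0))
      (fun n => ?_) iψ0 (fun n => Eventually.of_forall fun x => ?_)
      (Eventually.of_forall fun x => ?_)
    · have : Measurable fun x => w x * φ n (x, 0) :=
        hw.mul (mψ0.mul (mχ.comp ((measurable_id.sub_const (Yn n 0)).div_const ε)))
      exact this.aestronglyMeasurable
    · rw [Real.norm_eq_abs, abs_mul]
      refine mul_le_mul (hwb x) ?_ (abs_nonneg _) hC
      rw [abs_of_nonneg ((hφ n).2.2 _)]
      exact mul_le_of_le_one_right (hψ.2.2 _) (hχ.mem _).2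
    · have ht : Tendsto (fun n => (x - Yn n 0) / ε) atTop (𝓝 ((x - Y 0) / ε)) :=
        (tendsto_const_nhds.sub (hYt 0)).div_const ε
      exact tendsto_const_nhds.mul (tendsto_const_nhds.mul
        ((hχ.smooth.continuous.tendsto _).comp ht))
  refine ge_of_tendsto (lim1.add lim2) ?_
  filter_upwards [hdis] with n hn
  have := H _ (hφ n) hn
  unfold weakForm at this
  simpa only [e] using this

end

section
variable {P Q ψ : ℝ × ℝ → ℝ} {χ Y : ℝ → ℝ} {C : ℝ} {L : NNReal}

/-- The flux of `(P, Q)` through the interface shifted by `ξ`, at time `t`, weighted by `ψ`. -/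
def shiftFlux (P Q ψ : ℝ × ℝ → ℝ) (Y : ℝ → ℝ) (ξ t : ℝ) : ℝ :=
  ψ (Y t + ξ, t) * (Q (Y t + ξ, t) - deriv Y t * P (Y t + ξ, t))

lemma deriv_Y_abs (hY : LipschitzWith L Y) (t : ℝ) : |deriv Y t| ≤ L := by
  simpa using norm_deriv_le_of_lipschitz (x₀ := t) hY

lemma shiftFlux_meas (hP : Measurable P) (hQ : Measurable Q) (hψ : TestFun ψ)
    (hY : LipschitzWith L Y) : Measurable fun p : ℝ × ℝ => shiftFlux P Q ψ Y p.1 p.2 := by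
  have m1 := hψ.cont.measurable
  have m2 := hY.continuous.measurable
  have m3 := measurable_deriv Y
  unfold shiftFlux
  fun_prop

lemma exists_time (hψ : TestFun ψ) : ∃ T, 0 < T ∧ ∀ x t, T ≤ t → ψ (x, t) = 0 := by
  obtain ⟨T, hT⟩ := (hψ.2.1.image continuous_snd).isBounded.exists_norm_le
  refine ⟨|T| + 1, by positivity, fun x t ht => ?_⟩
  by_contra h
  have h1 := hT t ⟨(x, t), subset_tsupport _ h, rfl⟩
  rw [Real.norm_eq_abs] at h1
  linarith [le_abs_self T, le_abs_self t]

lemma shiftFlux_bdd (hPb : ∀ z, |P z| ≤ C) (hQb : ∀ z, |Q z| ≤ C) (hψ : TestFun ψ)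
    (hY : LipschitzWith L Y) : ∃ N, 0 ≤ N ∧ ∀ ξ t, |shiftFlux P Q ψ Y ξ t| ≤ N := by
  have hC : 0 ≤ C := (abs_nonneg _).trans (hPb 0)
  have hL : (0:ℝ) ≤ L := L.2
  obtain ⟨M, hM, hMb⟩ := hψ.bound
  refine ⟨M * (C + L * C), by positivity, fun ξ t => ?_⟩
  unfold shiftFlux
  rw [abs_mul]
  refine mul_le_mul (hMb _).1 ?_ (abs_nonneg _) hM
  refine (abs_sub _ _).trans ?_
  rw [abs_mul]
  exact add_le_add (hQb _) (mul_le_mul (deriv_Y_abs hY t) (hPb _) (abs_nonneg _) hL)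

/-- The boundary layer term of `cutInt`, in the stretched variable `η = (x - Y(t))/ε`. -/
lemma layer_eq (hP : Measurable P) (hQ : Measurable Q) (hPb : ∀ z, |P z| ≤ C)
    (hQb : ∀ z, |Q z| ≤ C) (hψ : TestFun ψ) (hY : LipschitzWith L Y) (hχ : Profile χ) {ε : ℝ}
    (hε : 0 < ε) :
    IntegrableOn (fun z : ℝ × ℝ => ψ z * (deriv χ ((z.1 - Y z.2) / ε) / ε)
      * (Q z - deriv Y z.2 * P z)) HP ∧
    ∫ z in HP, ψ z * (deriv χ ((z.1 - Y z.2) / ε) / ε) * (Q z - deriv Y z.2 * P z)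
      = ∫ η, deriv χ η * ∫ t in Ioi (0:ℝ), shiftFlux P Q ψ Y (ε * η) t := by
  have hC : 0 ≤ C := (abs_nonneg _).trans (hPb 0)
  have hL : (0:ℝ) ≤ L := L.2
  obtain ⟨M, hM, hMb⟩ := hψ.bound
  obtain ⟨B, hB, hBb⟩ := hχ.deriv_bdd
  obtain ⟨N, hN, hNb⟩ := shiftFlux_bdd hPb hQb hψ hY
  obtain ⟨T, hT, hTb⟩ := exists_time hψ
  have m1 := hψ.cont.measurable
  have m2 := hY.continuous.measurable
  have m3 := measurable_deriv Y
  have m4 := measurable_deriv χ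
  have hi : Integrable (fun z : ℝ × ℝ => ψ z * (deriv χ ((z.1 - Y z.2) / ε) / ε)
      * (Q z - deriv Y z.2 * P z)) := by
    refine intg (by fun_prop) (tsupport ψ) hψ.2.1.isClosed.measurableSet hψ.2.1.measure_lt_top
      (M * (B / ε) * (C + L * C)) (fun z _ => ?_) (fun z hz => by simp [hψ.zero hz])
    have h3 : |Q z - deriv Y z.2 * P z| ≤ C + L * C := by
      refine (abs_sub _ _).trans ?_
      rw [abs_mul]
      exact add_le_add (hQb _) (mul_le_mul (deriv_Y_abs hY _) (hPb _) (abs_nonneg _) hL)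
    have h4 : |deriv χ ((z.1 - Y z.2) / ε) / ε| ≤ B / ε := by
      rw [abs_div, abs_of_pos hε]
      gcongr
      exact hBb _
    rw [abs_mul, abs_mul]
    gcongr
    exact (hMb z).1
  refine ⟨hi.integrableOn, ?_⟩
  rw [integral_HP hi.integrableOn]
  have h1 : ∀ t : ℝ, ∫ x, ψ (x, t) * (deriv χ ((x - Y t) / ε) / ε)
      * (Q (x, t) - deriv Y t * P (x, t)) = ∫ η, deriv χ η * shiftFlux P Q ψ Y (ε * η) t := by
    intro t
    set k : ℝ → ℝ := fun x => ψ (x, t) * (deriv χ ((x - Y t) / ε) / ε)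
      * (Q (x, t) - deriv Y t * P (x, t)) with hk
    have h2 : ∫ x, k x = ε * ∫ η, k (ε * η + Y t) := by
      have h3 := Measure.integral_comp_mul_left (fun x => k (x + Y t)) ε
      rw [integral_add_right_eq_self k (Y t), smul_eq_mul, abs_of_pos (inv_pos.2 hε)] at h3
      rw [h3, mul_inv_cancel_left₀ hε.ne']
    change ∫ x, k x = _
    rw [h2, ← integral_const_mul]
    refine integral_congr_ae (Eventually.of_forall fun η => ?_)
    simp only [hk, shiftFlux]
    rw [add_sub_cancel_right, mul_div_cancel_left₀ _ hε.ne', add_comm (ε * η)]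
    field_simp
  simp_rw [h1, ← integral_const_mul]
  refine integral_integral_swap ?_
  have mS := shiftFlux_meas hP hQ hψ hY
  refine intg (μ := (volume.restrict (Ioi (0:ℝ))).prod volume) ?_ (Iio T ×ˢ Icc (-2:ℝ) 2)
    (measurableSet_Iio.prod measurableSet_Icc) ?_ (B * N) (fun p _ => ?_) (fun p hp => ?_)
  · have : Measurable fun p : ℝ × ℝ => shiftFlux P Q ψ Y (ε * p.2) p.1 :=
      mS.comp (by fun_prop : Measurable fun p : ℝ × ℝ => (ε * p.2, p.1))
    exact (m4.comp measurable_snd).mul this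
  · rw [Measure.prod_prod]
    rw [Measure.restrict_apply measurableSet_Iio, inter_comm, Ioi_inter_Iio]
    exact ENNReal.mul_lt_top (by simp) (by simp)
  · simp only [Function.uncurry, abs_mul]
    exact mul_le_mul (hBb _) (hNb _ _) (abs_nonneg _) hB
  · rw [mem_prod, not_and_or] at hp
    rcases hp with hp | hp
    · simp [Function.uncurry, shiftFlux, hTb _ _ (not_lt.1 hp)]
    · have : deriv χ p.2 = 0 := hχ.deriv_far _ (by
        by_contra h
        exact hp (abs_le.1 (not_lt.1 h)))
      simp [Function.uncurry, this]

/-- One-sided limit of the interface flux, in terms of the traces `P₁`, `Q₁`. -/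
lemma shiftFlux_lim (hP : Measurable P) (hQ : Measurable Q) (hPb : ∀ z, |P z| ≤ C)
    (hQb : ∀ z, |Q z| ≤ C) (hψ : TestFun ψ) (hY : LipschitzWith L Y) {P₁ Q₁ : ℝ → ℝ}
    (hP₁ : Measurable P₁) (hQ₁ : Measurable Q₁) (hP₁b : ∀ t, |P₁ t| ≤ C) (hQ₁b : ∀ t, |Q₁ t| ≤ C)
    {l : Filter ℝ} [l.IsCountablyGenerated] (hl : l ≤ 𝓝 0)
    (tP : ∀ T > 0, Tendsto (fun ξ => ∫ t in Ioo 0 T, |P (Y t + ξ, t) - P₁ t|) l (𝓝 0))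
    (tQ : ∀ T > 0, Tendsto (fun ξ => ∫ t in Ioo 0 T, |Q (Y t + ξ, t) - Q₁ t|) l (𝓝 0)) :
    Tendsto (fun ξ => ∫ t in Ioi (0:ℝ), shiftFlux P Q ψ Y ξ t) l
      (𝓝 (∫ t in Ioi (0:ℝ), ψ (Y t, t) * (Q₁ t - deriv Y t * P₁ t))) := by
  have hC : 0 ≤ C := (abs_nonneg _).trans (hPb 0)
  have hL : (0:ℝ) ≤ L := L.2
  obtain ⟨M, hM, hMb⟩ := hψ.bound
  obtain ⟨T, hT, hTb⟩ := exists_time hψ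
  have m1 := hψ.cont.measurable
  have m2 := hY.continuous.measurable
  have m3 := measurable_deriv Y
  have hcut : ∀ F : ℝ → ℝ, (∀ t, T ≤ t → F t = 0) →
      ∫ t in Ioi (0:ℝ), F t = ∫ t in Ioo 0 T, F t := by
    intro F hF
    refine setIntegral_eq_of_subset_of_forall_sdiff_eq_zero measurableSet_Ioi
      Ioo_subset_Ioi_self fun t ht => hF t ?_
    by_contra h
    exact ht.2 ⟨ht.1, not_le.1 h⟩
  have hfin : volume (Ioo 0 T) < ⊤ := by simp
  have ib : ∀ {F : ℝ → ℝ} {N : ℝ}, Measurable F → (∀ t, |F t| ≤ N) → IntegrableOn F (Ioo 0 T) := by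
    intro F N hF hFb
    exact Measure.integrableOn_of_bounded hfin.ne hF.aestronglyMeasurable
      (Eventually.of_forall hFb)
  have tψ : Tendsto (fun ξ => ∫ t in Ioo 0 T, |ψ (Y t + ξ, t) - ψ (Y t, t)|) l (𝓝 0) := by
    have h0 : ∫ t in Ioo 0 T, (0:ℝ) = 0 := by simp
    suffices h : Tendsto (fun ξ => ∫ t in Ioo 0 T, |ψ (Y t + ξ, t) - ψ (Y t, t)|) l
        (𝓝 (∫ t in Ioo 0 T, (0:ℝ))) by rwa [h0] at h
    refine tendsto_integral_filter_of_dominated_convergence (l := l) (fun _ => M + M)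
      (Eventually.of_forall fun ξ => ?_) (Eventually.of_forall fun ξ => Eventually.of_forall
        fun t => ?_) (integrableOn_const hfin.ne) (Eventually.of_forall fun t => ?_)
    · exact (by fun_prop : Measurable fun t => |ψ (Y t + ξ, t) - ψ (Y t, t)|).aestronglyMeasurable
    · rw [Real.norm_eq_abs, abs_abs]
      exact (abs_sub _ _).trans (add_le_add (hMb _).1 (hMb _).1)
    · have h1 : Continuous fun ξ => |ψ (Y t + ξ, t) - ψ (Y t, t)| := by
        have := hψ.cont
        fun_prop
      have h2 := (h1.tendsto 0).mono_left hl
      simpa using h2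
  have t0 : Tendsto (fun ξ => (C + L * C) * (∫ t in Ioo 0 T, |ψ (Y t + ξ, t) - ψ (Y t, t)|)
      + (M * (∫ t in Ioo 0 T, |Q (Y t + ξ, t) - Q₁ t|)
        + M * L * ∫ t in Ioo 0 T, |P (Y t + ξ, t) - P₁ t|)) l (𝓝 0) := by
    simpa using (tψ.const_mul (C + L * C)).add (((tQ T hT).const_mul M).add
      ((tP T hT).const_mul (M * L)))
  rw [tendsto_iff_dist_tendsto_zero]
  refine squeeze_zero (fun _ => dist_nonneg) (fun ξ => ?_) t0
  rw [hcut _ (fun t ht => by simp [shiftFlux, hTb _ t ht]),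
    hcut _ (fun t ht => by simp [hTb _ t ht]), Real.dist_eq]
  obtain ⟨N, hN, hNb⟩ := shiftFlux_bdd hPb hQb hψ hY
  have mS : Measurable fun t => shiftFlux P Q ψ Y ξ t :=
    (shiftFlux_meas hP hQ hψ hY).comp (by fun_prop : Measurable fun t : ℝ => (ξ, t))
  have hD : ∀ t, |Q₁ t - deriv Y t * P₁ t| ≤ C + L * C := fun t => by
    refine (abs_sub _ _).trans ?_
    rw [abs_mul]
    exact add_le_add (hQ₁b _) (mul_le_mul (deriv_Y_abs hY _) (hP₁b _) (abs_nonneg _) hL)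
  have i1 : IntegrableOn (fun t => shiftFlux P Q ψ Y ξ t) (Ioo 0 T) := ib mS (hNb ξ)
  have i2 : IntegrableOn (fun t => ψ (Y t, t) * (Q₁ t - deriv Y t * P₁ t)) (Ioo 0 T) := by
    refine ib (N := M * (C + L * C)) (by fun_prop) fun t => ?_
    rw [abs_mul]
    exact mul_le_mul (hMb _).1 (hD t) (abs_nonneg _) hM
  have j1 : IntegrableOn (fun t => |ψ (Y t + ξ, t) - ψ (Y t, t)|) (Ioo 0 T) :=
    ib (N := M + M) (by fun_prop) fun t => by
      rw [abs_abs]; exact (abs_sub _ _).trans (add_le_add (hMb _).1 (hMb _).1)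
  have j2 : IntegrableOn (fun t => |Q (Y t + ξ, t) - Q₁ t|) (Ioo 0 T) :=
    ib (N := C + C) (by fun_prop) fun t => by
      rw [abs_abs]; exact (abs_sub _ _).trans (add_le_add (hQb _) (hQ₁b _))
  have j3 : IntegrableOn (fun t => |P (Y t + ξ, t) - P₁ t|) (Ioo 0 T) :=
    ib (N := C + C) (by fun_prop) fun t => by
      rw [abs_abs]; exact (abs_sub _ _).trans (add_le_add (hPb _) (hP₁b _))
  rw [← integral_sub i1 i2, ← integral_const_mul, ← integral_const_mul, ← integral_const_mul,
    ← integral_add (j2.const_mul _) (j3.const_mul _)]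
  have j23 : IntegrableOn (fun t => M * |Q (Y t + ξ, t) - Q₁ t|
      + M * L * |P (Y t + ξ, t) - P₁ t|) (Ioo 0 T) := (j2.const_mul _).add (j3.const_mul _)
  rw [← integral_add (j1.const_mul _) j23, ← Real.norm_eq_abs]
  refine norm_integral_le_of_norm_le ((j1.const_mul _).add j23) (Eventually.of_forall fun t => ?_)
  have e : shiftFlux P Q ψ Y ξ t - ψ (Y t, t) * (Q₁ t - deriv Y t * P₁ t)
      = (Q₁ t - deriv Y t * P₁ t) * (ψ (Y t + ξ, t) - ψ (Y t, t))
        + ψ (Y t + ξ, t) * ((Q (Y t + ξ, t) - Q₁ t) - deriv Y t * (P (Y t + ξ, t) - P₁ t)) := by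
    unfold shiftFlux; ring
  rw [e, Real.norm_eq_abs]
  refine (abs_add_le _ _).trans ?_
  rw [abs_mul, abs_mul]
  refine add_le_add (mul_le_mul_of_nonneg_right (hD t) (abs_nonneg _)) ?_
  calc _ ≤ M * (|Q (Y t + ξ, t) - Q₁ t| + L * |P (Y t + ξ, t) - P₁ t|) := by
        refine mul_le_mul (hMb _).1 ((abs_sub _ _).trans ?_) (abs_nonneg _) hM
        rw [abs_mul]
        exact add_le_add le_rfl (mul_le_mul_of_nonneg_right (deriv_Y_abs hY t) (abs_nonneg _))
    _ = _ := by ring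

end

section
variable {P Q ψ : ℝ × ℝ → ℝ} {χ Y : ℝ → ℝ} {C : ℝ} {L : NNReal}

lemma Profile.tendsto_one (hχ : Profile χ) {a : ℝ} (ha : a ≠ 0) :
    Tendsto (fun ε => χ (a / ε)) (𝓝[>] 0) (𝓝 1) := by
  refine tendsto_const_nhds.congr' ?_
  have h1 : ∀ᶠ ε : ℝ in 𝓝[>] 0, ε < |a| / 2 :=
    (eventually_lt_nhds (by positivity)).filter_mono nhdsWithin_le_nhds
  filter_upwards [h1, self_mem_nhdsWithin] with ε h1 h2
  refine (hχ.far _ ?_).symm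
  have h3 : (0:ℝ) < ε := h2
  rw [abs_div, abs_of_pos h3, le_div_iff₀ h3]
  linarith

/-- The interface is a null set of the plane. -/
lemma ae_off_curve (hY : LipschitzWith L Y) : ∀ᵐ z : ℝ × ℝ, z.1 - Y z.2 ≠ 0 := by
  have hm : MeasurableSet {z : ℝ × ℝ | z.1 - Y z.2 = 0} :=
    (isClosed_eq (continuous_fst.sub (hY.continuous.comp continuous_snd))
      continuous_const).measurableSet
  rw [ae_iff]
  simp only [ne_eq, not_not]
  rw [Measure.volume_eq_prod, Measure.prod_apply_symm hm]
  refine (lintegral_congr fun t => ?_).trans lintegral_zero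
  have : (fun x => (x, t)) ⁻¹' {z : ℝ × ℝ | z.1 - Y z.2 = 0} = {Y t} := by
    ext x; simp [sub_eq_zero]
  rw [this]; simp

/-- An inequality valid off the curve `x = Y(t)` extends across it, at the price of the jump of
the normal flux `Q - Y' P` between its one-sided traces. -/
lemma interface_ineq (hY : LipschitzWith L Y) {w : ℝ → ℝ}
    (hP : Measurable P) (hQ : Measurable Q) (hw : Measurable w)
    (hPb : ∀ z, |P z| ≤ C) (hQb : ∀ z, |Q z| ≤ C) (hwb : ∀ x, |w x| ≤ C)
    (H : ∀ φ, TestFun φ → Disjoint (tsupport φ) {p | p.1 = Y p.2} → 0 ≤ weakForm P Q w φ)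
    (hψ : TestFun ψ) {Jm Jp : ℝ}
    (hJm : Tendsto (fun ξ => ∫ t in Ioi (0:ℝ), shiftFlux P Q ψ Y ξ t) (𝓝[<] 0) (𝓝 Jm))
    (hJp : Tendsto (fun ξ => ∫ t in Ioi (0:ℝ), shiftFlux P Q ψ Y ξ t) (𝓝[>] 0) (𝓝 Jp)) :
    0 ≤ weakForm P Q w ψ + (Jp - Jm) := by
  obtain ⟨χ, hχ⟩ := exists_profile
  obtain ⟨N, hN, hNb⟩ := shiftFlux_bdd hPb hQb hψ hY
  obtain ⟨T, hT, hTb⟩ := exists_time hψ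
  have hC : 0 ≤ C := (abs_nonneg _).trans (hPb 0)
  have mχ := hχ.smooth.continuous.measurable
  have mY := hY.continuous.measurable
  have mψ := hψ.cont.measurable
  have m2 := hψ.cont_pT.measurable
  have m3 := hψ.cont_pX.measurable
  set J : ℝ → ℝ := fun ξ => ∫ t in Ioi (0:ℝ), shiftFlux P Q ψ Y ξ t with hJ
  have mJ : Measurable J :=
    ((shiftFlux_meas hP hQ hψ hY).stronglyMeasurable.integral_prod_right).measurable
  have bJ : ∀ ξ, |J ξ| ≤ N * T := by
    intro ξ
    have e : J ξ = ∫ t in Ioo 0 T, shiftFlux P Q ψ Y ξ t := by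
      refine setIntegral_eq_of_subset_of_forall_sdiff_eq_zero measurableSet_Ioi
        Ioo_subset_Ioi_self fun t ht => ?_
      have : T ≤ t := by
        by_contra h
        exact ht.2 ⟨ht.1, not_le.1 h⟩
      simp [shiftFlux, hTb _ t this]
    rw [e]
    have := norm_setIntegral_le_of_norm_le_const (μ := volume) (s := Ioo 0 T)
      (f := shiftFlux P Q ψ Y ξ) (C := N) (by simp) (fun t _ => hNb ξ t)
    simpa [Measure.real, hT.le] using this
  have iV : Integrable fun z => P z * pT ψ z + Q z * pX ψ z := hψ.integrable_pair hP hQ hPb hQb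
  have bχ : ∀ x, |χ x| ≤ 1 := fun x => by
    rw [abs_of_nonneg (hχ.mem _).1]; exact (hχ.mem _).2
  have mA : ∀ ε, Measurable fun z : ℝ × ℝ =>
      (P z * pT ψ z + Q z * pX ψ z) * χ ((z.1 - Y z.2) / ε) := by
    intro ε; fun_prop
  have lim1 : Tendsto (fun ε => ∫ z in HP, (P z * pT ψ z + Q z * pX ψ z) * χ ((z.1 - Y z.2) / ε))
      (𝓝[>] 0) (𝓝 (∫ z in HP, (P z * pT ψ z + Q z * pX ψ z))) := by
    refine tendsto_integral_filter_of_dominated_convergence (l := 𝓝[>] 0)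
      (fun z => |P z * pT ψ z + Q z * pX ψ z|)
      (Eventually.of_forall fun ε => (mA ε).aestronglyMeasurable)
      (Eventually.of_forall fun ε => Eventually.of_forall fun z => ?_) iV.abs.integrableOn
      (ae_restrict_of_ae ?_)
    · rw [Real.norm_eq_abs, abs_mul]
      exact mul_le_of_le_one_right (abs_nonneg _) (bχ _)
    · filter_upwards [ae_off_curve hY] with z hz
      simpa using tendsto_const_nhds.mul (hχ.tendsto_one hz)
  have mψ0 : Measurable fun x : ℝ => ψ (x, 0) :=
    (hψ.cont.comp (by fun_prop : Continuous fun x : ℝ => (x, (0:ℝ)))).measurable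
  have iψ0 : Integrable fun x : ℝ => C * ψ (x, 0) := by
    refine (Continuous.integrable_of_hasCompactSupport
      (hψ.cont.comp (by fun_prop : Continuous fun x : ℝ => (x, (0:ℝ)))) ?_).const_mul C
    refine HasCompactSupport.intro (hψ.2.1.image continuous_fst) fun x hx => ?_
    by_contra h
    exact hx ⟨(x, 0), subset_tsupport _ h, rfl⟩
  have lim2 : Tendsto (fun ε => ∫ x, w x * (ψ (x, 0) * χ ((x - Y 0) / ε))) (𝓝[>] 0)
      (𝓝 (∫ x, w x * ψ (x, 0))) := by
    refine tendsto_integral_filter_of_dominated_convergence (l := 𝓝[>] 0)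
      (fun x => C * ψ (x, 0))
      (Eventually.of_forall fun ε => ?_) (Eventually.of_forall fun ε => Eventually.of_forall
        fun x => ?_) iψ0 ?_
    · have : Measurable fun x => w x * (ψ (x, 0) * χ ((x - Y 0) / ε)) :=
        hw.mul (mψ0.mul (mχ.comp ((measurable_id.sub_const (Y 0)).div_const ε)))
      exact this.aestronglyMeasurable
    · rw [Real.norm_eq_abs, abs_mul, abs_mul, abs_of_nonneg (hψ.2.2 _)]
      exact mul_le_mul (hwb x) (mul_le_of_le_one_right (hψ.2.2 _) (bχ _))
        (mul_nonneg (hψ.2.2 _) (abs_nonneg _)) hC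
    · have : ∀ᵐ x : ℝ, x ≠ Y 0 := by simp [ae_iff]
      filter_upwards [this] with x hx
      simpa using tendsto_const_nhds.mul (tendsto_const_nhds.mul
        (hχ.tendsto_one (sub_ne_zero.2 hx)))
  have iχ : Integrable (deriv χ) :=
    (hχ.smooth.continuous_deriv (by simp)).integrable_of_hasCompactSupport hχ.deriv_supp
  have lim3 : Tendsto (fun ε => ∫ η, deriv χ η * J (ε * η)) (𝓝[>] 0)
      (𝓝 (∫ η, deriv χ η * (if 0 < η then Jp else Jm))) := by
    refine tendsto_integral_filter_of_dominated_convergence (l := 𝓝[>] 0)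
      (fun η => |deriv χ η| * (N * T))
      (Eventually.of_forall fun ε => ?_) (Eventually.of_forall fun ε => Eventually.of_forall
        fun η => ?_) (iχ.abs.mul_const _) ?_
    · exact ((measurable_deriv χ).mul
        (mJ.comp (measurable_const_mul ε))).aestronglyMeasurable
    · rw [Real.norm_eq_abs, abs_mul]
      exact mul_le_mul_of_nonneg_left (bJ _) (abs_nonneg _)
    · have : ∀ᵐ η : ℝ, η ≠ 0 := by simp [ae_iff]
      filter_upwards [this] with η hη
      refine tendsto_const_nhds.mul ?_
      have hcont : Tendsto (fun ε : ℝ => ε * η) (𝓝[>] 0) (𝓝 0) := by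
        have : Tendsto (fun ε : ℝ => ε * η) (𝓝 0) (𝓝 (0 * η)) :=
          (continuous_mul_const η).tendsto 0
        rw [zero_mul] at this
        exact this.mono_left nhdsWithin_le_nhds
      rcases lt_or_gt_of_ne hη with h | h
      · rw [if_neg h.le.not_gt]
        refine hJm.comp (tendsto_nhdsWithin_iff.2 ⟨hcont, ?_⟩)
        filter_upwards [self_mem_nhdsWithin] with ε hε
        exact mul_neg_of_pos_of_neg hε h
      · rw [if_pos h]
        refine hJp.comp (tendsto_nhdsWithin_iff.2 ⟨hcont, ?_⟩)
        filter_upwards [self_mem_nhdsWithin] with ε hε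
        exact mul_pos hε h
  -- The profile has total derivative `-1` on the left half-line and `1` on the right one.
  have e3 : ∫ η, deriv χ η * (if 0 < η then Jp else Jm) = Jp - Jm := by
    have i3 : Integrable fun η => deriv χ η * (if 0 < η then Jp else Jm) := by
      refine Integrable.mul_bdd (c := |Jp| + |Jm|) iχ
        (Measurable.ite measurableSet_Ioi measurable_const measurable_const).aestronglyMeasurable
        (Eventually.of_forall fun η => ?_)
      rw [Real.norm_eq_abs]
      split_ifs
      · linarith [abs_nonneg Jm]
      · linarith [abs_nonneg Jp]
    rw [← intervalIntegral.integral_Iic_add_Ioi (b := 0) i3.integrableOn i3.integrableOn]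
    have a1 : ∫ η in Iic (0:ℝ), deriv χ η * (if 0 < η then Jp else Jm)
        = ∫ η in Iic (0:ℝ), deriv χ η * Jm :=
      setIntegral_congr_fun measurableSet_Iic fun η hη => by
        simp only [if_neg (not_lt.2 (mem_Iic.1 hη))]
    have a2 : ∫ η in Ioi (0:ℝ), deriv χ η * (if 0 < η then Jp else Jm)
        = ∫ η in Ioi (0:ℝ), deriv χ η * Jp :=
      setIntegral_congr_fun measurableSet_Ioi fun η hη => by
        simp only [if_pos (mem_Ioi.1 hη)]
    rw [a1, a2, integral_mul_const, integral_mul_const, hχ.left, hχ.right]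
    ring
  rw [e3] at lim3
  have lim := (lim1.add lim3).add lim2
  have key : 0 ≤ (∫ z in HP, (P z * pT ψ z + Q z * pX ψ z)) + (Jp - Jm)
      + ∫ x, w x * ψ (x, 0) := by
    refine ge_of_tendsto lim ?_
    filter_upwards [self_mem_nhdsWithin] with ε hε
    have h1 := cutoff_ineq hY hP hQ hw hPb hQb hwb H hψ hχ hε
    obtain ⟨i2, h2⟩ := layer_eq hP hQ hPb hQb hψ hY hχ hε
    have i1 : IntegrableOn (fun z : ℝ × ℝ =>
        (P z * pT ψ z + Q z * pX ψ z) * χ ((z.1 - Y z.2) / ε)) HP := by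
      refine (iV.mul_bdd (c := 1) ?_ (Eventually.of_forall fun z => bχ _)).integrableOn
      exact (by fun_prop : Measurable fun z : ℝ × ℝ =>
        χ ((z.1 - Y z.2) / ε)).aestronglyMeasurable
    have h3 : ∫ z in HP, cutInt P Q ψ χ ε Y (deriv Y) z
        = (∫ z in HP, (P z * pT ψ z + Q z * pX ψ z) * χ ((z.1 - Y z.2) / ε))
          + ∫ η, deriv χ η * J (ε * η) := by
      rw [← h2, ← integral_add i1 i2]
      rfl
    rwa [h3] at h1
  unfold weakForm
  linarith

end

/-! ### The interface term of two germ solutions -/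

/-- Projection onto `[0,1]`, used to replace a trace by a version with values in `[0,1]`. -/
def clamp (a : ℝ) : ℝ := max 0 (min 1 a)

lemma clamp_mem (a : ℝ) : clamp a ∈ Icc (0:ℝ) 1 :=
  ⟨le_max_left _ _, max_le zero_le_one (min_le_left _ _)⟩

lemma clamp_eq {a : ℝ} (ha : a ∈ Icc (0:ℝ) 1) : clamp a = a := by
  rw [clamp, min_eq_right ha.2, max_eq_right ha.1]

lemma clamp_meas : Measurable clamp := by unfold clamp; fun_prop

/-- The traces along `y` may be computed along the extended curve `Y` and with values clamped to
`[0,1]`, since only positive times matter. -/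
lemma trace_shift {Y y : ℝ → ℝ} (hyY : EqOn y Y (Ioi 0)) {ρ : ℝ → ℝ → ℝ} {ρ₁ : ℝ → ℝ}
    (h01 : ∀ᵐ t ∂(volume.restrict (Ioi (0:ℝ))), ρ₁ t ∈ Icc (0:ℝ) 1) (T ξ : ℝ) :
    ∫ t in Ioo 0 T, |ρ (y t + ξ) t - ρ₁ t| = ∫ t in Ioo 0 T, |ρ (Y t + ξ) t - clamp (ρ₁ t)| := by
  refine integral_congr_ae ?_
  filter_upwards [ae_restrict_of_ae_restrict_of_subset (Ioo_subset_Ioi_self) h01,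
    ae_restrict_mem measurableSet_Ioo] with t h1 h2
  rw [clamp_eq h1, hyY h2.1]

lemma HasTraces.right {Y y : ℝ → ℝ} (hyY : EqOn y Y (Ioi 0)) {ρ : ℝ → ℝ → ℝ} {ρm ρp : ℝ → ℝ}
    (h : HasTraces y ρ ρm ρp) (h01 : ∀ᵐ t ∂(volume.restrict (Ioi (0:ℝ))), ρp t ∈ Icc (0:ℝ) 1) :
    ∀ T > 0, Tendsto (fun ξ => ∫ t in Ioo 0 T, |ρ (Y t + ξ) t - clamp (ρp t)|) (𝓝[>] 0) (𝓝 0) :=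
  fun T hT => ((h T hT).2).congr fun ξ => trace_shift hyY h01 T ξ

lemma HasTraces.left {Y y : ℝ → ℝ} (hyY : EqOn y Y (Ioi 0)) {ρ : ℝ → ℝ → ℝ} {ρm ρp : ℝ → ℝ}
    (h : HasTraces y ρ ρm ρp) (h01 : ∀ᵐ t ∂(volume.restrict (Ioi (0:ℝ))), ρm t ∈ Icc (0:ℝ) 1) :
    ∀ T > 0, Tendsto (fun ξ => ∫ t in Ioo 0 T, |ρ (Y t + ξ) t - clamp (ρm t)|)
      (𝓝[<] 0) (𝓝 0) := by
  intro T hT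
  have hneg : Tendsto (fun ξ : ℝ => -ξ) (𝓝[<] 0) (𝓝[>] 0) := by
    refine tendsto_nhdsWithin_iff.2 ⟨?_, ?_⟩
    · have := (continuous_neg (G := ℝ)).tendsto 0
      rw [neg_zero] at this
      exact this.mono_left nhdsWithin_le_nhds
    · filter_upwards [self_mem_nhdsWithin] with ξ hξ
      exact mem_Ioi.2 (neg_pos.2 (mem_Iio.1 hξ))
  refine (((h T hT).1).comp hneg).congr fun ξ => ?_
  simp only [Function.comp_def, sub_neg_eq_add]
  exact trace_shift hyY h01 T ξ

section
variable {g Y : ℝ → ℝ} {L : NNReal} {ρ σ : ℝ → ℝ → ℝ} {ψ : ℝ × ℝ → ℝ}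

/-- The normal entropy flux between `ρ` and `σ` through the shifted interface converges to the one
between their traces. -/
lemma pair_lim (hg : LipschitzWith L g) (hY : LipschitzWith L Y)
    (hρ : Measurable fun p : ℝ × ℝ => ρ p.1 p.2) (hρ01 : ∀ x t, ρ x t ∈ Icc (0:ℝ) 1)
    (hσ : Measurable fun p : ℝ × ℝ => σ p.1 p.2) (hσ01 : ∀ x t, σ x t ∈ Icc (0:ℝ) 1)
    (hψ : TestFun ψ) {ρ₁ σ₁ : ℝ → ℝ} (hρ₁ : Measurable ρ₁) (hσ₁ : Measurable σ₁)
    (hρ₁m : ∀ t, ρ₁ t ∈ Icc (0:ℝ) 1) (hσ₁m : ∀ t, σ₁ t ∈ Icc (0:ℝ) 1)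
    {l : Filter ℝ} [l.IsCountablyGenerated] (hl : l ≤ 𝓝 0)
    (tρ : ∀ T > 0, Tendsto (fun ξ => ∫ t in Ioo 0 T, |ρ (Y t + ξ) t - ρ₁ t|) l (𝓝 0))
    (tσ : ∀ T > 0, Tendsto (fun ξ => ∫ t in Ioo 0 T, |σ (Y t + ξ) t - σ₁ t|) l (𝓝 0)) :
    Tendsto (fun ξ => ∫ t in Ioi (0:ℝ), shiftFlux (fun z => |ρ z.1 z.2 - σ z.1 z.2|)
        (fun z => EE g (ρ z.1 z.2) (σ z.1 z.2)) ψ Y ξ t) l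
      (𝓝 (∫ t in Ioi (0:ℝ), ψ (Y t, t) * (EE g (ρ₁ t) (σ₁ t) - deriv Y t * |ρ₁ t - σ₁ t|))) := by
  have hL : (0:ℝ) ≤ L := L.2
  have hEb : ∀ {a b : ℝ}, a ∈ Icc (0:ℝ) 1 → b ∈ Icc (0:ℝ) 1 → |EE g a b| ≤ 1 + L := fun ha hb =>
    ((EE_abs hg _ _).trans (mul_le_of_le_one_right hL (sub_abs_le_one ha hb))).trans (by linarith)
  have hAb : ∀ {a b : ℝ}, a ∈ Icc (0:ℝ) 1 → b ∈ Icc (0:ℝ) 1 → |(|a - b|)| ≤ 1 + L :=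
    fun ha hb => by rw [abs_abs]; exact (sub_abs_le_one ha hb).trans (by linarith)
  have mY := hY.continuous.measurable
  have msh : ∀ {v : ℝ → ℝ → ℝ} (_ : Measurable fun p : ℝ × ℝ => v p.1 p.2) (ξ : ℝ),
      Measurable fun t => v (Y t + ξ) t := fun hv ξ =>
    hv.comp (by fun_prop : Measurable fun t => (Y t + ξ, t))
  have ii : ∀ {F : ℝ → ℝ} {N : ℝ} (T : ℝ), Measurable F → (∀ t, |F t| ≤ N) →
      IntegrableOn F (Ioo 0 T) := fun T hF hFb =>
    Measure.integrableOn_of_bounded (by simp) hF.aestronglyMeasurable (Eventually.of_forall hFb)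
  have iρ : ∀ T ξ, IntegrableOn (fun t => |ρ (Y t + ξ) t - ρ₁ t|) (Ioo 0 T) := fun T ξ => by
    have := msh hρ ξ
    exact ii (N := 1) T (by fun_prop) fun t => by
      rw [abs_abs]; exact sub_abs_le_one (hρ01 _ _) (hρ₁m t)
  have iσ : ∀ T ξ, IntegrableOn (fun t => |σ (Y t + ξ) t - σ₁ t|) (Ioo 0 T) := fun T ξ => by
    have := msh hσ ξ
    exact ii (N := 1) T (by fun_prop) fun t => by
      rw [abs_abs]; exact sub_abs_le_one (hσ01 _ _) (hσ₁m t)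
  refine shiftFlux_lim (C := 1 + L) (by fun_prop) (EE_meas hg hρ hσ)
    (fun z => hAb (hρ01 _ _) (hσ01 _ _)) (fun z => hEb (hρ01 _ _) (hσ01 _ _)) hψ hY
    (P₁ := fun t => |ρ₁ t - σ₁ t|) (Q₁ := fun t => EE g (ρ₁ t) (σ₁ t)) (by fun_prop)
    (EE_meas hg hρ₁ hσ₁) (fun t => hAb (hρ₁m t) (hσ₁m t)) (fun t => hEb (hρ₁m t) (hσ₁m t)) hl
    (fun T hT => ?_) (fun T hT => ?_)
  · have ht := (tρ T hT).add (tσ T hT)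
    rw [add_zero] at ht
    refine squeeze_zero (fun ξ => integral_nonneg fun t => abs_nonneg _) (fun ξ => ?_) ht
    rw [← integral_add (iρ T ξ) (iσ T ξ)]
    refine integral_mono_of_nonneg (Eventually.of_forall fun t => abs_nonneg _)
      ((iρ T ξ).add (iσ T ξ)) (Eventually.of_forall fun t => ?_)
    refine (abs_abs_sub_abs_le_abs_sub _ _).trans ?_
    have : ρ (Y t + ξ) t - σ (Y t + ξ) t - (ρ₁ t - σ₁ t)
        = (ρ (Y t + ξ) t - ρ₁ t) - (σ (Y t + ξ) t - σ₁ t) := by ring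
    simp only
    rw [this]
    exact abs_sub _ _
  · have ht := ((tρ T hT).add (tσ T hT)).const_mul (2 * (L:ℝ))
    rw [add_zero, mul_zero] at ht
    refine squeeze_zero (fun ξ => integral_nonneg fun t => abs_nonneg _) (fun ξ => ?_) ht
    rw [← integral_add (iρ T ξ) (iσ T ξ), ← integral_const_mul]
    exact integral_mono_of_nonneg (Eventually.of_forall fun t => abs_nonneg _)
      (((iρ T ξ).add (iσ T ξ)).const_mul _) (Eventually.of_forall fun t => EE_diff hg _ _ _ _)

end

/-- The weak contraction inequality across the interface: the germs are dissipative up to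
`2 |q - r|`. -/
lemma weak_contraction {f g y Y q r ρo σo ρm ρp σm σp : ℝ → ℝ} {ρ σ : ℝ → ℝ → ℝ} {L : NNReal}
    (hf : ConcaveOn ℝ (Icc 0 1) f) (hg : LipschitzWith L g) (hfg : EqOn f g (Icc 0 1))
    (hY : LipschitzWith L Y) (hyY : EqOn y Y (Ioi 0))
    (hq : Measurable q) (hr : Measurable r)
    (hqr : ∀ᵐ t ∂(volume.restrict (Ioi (0:ℝ))), |q t - r t| ≤ 2 * L)
    (hρo : Measurable ρo) (hρo01 : ∀ x, ρo x ∈ Icc (0:ℝ) 1)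
    (hσo : Measurable σo) (hσo01 : ∀ x, σo x ∈ Icc (0:ℝ) 1)
    (hρ : Measurable fun p : ℝ × ℝ => ρ p.1 p.2) (hρ01 : ∀ x t, ρ x t ∈ Icc (0:ℝ) 1)
    (hσ : Measurable fun p : ℝ × ℝ => σ p.1 p.2) (hσ01 : ∀ x t, σ x t ∈ Icc (0:ℝ) 1)
    (hρm : Measurable ρm) (hρp : Measurable ρp) (hσm : Measurable σm) (hσp : Measurable σp)
    (hρs : IsGermSol f ρo y q ρ ρm ρp) (hσs : IsGermSol f σo y r σ σm σp)
    {ψ : ℝ × ℝ → ℝ} (hψ : TestFun ψ) :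
    0 ≤ weakForm (fun z => |ρ z.1 z.2 - σ z.1 z.2|) (fun z => EE g (ρ z.1 z.2) (σ z.1 z.2))
        (fun x => |ρo x - σo x|) ψ
      + 2 * ∫ t in Ioi (0:ℝ), ψ (Y t, t) * |q t - r t| := by
  have hL : (0:ℝ) ≤ L := L.2
  set P : ℝ × ℝ → ℝ := fun z => |ρ z.1 z.2 - σ z.1 z.2| with hP
  set Q : ℝ × ℝ → ℝ := fun z => EE g (ρ z.1 z.2) (σ z.1 z.2) with hQ
  have mP : Measurable P := by fun_prop
  have mQ : Measurable Q := EE_meas hg hρ hσ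
  have hEb : ∀ {a b : ℝ}, a ∈ Icc (0:ℝ) 1 → b ∈ Icc (0:ℝ) 1 → |EE g a b| ≤ 1 + L := fun ha hb =>
    ((EE_abs hg _ _).trans (mul_le_of_le_one_right hL (sub_abs_le_one ha hb))).trans (by linarith)
  have hAb : ∀ {a b : ℝ}, a ∈ Icc (0:ℝ) 1 → b ∈ Icc (0:ℝ) 1 → |(|a - b|)| ≤ 1 + L :=
    fun ha hb => by rw [abs_abs]; exact (sub_abs_le_one ha hb).trans (by linarith)
  have hPb : ∀ z, |P z| ≤ 1 + L := fun z => hAb (hρ01 _ _) (hσ01 _ _)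
  have hQb : ∀ z, |Q z| ≤ 1 + L := fun z => hEb (hρ01 _ _) (hσ01 _ _)
  have hwb : ∀ x, |(|ρo x - σo x|)| ≤ 1 + L := fun x => hAb (hρo01 _) (hσo01 _)
  set S : Set (ℝ × ℝ) := {p | p.1 = Y p.2} with hS
  have hSc : IsClosed S := isClosed_eq continuous_fst (hY.continuous.comp continuous_snd)
  have hGS : Gam y ⊆ S := by
    rintro p ⟨t, ht, rfl⟩
    exact hyY ht
  have kρ := KE_of_sol hg hfg hρo hρo01 hρ hρ01 (S := S) fun κ hκ φ hφ hd =>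
    hρs.1 κ hκ φ hφ (hd.mono_right hGS)
  have kσ := KE_of_sol hg hfg hσo hσo01 hσ hσ01 (S := S) fun κ hκ φ hφ hd =>
    hσs.1 κ hκ φ hφ (hd.mono_right hGS)
  have mpos : MeasurableSet {z : ℝ × ℝ | 0 < z.2} := measurableSet_lt measurable_const measurable_snd
  have H : ∀ φ, TestFun φ → Disjoint (tsupport φ) {p | p.1 = Y p.2} →
      0 ≤ weakForm P Q (fun x => |ρo x - σo x|) φ := by
    intro φ hφ hd
    have h := doubling hg (Measurable.ite mpos hρ (hρo.comp measurable_fst))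
      (Measurable.ite mpos hσ (hσo.comp measurable_fst))
      (fun z => by split_ifs; exacts [hρ01 _ _, hρo01 _])
      (fun z => by split_ifs; exacts [hσ01 _ _, hσo01 _]) hSc kρ kσ hφ hd
    rw [weakForm, ← split_initial (w := fun x => |ρo x - σo x|) (by fun_prop) mP mQ hwb hPb hQb hφ
      (U := fun z => if 0 < z.2 then P z else |ρo z.1 - σo z.1|) (fun z => rfl)]
    refine h.trans (le_of_eq (integral_congr_ae (Eventually.of_forall fun z => ?_)))
    by_cases hz : 0 < z.2
    · simp [hz, P, Q]
    · simp [hz, Th]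
  have g1 : ∀ᵐ t ∂(volume.restrict (Ioi (0:ℝ))),
      (ρm t ∈ Icc (0:ℝ) 1 ∧ ρp t ∈ Icc (0:ℝ) 1) ∧ (σm t ∈ Icc (0:ℝ) 1 ∧ σp t ∈ Icc (0:ℝ) 1) := by
    filter_upwards [hρs.2.2, hσs.2.2] with t h1 h2
    exact ⟨⟨h1.1, h1.2.1⟩, h2.1, h2.2.1⟩
  have tp := pair_lim hg hY hρ hρ01 hσ hσ01 hψ (clamp_meas.comp hρp) (clamp_meas.comp hσp)
    (fun t => clamp_mem _) (fun t => clamp_mem _) (l := 𝓝[>] 0) nhdsWithin_le_nhds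
    (hρs.2.1.right hyY (g1.mono fun t h => h.1.2)) (hσs.2.1.right hyY (g1.mono fun t h => h.2.2))
  have tm := pair_lim hg hY hρ hρ01 hσ hσ01 hψ (clamp_meas.comp hρm) (clamp_meas.comp hσm)
    (fun t => clamp_mem _) (fun t => clamp_mem _) (l := 𝓝[<] 0) nhdsWithin_le_nhds
    (hρs.2.1.left hyY (g1.mono fun t h => h.1.1)) (hσs.2.1.left hyY (g1.mono fun t h => h.2.1))
  have key := interface_ineq hY mP mQ (by fun_prop) hPb hQb hwb H hψ tm tp
  refine key.trans (add_le_add le_rfl ?_)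
  obtain ⟨T, hT, hTb⟩ := exists_time hψ
  obtain ⟨M, hM, hMb⟩ := hψ.bound
  have mψ := hψ.cont.measurable
  have mY := hY.continuous.measurable
  have mdY := measurable_deriv Y
  have iψ : IntegrableOn (fun t => ψ (Y t, t)) (Ioi 0) := by
    refine intg (by fun_prop) (Iio T) measurableSet_Iio ?_ M (fun t _ => (hMb _).1)
      (fun t ht => hTb _ _ (not_lt.1 ht))
    rw [Measure.restrict_apply measurableSet_Iio, inter_comm, Ioi_inter_Iio]
    simp
  have iD : ∀ {ρ₁ σ₁ : ℝ → ℝ}, Measurable ρ₁ → Measurable σ₁ → (∀ t, ρ₁ t ∈ Icc (0:ℝ) 1) →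
      (∀ t, σ₁ t ∈ Icc (0:ℝ) 1) → IntegrableOn (fun t => ψ (Y t, t) *
        (EE g (ρ₁ t) (σ₁ t) - deriv Y t * |ρ₁ t - σ₁ t|)) (Ioi 0) := by
    intro ρ₁ σ₁ h1 h2 h3 h4
    have mE := EE_meas hg h1 h2
    refine Integrable.mul_bdd (c := 1 + L + L * (1 + L)) iψ
      (by fun_prop : Measurable fun t =>
        EE g (ρ₁ t) (σ₁ t) - deriv Y t * |ρ₁ t - σ₁ t|).aestronglyMeasurable
      (Eventually.of_forall fun t => ?_)
    refine (norm_sub_le _ _).trans (add_le_add (hEb (h3 t) (h4 t)) ?_)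
    rw [norm_mul]
    exact mul_le_mul (deriv_Y_abs hY t) (hAb (h3 t) (h4 t)) (norm_nonneg _) hL
  have iqr : IntegrableOn (fun t => ψ (Y t, t) * |q t - r t|) (Ioi 0) := by
    refine Integrable.mul_bdd (c := 2 * L) iψ
      (by fun_prop : Measurable fun t => |q t - r t|).aestronglyMeasurable ?_
    filter_upwards [hqr] with t ht
    rwa [norm_abs_eq_norm]
  rw [← integral_sub (iD (clamp_meas.comp hρp) (clamp_meas.comp hσp) (fun t => clamp_mem _)
    (fun t => clamp_mem _)) (iD (clamp_meas.comp hρm) (clamp_meas.comp hσm)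
    (fun t => clamp_mem _) (fun t => clamp_mem _)), ← integral_const_mul]
  refine integral_mono_ae ((iD (clamp_meas.comp hρp) (clamp_meas.comp hσp) (fun t => clamp_mem _)
    (fun t => clamp_mem _)).sub (iD (clamp_meas.comp hρm) (clamp_meas.comp hσm)
    (fun t => clamp_mem _) (fun t => clamp_mem _))) (iqr.const_mul 2) ?_
  filter_upwards [hρs.2.2, hσs.2.2, g1, ae_restrict_mem measurableSet_Ioi] with t h1 h2 h3 ht
  -- The two curves agree near `t > 0`, so the germ condition refers to the slope of `Y`.
  have hd : deriv y t = deriv Y t := by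
    refine Filter.EventuallyEq.deriv_eq ?_
    filter_upwards [isOpen_Ioi.mem_nhds ht] with s hs using hyY hs
  have hgerm := germ_ineq hf h1 h2
  rw [EFlx_eq hfg _ h3.1.2 h3.2.2, EFlx_eq hfg _ h3.1.1 h3.2.1, hd] at hgerm
  simp only [Function.comp_apply, clamp_eq h3.1.1, clamp_eq h3.1.2, clamp_eq h3.2.1,
    clamp_eq h3.2.2]
  have := mul_le_mul_of_nonneg_left hgerm (hψ.2.2 (Y t, t))
  linarith

/-! ### The cone-shaped test functions -/

/-- A smooth weight that decreases outwards along cones of speed `L`; it tends to `1` as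
`R → ∞`. -/
def cone (L R x t : ℝ) : ℝ := Real.smoothTransition (R - √(1 + x ^ 2) - L * t)

lemma cone_contDiff (L R : ℝ) :
    ContDiff ℝ (⊤ : ℕ∞) fun z : ℝ × ℝ => cone L R z.1 z.2 := by
  refine Real.smoothTransition.contDiff.comp ((contDiff_const.sub ?_).sub
    (contDiff_const.mul contDiff_snd))
  exact (contDiff_const.add (contDiff_fst.pow 2)).sqrt fun z => by positivity

lemma cone_meas (L R t : ℝ) : Measurable fun x => cone L R x t :=
  (Real.smoothTransition.continuous.comp (by fun_prop :
    Continuous fun x : ℝ => R - √(1 + x ^ 2) - L * t)).measurable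

lemma cone_nonneg (L R x t : ℝ) : 0 ≤ cone L R x t := Real.smoothTransition.nonneg _

lemma cone_le_one (L R x t : ℝ) : cone L R x t ≤ 1 := Real.smoothTransition.le_one _

lemma cone_zero {L R x t : ℝ} (hL : 0 ≤ L) (ht : -2 ≤ t) (hx : R + 2 * L ≤ |x|) :
    cone L R x t = 0 := by
  refine Real.smoothTransition.zero_of_nonpos ?_
  have : |x| ≤ √(1 + x ^ 2) := Real.abs_le_sqrt (by linarith)
  nlinarith

lemma cone_one {L R x t : ℝ} (h : 1 + √(1 + x ^ 2) + L * t ≤ R) : cone L R x t = 1 :=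
  Real.smoothTransition.one_of_one_le (by linarith)

/-- The time derivative of the weight dominates `L` times its space derivative. -/
lemma cone_deriv (L R x t : ℝ) : ∃ d e : ℝ, 0 ≤ d ∧ |e| ≤ 1 ∧
    HasDerivAt (fun s => cone L R x s) (-(d * L)) t ∧
    HasDerivAt (fun s => cone L R s t) (-(d * e)) x := by
  have hs : (0:ℝ) < 1 + x ^ 2 := by positivity
  have hS : HasDerivAt Real.smoothTransition
      (deriv Real.smoothTransition (R - √(1 + x ^ 2) - L * t)) (R - √(1 + x ^ 2) - L * t) :=
    ((Real.smoothTransition.contDiff (n := 1)).differentiable (by simp)).differentiableAt.hasDerivAt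
  refine ⟨deriv Real.smoothTransition (R - √(1 + x ^ 2) - L * t), x / √(1 + x ^ 2), Real.smoothTransition.monotone.deriv_nonneg, ?_,
    (hS.comp t (((hasDerivAt_id t).const_mul L).const_sub _)).congr_deriv (by simp), ?_⟩
  · rw [abs_div, abs_of_nonneg (Real.sqrt_nonneg _), div_le_one (Real.sqrt_pos.2 hs)]
    exact Real.abs_le_sqrt (by linarith)
  · have h1 : HasDerivAt (fun s : ℝ => 1 + s ^ 2) (2 * x) x := by
      simpa using (hasDerivAt_pow 2 x).const_add 1
    have h2 : HasDerivAt (fun s : ℝ => R - √(1 + s ^ 2) - L * t) (-(x / √(1 + x ^ 2))) x := by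
      refine (((h1.sqrt hs.ne').const_sub R).sub_const _).congr_deriv ?_
      rw [mul_div_mul_left _ _ two_ne_zero]
    exact (hS.comp x h2).congr_deriv (by ring)

/-- A cutoff in time at `T`, whose derivative on `t > 0` is minus a mollifier centred at `T`. It is
also cut off at `t = -2`, for compact support; only `t ≥ 0` enters the weak form. -/
lemma exists_time_cutoff {b : ℝ → ℝ} {δ T : ℝ} (hb : ContDiff ℝ (⊤ : ℕ∞) b)
    (hbc : HasCompactSupport b) (b0 : ∀ x, 0 ≤ b x) (b1 : ∫ x, b x = 1)
    (bs : ∀ x, δ ≤ |x| → b x = 0) (hδ : 0 < δ) :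
    ∃ α : ℝ → ℝ, ContDiff ℝ (⊤ : ℕ∞) α ∧ (∀ t, 0 ≤ α t) ∧ (∀ t, α t ≤ 1) ∧
      (∀ t, t ≤ -2 → α t = 0) ∧ (∀ t, T + δ ≤ t → α t = 0) ∧
      ∀ t, 0 < t → HasDerivAt α (-b (T - t)) t := by
  have bint : Integrable b := hb.continuous.integrable_of_hasCompactSupport hbc
  set B : ℝ → ℝ := fun s => ∫ u in (-δ)..s, b u with hB
  have dB : ∀ s, HasDerivAt B (b s) s := fun s =>
    intervalIntegral.integral_hasDerivAt_right bint.intervalIntegrable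
      (hb.continuous.stronglyMeasurableAtFilter _ _) hb.continuous.continuousAt
  have cB : ContDiff ℝ (⊤ : ℕ∞) B := by
    refine contDiff_infty_iff_deriv.2 ⟨fun s => (dB s).differentiableAt, ?_⟩
    rwa [show deriv B = b from funext fun s => (dB s).deriv]
  have Bz : ∀ s, s ≤ -δ → B s = 0 := fun s hs => by
    simp only [hB]
    rw [intervalIntegral.integral_congr (g := fun _ => 0), intervalIntegral.integral_zero]
    intro u hu
    rw [uIcc_of_ge hs] at hu
    refine bs u ?_
    rw [abs_of_nonpos (by linarith [hu.2])]
    linarith [hu.2]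
  have Bn : ∀ s, 0 ≤ B s := fun s => by
    rcases le_total s (-δ) with h | h
    · exact (Bz s h).ge
    · exact intervalIntegral.integral_nonneg h fun u _ => b0 u
  have B1 : ∀ s, B s ≤ 1 := fun s => by
    rcases le_total s (-δ) with h | h
    · exact (Bz s h).le.trans zero_le_one
    · simp only [hB]
      rw [intervalIntegral.integral_of_le h, ← b1]
      exact setIntegral_le_integral bint (Eventually.of_forall b0)
  have dα : ∀ t, HasDerivAt (fun t => B (T - t)) (-b (T - t)) t := fun t =>
    ((dB (T - t)).comp t ((hasDerivAt_id t).const_sub T)).congr_deriv (by simp)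
  refine ⟨fun t => Real.smoothTransition (t + 2) * B (T - t), ?_, fun t => ?_, fun t => ?_,
    fun t ht => ?_, fun t ht => ?_, fun t ht => ?_⟩
  · exact (Real.smoothTransition.contDiff.comp (contDiff_id.add contDiff_const)).mul
      (cB.comp (contDiff_const.sub contDiff_id))
  · exact mul_nonneg (Real.smoothTransition.nonneg _) (Bn _)
  · exact mul_le_one₀ (Real.smoothTransition.le_one _) (Bn _) (B1 _)
  · simp only [Real.smoothTransition.zero_of_nonpos (show t + 2 ≤ 0 by linarith), zero_mul]
  · simp only [Bz (T - t) (by linarith), mul_zero]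
  · refine (dα t).congr_of_eventuallyEq ?_
    filter_upwards [isOpen_Ioi.mem_nhds ht] with s hs
    have hs' : (0:ℝ) < s := hs
    rw [Real.smoothTransition.one_of_one_le (by linarith), one_mul]

/-! ### Conclusion -/

set_option maxHeartbeats 800000 in
/-- The contraction inequality localised in a cone and mollified in time at scale `δ` around
`T`. -/
lemma mollified_contraction {g Y d : ℝ → ℝ} {w : ℝ → ℝ} {ρ σ : ℝ → ℝ → ℝ} {L : NNReal}
    (hg : LipschitzWith L g)
    (hρ : Measurable fun p : ℝ × ℝ => ρ p.1 p.2) (hρ01 : ∀ x t, ρ x t ∈ Icc (0:ℝ) 1)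
    (hσ : Measurable fun p : ℝ × ℝ => σ p.1 p.2) (hσ01 : ∀ x t, σ x t ∈ Icc (0:ℝ) 1)
    (hw : Measurable w) (hw0 : ∀ x, 0 ≤ w x) (hw1 : ∀ x, w x ≤ 1)
    (hd : Measurable d) (hd0 : ∀ t, 0 ≤ d t)
    (hdb : ∀ᵐ t ∂(volume.restrict (Ioi (0:ℝ))), d t ≤ 2 * L)
    (hwc : ∀ ψ : ℝ × ℝ → ℝ, TestFun ψ →
      0 ≤ weakForm (fun z => |ρ z.1 z.2 - σ z.1 z.2|) (fun z => EE g (ρ z.1 z.2) (σ z.1 z.2)) w ψ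
        + 2 * ∫ t in Ioi (0:ℝ), ψ (Y t, t) * d t)
    {b : ℝ → ℝ} {δ T R : ℝ} (hb : ContDiff ℝ (⊤ : ℕ∞) b)
    (hbc : HasCompactSupport b) (b0 : ∀ x, 0 ≤ b x) (b1 : ∫ x, b x = 1)
    (bs : ∀ x, δ ≤ |x| → b x = 0) (hδ : 0 < δ) (hT : 0 < T) :
    ∫ t in Ioi (0:ℝ), b (T - t) * ∫ x, |ρ x t - σ x t| * cone L R x t
      ≤ (∫ x, w x * cone L R x 0) + 2 * ((∫ t in Ioo (0:ℝ) T, d t) + 2 * L * δ) := by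
  have hL : (0:ℝ) ≤ L := L.2
  obtain ⟨α, αs, α0, α1, αl, αr, αd⟩ := exists_time_cutoff (T := T) hb hbc b0 b1 bs hδ
  set ψ : ℝ × ℝ → ℝ := fun z => α z.2 * cone L R z.1 z.2 with hψd
  have cs := cone_contDiff L R
  have hψ : TestFun ψ := by
    refine ⟨(αs.comp contDiff_snd).mul cs, ?_, fun z => mul_nonneg (α0 _) (cone_nonneg _ _ _ _)⟩
    refine HasCompactSupport.intro (K := Icc (-(R + 2 * L)) (R + 2 * L) ×ˢ Icc (-2) (T + δ))
      (isCompact_Icc.prod isCompact_Icc) fun z hz => ?_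
    simp only [hψd]
    rcases le_total z.2 (-2) with h | h
    · rw [αl _ h, zero_mul]
    rcases le_total (T + δ) z.2 with h' | h'
    · rw [αr _ h', zero_mul]
    rcases le_total (R + 2 * L) |z.1| with h2 | h2
    · rw [cone_zero hL h h2, mul_zero]
    · exact absurd ⟨abs_le.1 h2, h, h'⟩ hz
  have key := hwc ψ hψ
  have mP : Measurable fun z : ℝ × ℝ => |ρ z.1 z.2 - σ z.1 z.2| := by fun_prop
  have mQ := EE_meas hg hρ hσ
  have hPb : ∀ z : ℝ × ℝ, |(|ρ z.1 z.2 - σ z.1 z.2|)| ≤ 1 := fun z => by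
    rw [abs_abs]; exact sub_abs_le_one (hρ01 _ _) (hσ01 _ _)
  have hQb : ∀ z : ℝ × ℝ, |EE g (ρ z.1 z.2) (σ z.1 z.2)| ≤ L := fun z =>
    (EE_abs hg _ _).trans (mul_le_of_le_one_right hL (sub_abs_le_one (hρ01 _ _) (hσ01 _ _)))
  have i1 := (hψ.integrable_pair mP mQ hPb hQb).integrableOn (s := HP)
  have hcm : Measurable fun z : ℝ × ℝ => cone L R z.1 z.2 := cs.continuous.measurable
  have bm := hb.continuous.measurable
  obtain ⟨M, hM⟩ := hb.continuous.bounded_above_of_compact_support hbc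
  have i2 : IntegrableOn (fun z : ℝ × ℝ => b (T - z.2) * (|ρ z.1 z.2 - σ z.1 z.2|
      * cone L R z.1 z.2)) HP := by
    rw [← integrable_indicator_iff HP_meas]
    refine intg ((((bm.comp (measurable_const.sub measurable_snd)).mul (mP.mul hcm))).indicator
      HP_meas) (Icc (-(R + 2 * L)) (R + 2 * L) ×ˢ Icc (-2) (T + δ))
      (measurableSet_Icc.prod measurableSet_Icc)
      (isCompact_Icc.prod isCompact_Icc).measure_lt_top M (fun z _ => ?_) fun z hz => ?_
    · rw [← Real.norm_eq_abs]
      refine (norm_indicator_le_norm_self _ z).trans ?_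
      rw [norm_mul, norm_mul]
      refine (mul_le_of_le_one_right (norm_nonneg _) (mul_le_one₀ (hPb z) (norm_nonneg _) ?_)).trans
        (hM _)
      rw [Real.norm_of_nonneg (cone_nonneg _ _ _ _)]
      exact cone_le_one _ _ _ _
    · refine indicator_apply_eq_zero.2 fun hz' => ?_
      have hz' := mem_HP.1 hz'
      rcases le_total (T + δ) z.2 with h' | h'
      · rw [bs (T - z.2) (by rw [abs_of_nonpos] <;> linarith), zero_mul]
      rcases le_total (R + 2 * L) |z.1| with h2 | h2
      · rw [cone_zero hL (by linarith) h2, mul_zero, mul_zero]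
      · exact absurd ⟨abs_le.1 h2, by linarith, h'⟩ hz
  have e2 : ∫ z in HP, b (T - z.2) * (|ρ z.1 z.2 - σ z.1 z.2| * cone L R z.1 z.2)
      = ∫ t in Ioi (0:ℝ), b (T - t) * ∫ x, |ρ x t - σ x t| * cone L R x t := by
    rw [integral_HP i2]
    simp only [integral_const_mul]
  -- The derivatives of the cone weight contribute with a favourable sign, as `|EE| ≤ L |ρ - σ|`.
  have h1 : ∫ z in HP, (|ρ z.1 z.2 - σ z.1 z.2| * pT ψ z + EE g (ρ z.1 z.2) (σ z.1 z.2) * pX ψ z)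
      ≤ -∫ t in Ioi (0:ℝ), b (T - t) * ∫ x, |ρ x t - σ x t| * cone L R x t := by
    rw [← e2, ← integral_neg]
    refine setIntegral_mono_on i1 i2.neg HP_meas fun z hz => ?_
    obtain ⟨x, t⟩ := z
    obtain ⟨c, e, hc, he, ht, hx⟩ := cone_deriv L R x t
    rw [pT_eq hψ.diff.differentiableAt ((αd t (mem_HP.1 hz)).mul ht),
      pX_eq hψ.diff.differentiableAt (hx.const_mul (α t))]
    have hE := EE_abs hg (ρ x t) (σ x t)
    have : -(EE g (ρ x t) (σ x t) * e) ≤ L * |ρ x t - σ x t| := by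
      refine (neg_le_abs _).trans ?_
      rw [abs_mul]
      exact (mul_le_of_le_one_right (abs_nonneg _) he).trans hE
    have := mul_le_mul_of_nonneg_left this (mul_nonneg (α0 t) hc)
    simp only
    nlinarith
  have h2 : ∫ x, w x * ψ (x, 0) ≤ ∫ x, w x * cone L R x 0 := by
    have hcx := cone_meas L R 0
    have hle : ∀ x, w x * ψ (x, 0) ≤ w x * cone L R x 0 := fun x =>
      mul_le_mul_of_nonneg_left (mul_le_of_le_one_left (cone_nonneg L R x 0) (α1 0)) (hw0 x)
    refine integral_mono_of_nonneg (Eventually.of_forall fun x =>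
      mul_nonneg (hw0 x) (hψ.2.2 (x, 0))) ?_ (Eventually.of_forall hle)
    refine intg (hw.mul hcx) (Icc (-(R + 2 * L)) (R + 2 * L)) measurableSet_Icc
      isCompact_Icc.measure_lt_top 1 (fun x _ => ?_) fun x hx => ?_
    · rw [abs_of_nonneg (mul_nonneg (hw0 x) (cone_nonneg _ _ _ _))]
      exact mul_le_one₀ (hw1 x) (cone_nonneg _ _ _ _) (cone_le_one _ _ _ _)
    · rw [cone_zero hL (by norm_num) (not_lt.1 fun h => hx (abs_le.1 h.le)), mul_zero]
  have hdb' : ∀ s ⊆ Ioi (0:ℝ), MeasurableSet s → volume s < ⊤ → IntegrableOn d s := by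
    intro s hs _ hs'
    refine Measure.integrableOn_of_bounded (M := 2 * L) hs'.ne hd.aestronglyMeasurable ?_
    filter_upwards [ae_restrict_of_ae_restrict_of_subset hs hdb] with t ht
    rwa [Real.norm_of_nonneg (hd0 t)]
  have h3 : ∫ t in Ioi (0:ℝ), ψ (Y t, t) * d t ≤ (∫ t in Ioo (0:ℝ) T, d t) + 2 * L * δ := by
    have hi := hdb' (Ioo 0 T) Ioo_subset_Ioi_self measurableSet_Ioo (by simp)
    have hi' := hdb' (Ico T (T + δ)) (fun t ht => hT.trans_le ht.1) measurableSet_Ico (by simp)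
    have hu : Ioo 0 T ∪ Ico T (T + δ) = Ioo 0 (T + δ) :=
      Ioo_union_Ico_eq_Ioo hT (by linarith)
    have hI : Integrable ((Ioo 0 (T + δ)).indicator d) (volume.restrict (Ioi (0:ℝ))) :=
      ((integrable_indicator_iff measurableSet_Ioo).2 (hu ▸ hi.union hi')).integrableOn
    calc _ ≤ ∫ t in Ioi (0:ℝ), (Ioo 0 (T + δ)).indicator d t := by
          refine integral_mono_of_nonneg (Eventually.of_forall fun t =>
            mul_nonneg (hψ.2.2 _) (hd0 t)) hI ?_
          filter_upwards [ae_restrict_mem measurableSet_Ioi] with t ht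
          rcases lt_or_ge t (T + δ) with h | h
          · rw [indicator_of_mem (show t ∈ Ioo 0 (T + δ) from ⟨ht, h⟩)]
            exact mul_le_of_le_one_left (hd0 t)
              (mul_le_one₀ (α1 _) (cone_nonneg _ _ _ _) (cone_le_one _ _ _ _))
          · rw [indicator_of_notMem (fun h' : t ∈ Ioo 0 (T + δ) => h'.2.not_ge h)]
            simp only [hψd, αr t h, zero_mul, le_refl]
      _ = ∫ t in Ioo 0 (T + δ), d t := by
          rw [setIntegral_indicator measurableSet_Ioo,
            inter_eq_self_of_subset_right Ioo_subset_Ioi_self]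
      _ = (∫ t in Ioo (0:ℝ) T, d t) + ∫ t in Ico T (T + δ), d t := by
          rw [← hu]
          refine setIntegral_union ?_ measurableSet_Ico hi hi'
          exact Set.disjoint_left.2 fun t h h' => h'.1.not_gt h.2
      _ ≤ _ := by
          gcongr
          calc _ ≤ ∫ t in Ico T (T + δ), (2 * L : ℝ) := by
                refine integral_mono_ae hi' (integrableOn_const (by simp)) ?_
                exact ae_restrict_of_ae_restrict_of_subset (fun t ht => hT.trans_le ht.1) hdb
            _ = _ := by
                simp [hδ.le, mul_comm]
  rw [weakForm] at key
  linarith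

section
variable {g Y d w : ℝ → ℝ} {ρ σ : ℝ → ℝ → ℝ} {L : NNReal}

/-- The contraction inequality localised in a cone, at almost every time: Lebesgue points of the
weighted `L¹` distance. -/
lemma cone_contraction (hg : LipschitzWith L g)
    (hρ : Measurable fun p : ℝ × ℝ => ρ p.1 p.2) (hρ01 : ∀ x t, ρ x t ∈ Icc (0:ℝ) 1)
    (hσ : Measurable fun p : ℝ × ℝ => σ p.1 p.2) (hσ01 : ∀ x t, σ x t ∈ Icc (0:ℝ) 1)
    (hw : Measurable w) (hw0 : ∀ x, 0 ≤ w x) (hw1 : ∀ x, w x ≤ 1)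
    (hd : Measurable d) (hd0 : ∀ t, 0 ≤ d t)
    (hdb : ∀ᵐ t ∂(volume.restrict (Ioi (0:ℝ))), d t ≤ 2 * L)
    (hwc : ∀ ψ : ℝ × ℝ → ℝ, TestFun ψ →
      0 ≤ weakForm (fun z => |ρ z.1 z.2 - σ z.1 z.2|) (fun z => EE g (ρ z.1 z.2) (σ z.1 z.2)) w ψ
        + 2 * ∫ t in Ioi (0:ℝ), ψ (Y t, t) * d t) (R : ℝ) :
    ∀ᵐ T ∂(volume.restrict (Ioi (0:ℝ))), ∫ x, |ρ x T - σ x T| * cone L R x T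
      ≤ (∫ x, w x * cone L R x 0) + 2 * ∫ t in Ioo (0:ℝ) T, d t := by
  have hL : (0:ℝ) ≤ L := L.2
  set G : ℝ → ℝ := fun t => ∫ x, |ρ x t - σ x t| * cone L R x t with hG
  have mF : Measurable fun z : ℝ × ℝ => |ρ z.1 z.2 - σ z.1 z.2| * cone L R z.1 z.2 :=
    (by fun_prop : Measurable fun z : ℝ × ℝ => |ρ z.1 z.2 - σ z.1 z.2|).mul
      (cone_contDiff L R).continuous.measurable
  have mG : Measurable G := (mF.stronglyMeasurable.integral_prod_left' (μ := volume)).measurable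
  set I : Set ℝ := Icc (-(R + 2 * L)) (R + 2 * L) with hI
  have hGb : ∀ t, 0 < t → ‖G t‖ ≤ ∫ x, I.indicator (fun _ => (1:ℝ)) x := by
    intro t ht
    refine norm_integral_le_of_norm_le ((integrable_indicator_iff measurableSet_Icc).2
      (integrableOn_const (by simp))) (Eventually.of_forall fun x => ?_)
    by_cases hx : x ∈ I
    · rw [indicator_of_mem hx, norm_mul, norm_abs_eq_norm,
        Real.norm_of_nonneg (cone_nonneg _ _ _ _)]
      exact mul_le_one₀ (sub_abs_le_one (hρ01 _ _) (hσ01 _ _)) (cone_nonneg _ _ _ _)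
        (cone_le_one _ _ _ _)
    · rw [indicator_of_notMem hx, cone_zero hL (by linarith)
        (not_lt.1 fun h => hx (abs_le.1 h.le)), mul_zero, norm_zero]
  have hli : LocallyIntegrable ((Ioi (0:ℝ)).indicator G) := by
    refine (locallyIntegrable_const (∫ x, I.indicator (fun _ => (1:ℝ)) x)).mono
      (mG.indicator measurableSet_Ioi).aestronglyMeasurable (Eventually.of_forall fun t => ?_)
    by_cases ht : t ∈ Ioi (0:ℝ)
    · rw [indicator_of_mem ht]
      exact (hGb t ht).trans (le_abs_self _)
    · rw [indicator_of_notMem ht, norm_zero]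
      exact norm_nonneg _
  let β : ℕ → ContDiffBump (0:ℝ) := fun n =>
    ⟨1 / ((n:ℝ) + 1) / 2, 1 / ((n:ℝ) + 1), by positivity, half_lt_self (by positivity)⟩
  have hconv := ContDiffBump.ae_convolution_tendsto_right_of_locallyIntegrable (φ := β) (K := 2)
    (l := atTop) (g := (Ioi (0:ℝ)).indicator G) (μ := volume)
    (by simpa [β] using tendsto_one_div_add_atTop_nhds_zero_nat (𝕜 := ℝ))
    (Eventually.of_forall fun n => le_of_eq (by simp only [β]; ring)) hli
  filter_upwards [ae_restrict_of_ae hconv, ae_restrict_mem measurableSet_Ioi] with T hT hT0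
  rw [indicator_of_mem hT0] at hT
  have hlim : Tendsto (fun n : ℕ => (∫ x, w x * cone L R x 0)
      + 2 * ((∫ t in Ioo (0:ℝ) T, d t) + 2 * L * (1 / ((n:ℝ) + 1)))) atTop
      (𝓝 ((∫ x, w x * cone L R x 0) + 2 * ((∫ t in Ioo (0:ℝ) T, d t) + 2 * L * 0))) :=
    ((((tendsto_one_div_add_atTop_nhds_zero_nat (𝕜 := ℝ)).const_mul _).const_add _).const_mul
      _).const_add _
  rw [mul_zero, add_zero] at hlim
  refine le_of_tendsto_of_tendsto' hT hlim fun n => ?_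
  have h := mollified_contraction (T := T) (R := R) hg hρ hρ01 hσ hσ01 hw hw0 hw1 hd hd0 hdb hwc
    (b := (β n).normed volume) (δ := 1 / ((n:ℝ) + 1)) (β n).contDiff_normed
    (β n).hasCompactSupport_normed (fun x => (β n).nonneg_normed x) (β n).integral_normed
    (fun x hx => by
      have : x ∉ Function.support ((β n).normed volume) := by
        rw [(β n).support_normed_eq]
        simpa [β] using hx
      simpa using this) (by positivity) hT0
  refine le_trans (le_of_eq ?_) h
  rw [convolution_eq_swap, ← integral_indicator measurableSet_Ioi]
  refine integral_congr_ae (Eventually.of_forall fun t => ?_)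
  by_cases ht : t ∈ Ioi (0:ℝ)
  · simp [indicator_of_mem ht, hG]
  · simp [indicator_of_notMem ht]

/-- The global contraction inequality: the cones exhaust the line as `R → ∞`. -/
lemma global_contraction (hg : LipschitzWith L g)
    (hρ : Measurable fun p : ℝ × ℝ => ρ p.1 p.2) (hρ01 : ∀ x t, ρ x t ∈ Icc (0:ℝ) 1)
    (hσ : Measurable fun p : ℝ × ℝ => σ p.1 p.2) (hσ01 : ∀ x t, σ x t ∈ Icc (0:ℝ) 1)
    (hw : Measurable w) (hw0 : ∀ x, 0 ≤ w x) (hw1 : ∀ x, w x ≤ 1)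
    (hd : Measurable d) (hd0 : ∀ t, 0 ≤ d t)
    (hdb : ∀ᵐ t ∂(volume.restrict (Ioi (0:ℝ))), d t ≤ 2 * L)
    (hwc : ∀ ψ : ℝ × ℝ → ℝ, TestFun ψ →
      0 ≤ weakForm (fun z => |ρ z.1 z.2 - σ z.1 z.2|) (fun z => EE g (ρ z.1 z.2) (σ z.1 z.2)) w ψ
        + 2 * ∫ t in Ioi (0:ℝ), ψ (Y t, t) * d t) :
    ∀ᵐ T ∂(volume.restrict (Ioi (0:ℝ))), ∫⁻ x, ENNReal.ofReal |ρ x T - σ x T|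
      ≤ (∫⁻ x, ENNReal.ofReal (w x)) + 2 * ∫⁻ t in Ioo (0:ℝ) T, ENNReal.ofReal (d t) := by
  have h := fun n : ℕ => cone_contraction hg hρ hρ01 hσ hσ01 hw hw0 hw1 hd hd0 hdb hwc (n:ℝ)
  filter_upwards [ae_all_iff.2 h, ae_restrict_mem measurableSet_Ioi] with T hT hT0
  have mP : Measurable fun x => |ρ x T - σ x T| := by
    have := hρ.comp (measurable_id.prodMk (measurable_const (a := T)))
    have := hσ.comp (measurable_id.prodMk (measurable_const (a := T)))
    simp only [Function.comp_def, id] at *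
    fun_prop
  have mF : ∀ n : ℕ, Measurable fun x => |ρ x T - σ x T| * cone L n x T := fun n =>
    mP.mul (cone_meas _ _ _)
  have hlim : ∀ x, Tendsto (fun n : ℕ => ENNReal.ofReal (|ρ x T - σ x T| * cone L n x T)) atTop
      (𝓝 (ENNReal.ofReal |ρ x T - σ x T|)) := by
    intro x
    refine tendsto_const_nhds.congr' ?_
    filter_upwards [tendsto_natCast_atTop_atTop.eventually_ge_atTop
      (1 + √(1 + x ^ 2) + L * T)] with n hn
    rw [cone_one hn, mul_one]
  have hfatou : ∫⁻ x, ENNReal.ofReal |ρ x T - σ x T|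
      ≤ liminf (fun n : ℕ => ∫⁻ x, ENNReal.ofReal (|ρ x T - σ x T| * cone L n x T)) atTop := by
    refine le_trans (le_of_eq ?_) (lintegral_liminf_le fun n => (mF n).ennreal_ofReal)
    exact lintegral_congr fun x => (hlim x).liminf_eq.symm
  refine hfatou.trans (liminf_le_of_le (by isBoundedDefault) fun a ha => ?_)
  obtain ⟨n, hn⟩ := ha.exists
  refine hn.trans ?_
  have hI : Integrable fun x => |ρ x T - σ x T| * cone L n x T := by
    refine intg (mF n) (Icc (-(n + 2 * L)) (n + 2 * L)) measurableSet_Icc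
      isCompact_Icc.measure_lt_top 1 (fun x _ => ?_) fun x hx => ?_
    · rw [abs_of_nonneg (mul_nonneg (abs_nonneg _) (cone_nonneg _ _ _ _))]
      exact mul_le_one₀ (sub_abs_le_one (hρ01 _ _) (hσ01 _ _)) (cone_nonneg _ _ _ _)
        (cone_le_one _ _ _ _)
    · have hT0 : (0:ℝ) < T := hT0
      rw [cone_zero (show (0:ℝ) ≤ L from L.2) (by linarith) (not_lt.1 fun h => hx (abs_le.1 h.le)), mul_zero]
  rw [← ofReal_integral_eq_lintegral_ofReal hI (Eventually.of_forall fun x =>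
    mul_nonneg (abs_nonneg _) (cone_nonneg _ _ _ _))]
  refine (ENNReal.ofReal_le_ofReal (hT n)).trans (ENNReal.ofReal_add_le.trans (add_le_add ?_ ?_))
  · rw [integral_eq_lintegral_of_nonneg_ae (Eventually.of_forall fun x =>
      mul_nonneg (hw0 x) (cone_nonneg _ _ _ _)) (hw.mul (cone_meas _ _ _)).aestronglyMeasurable]
    refine ENNReal.ofReal_toReal_le.trans (lintegral_mono fun x => ENNReal.ofReal_le_ofReal ?_)
    exact mul_le_of_le_one_right (hw0 x) (cone_le_one _ _ _ _)
  · rw [ENNReal.ofReal_mul zero_le_two, ENNReal.ofReal_ofNat,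
      integral_eq_lintegral_of_nonneg_ae (Eventually.of_forall hd0) hd.aestronglyMeasurable]
    gcongr
    exact ENNReal.ofReal_toReal_le

end

/-- stability and uniqueness, single interface: `L¹` stability with
respect to the initial datum and the constraint, and uniqueness of
`G_{ẏ}(q)`-entropy solutions. -/
theorem stability_and_uniqueness_single_interface
    (f : ℝ → ℝ) (ρb : ℝ) (hf : BellShaped f ρb)
    (ρo σo : ℝ → ℝ) (hρo_meas : Measurable ρo) (hρo_mem : ∀ x, ρo x ∈ Icc (0:ℝ) 1)
    (hσo_meas : Measurable σo) (hσo_mem : ∀ x, σo x ∈ Icc (0:ℝ) 1)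
    (y : ℝ → ℝ) (hy : LocLip y)
    (q r : ℝ → ℝ) (hq_meas : Measurable q) (hq_bdd : LocBdd q)
    (hr_meas : Measurable r) (hr_bdd : LocBdd r)
    (hadmq : ∀ᵐ t ∂(volume.restrict (Ioi (0:ℝ))), AdmissiblePair f (deriv y t) (q t))
    (hadmr : ∀ᵐ t ∂(volume.restrict (Ioi (0:ℝ))), AdmissiblePair f (deriv y t) (r t))
    (ρ σ : ℝ → ℝ → ℝ)
    (hρ_meas : Measurable fun p : ℝ × ℝ => ρ p.1 p.2)
    (hρ_mem : ∀ x t, ρ x t ∈ Icc (0:ℝ) 1)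
    (hσ_meas : Measurable fun p : ℝ × ℝ => σ p.1 p.2)
    (hσ_mem : ∀ x t, σ x t ∈ Icc (0:ℝ) 1)
    (ρm ρp σm σp : ℝ → ℝ)
    (hρm : Measurable ρm) (hρp : Measurable ρp)
    (hσm : Measurable σm) (hσp : Measurable σp)
    (hρsol : IsGermSol f ρo y q ρ ρm ρp)
    (hσsol : IsGermSol f σo y r σ σm σp) :
    (∀ᵐ T ∂(volume.restrict (Ioi (0:ℝ))),
      (∫⁻ x : ℝ, ENNReal.ofReal |ρ x T - σ x T|) ≤
        (∫⁻ x : ℝ, ENNReal.ofReal |ρo x - σo x|)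
          + 2 * ∫⁻ t in Ioo (0:ℝ) T, ENNReal.ofReal |q t - r t|) ∧
    ((ρo =ᵐ[volume] σo) →
      (∀ᵐ t ∂(volume.restrict (Ioi (0:ℝ))), q t = r t) →
      ∀ᵐ p ∂((volume : Measure (ℝ × ℝ)).restrict (univ ×ˢ Ioi (0:ℝ))),
        ρ p.1 p.2 = σ p.1 p.2) := by
  obtain ⟨L, g, hg, hfg⟩ := hf.exists_ext
  have bq : ∀ᵐ t ∂(volume.restrict (Ioi (0:ℝ))), |deriv y t| ≤ L ∧ |q t - r t| ≤ 2 * L := by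
    filter_upwards [hadmq, hadmr] with t h1 h2
    obtain ⟨a, b, c⟩ := adm_bound hg hfg hf.zero_at_zero hf.zero_at_one h1
    obtain ⟨_, b', c'⟩ := adm_bound hg hfg hf.zero_at_zero hf.zero_at_one h2
    exact ⟨a, abs_sub_le_iff.2 ⟨by linarith, by linarith⟩⟩
  obtain ⟨Y, hY, hyY⟩ := exists_lip_curve hy (bq.mono fun t h => h.1)
  have hqr := bq.mono fun t h => h.2
  have main := global_contraction (d := fun t => |q t - r t|) (w := fun x => |ρo x - σo x|) hg
    hρ_meas hρ_mem hσ_meas hσ_mem (by fun_prop) (fun x => abs_nonneg _)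
    (fun x => sub_abs_le_one (hρo_mem x) (hσo_mem x)) (by fun_prop) (fun t => abs_nonneg _) hqr
    (fun ψ hψ => weak_contraction hf.concave hg hfg hY hyY hq_meas hr_meas hqr hρo_meas hρo_mem
      hσo_meas hσo_mem hρ_meas hρ_mem hσ_meas hσ_mem hρm hρp hσm hσp hρsol hσsol hψ)
  refine ⟨main, fun ho heq => ?_⟩
  have h0 : ∫⁻ x, ENNReal.ofReal |ρo x - σo x| = 0 := by
    rw [lintegral_congr_ae (g := fun _ => 0) (ho.mono fun x hx => by simp [hx]), lintegral_zero]
  have hsl : ∀ᵐ t ∂(volume.restrict (Ioi (0:ℝ))), ∀ᵐ x, ρ x t = σ x t := by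
    filter_upwards [main] with T hT
    have h1 : ∫⁻ t in Ioo (0:ℝ) T, ENNReal.ofReal |q t - r t| = 0 := by
      rw [lintegral_congr_ae (g := fun _ => 0)
        ((ae_restrict_of_ae_restrict_of_subset Ioo_subset_Ioi_self heq).mono
          fun t ht => by simp [ht]), lintegral_zero]
    have hρT : Measurable fun x => ρ x T := hρ_meas.comp (measurable_id.prodMk measurable_const)
    have hσT : Measurable fun x => σ x T := hσ_meas.comp (measurable_id.prodMk measurable_const)
    rw [h0, h1, mul_zero, add_zero, nonpos_iff_eq_zero,
      lintegral_eq_zero_iff (by fun_prop)] at hT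
    filter_upwards [hT] with x hx
    have := ENNReal.ofReal_eq_zero.1 hx
    exact sub_eq_zero.1 (abs_nonpos_iff.1 this)
  have hm : MeasurableSet {p : ℝ × ℝ | ρ p.1 p.2 = σ p.1 p.2} :=
    measurableSet_eq_fun hρ_meas hσ_meas
  have hv := volume_HP
  rw [HP] at hv
  rw [hv]
  exact (Measure.ae_prod_iff_ae_ae hm).2
    ((Measure.ae_ae_comm (p := fun x t => ρ x t = σ x t) hm).2 hsl)
end
end

section
/- (Monotonicity and stability of the constrained marching formula, right-hand cell.) Let s ∈ ℝ, q ≥ 0 with s + q ≥ 0, set L := sup_{[0,1]}|f'| + |s|, and let Δx, Δt > 0 satisfy 2LΔt ≤ Δx (CFL). Let α ≥ Δx and β := α + Δx − sΔt. Define, for (u,v,w,z) ∈ [0,1]⁴, H(u,v,w,z) := (vα + wΔx − (EO(w,z) − min{God^s(u,v), q})Δt)/β. Then β > 0, H is nondecreasing in each of its four arguments on [0,1]⁴, H(0,0,0,0) = 0 and H(1,1,1,1) = 1; consequently H maps [0,1]⁴ into [0,1]. -/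
/-!
Write `L = sup |f'| + |s|`. By the mean value inequality `f` is `sup |f'|`-Lipschitz on `[0,1]`,
hence `F_s` is `L`-Lipschitz there. Three facts carry the proof.

* `f` is nonincreasing on `[ρb,1]` (concavity and maximality of `ρb`), so the
  Engquist–Osher flux is nonincreasing in its second argument; it is `sup |f'|`-Lipschitz in its
  first one, so the term `w Δx` compensates its growth under the CFL condition.
* The Godunov flux is nondecreasing in its first argument (`God_mono_left`).
* The Godunov flux decreases at rate at most `L` in its second argument (`God_le_add_right`),
  which `v α` compensates, since `L Δt ≤ Δx ≤ α`. Truncation by `min · q` preserves this bound.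

The values at the two constant states are computed directly, using `q ≥ 0` at `0` and `q ≥ -s` at
`1`. Monotonicity in each variable then confines `H` to `[H(0,0,0,0), H(1,1,1,1)] = [0,1]`.
-/

open MeasureTheory Set Filter Topology

noncomputable section

/-- The Engquist–Osher numerical flux of `f` (with `ρb` the maximiser of `f`):
`EO(a,b) = f(min(a,ρb)) + f(max(b,ρb)) - f(ρb)`. -/
def EO (f : ℝ → ℝ) (ρb a b : ℝ) : ℝ := f (min a ρb) + f (max b ρb) - f ρb

/-- The Godunov numerical flux of `F_s`. -/
def God (f : ℝ → ℝ) (s a b : ℝ) : ℝ :=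
  if a ≤ b then sInf (Flx f s '' Icc a b) else sSup (Flx f s '' Icc b a)

/-- `sup_{[0,1]} |f'|`. -/
def supDeriv (f : ℝ → ℝ) : ℝ :=
  sSup ((fun ρ => |derivWithin f (Icc (0:ℝ) 1) ρ|) '' Icc (0:ℝ) 1)

/-- Constrained marching formula for the cell on the right of the interface. -/
def Hright (f : ℝ → ℝ) (ρb s q Δx Δt α : ℝ) (u v w z : ℝ) : ℝ :=
  (v * α + w * Δx - (EO f ρb w z - min (God f s u v) q) * Δt) / (α + Δx - s * Δt)

/-- Constrained marching formula for the cell on the left of the interface. -/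
def Hleft (f : ℝ → ℝ) (ρb s q Δx Δt γ : ℝ) (u v w : ℝ) : ℝ :=
  (v * γ - (min (God f s v w) q - EO f ρb u v) * Δt) / (γ + s * Δt)

namespace MarchingRight

variable {f : ℝ → ℝ} {ρb s : ℝ}

lemma abs_derivWithin_le (hf : BellShaped f ρb) {x : ℝ} (hx : x ∈ Icc (0:ℝ) 1) :
    |derivWithin f (Icc (0:ℝ) 1) x| ≤ supDeriv f := by
  have hc : ContinuousOn (fun ρ => |derivWithin f (Icc (0:ℝ) 1) ρ|) (Icc (0:ℝ) 1) :=
    (hf.smooth.continuousOn_derivWithin (uniqueDiffOn_Icc one_pos) (by norm_num)).abs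
  exact le_csSup (isCompact_Icc.image_of_continuousOn hc).bddAbove ⟨x, hx, rfl⟩

lemma supDeriv_nonneg (hf : BellShaped f ρb) : 0 ≤ supDeriv f :=
  (abs_nonneg _).trans (abs_derivWithin_le hf (x := 0) ⟨le_rfl, zero_le_one⟩)

lemma abs_sub_le (hf : BellShaped f ρb) {x y : ℝ} (hx : x ∈ Icc (0:ℝ) 1)
    (hy : y ∈ Icc (0:ℝ) 1) : |f x - f y| ≤ supDeriv f * |x - y| := by
  have h := (convex_Icc (0:ℝ) 1).norm_image_sub_le_of_norm_derivWithin_le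
    (hf.smooth.differentiableOn (by norm_num)) (fun z hz => abs_derivWithin_le hf hz) hy hx
  simpa only [Real.norm_eq_abs] using h

lemma Flx_le_add (hf : BellShaped f ρb) {x y : ℝ} (hx : x ∈ Icc (0:ℝ) 1)
    (hy : y ∈ Icc (0:ℝ) 1) : Flx f s x ≤ Flx f s y + (supDeriv f + |s|) * |x - y| := by
  have h1 := le_of_abs_le (abs_sub_le hf hx hy)
  have h2 : -(s * (x - y)) ≤ |s| * |x - y| := by
    rw [← abs_mul]; exact neg_le_abs _
  unfold Flx
  linarith

lemma continuousOn_Flx (hf : BellShaped f ρb) : ContinuousOn (Flx f s) (Icc 0 1) :=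
  hf.smooth.continuousOn.sub (by fun_prop)

lemma bddBelow_Flx (hf : BellShaped f ρb) {a b : ℝ} (ha : 0 ≤ a) (hb : b ≤ 1) :
    BddBelow (Flx f s '' Icc a b) :=
  (isCompact_Icc.image_of_continuousOn
    ((continuousOn_Flx hf).mono (Icc_subset_Icc ha hb))).bddBelow

lemma bddAbove_Flx (hf : BellShaped f ρb) {a b : ℝ} (ha : 0 ≤ a) (hb : b ≤ 1) :
    BddAbove (Flx f s '' Icc a b) :=
  (isCompact_Icc.image_of_continuousOn
    ((continuousOn_Flx hf).mono (Icc_subset_Icc ha hb))).bddAbove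

lemma God_self (f : ℝ → ℝ) (s a : ℝ) : God f s a a = Flx f s a := by
  simp [God]

lemma God_mono_left (hf : BellShaped f ρb) {u₁ u₂ v : ℝ} (hu₁ : u₁ ∈ Icc (0:ℝ) 1)
    (hu₂ : u₂ ∈ Icc (0:ℝ) 1) (hv : v ∈ Icc (0:ℝ) 1) (h : u₁ ≤ u₂) :
    God f s u₁ v ≤ God f s u₂ v := by
  unfold God
  split_ifs with h1 h2 h2
  · exact csInf_le_csInf (bddBelow_Flx hf hu₁.1 hv.2) ((nonempty_Icc.2 h2).image _)
      (image_mono (Icc_subset_Icc h le_rfl))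
  · push Not at h2
    exact (csInf_le (bddBelow_Flx hf hu₁.1 hv.2) ⟨v, ⟨h1, le_rfl⟩, rfl⟩).trans
      (le_csSup (bddAbove_Flx hf hv.1 hu₂.2) ⟨v, ⟨le_rfl, h2.le⟩, rfl⟩)
  · exact absurd (h.trans h2) h1
  · push Not at h1
    exact csSup_le_csSup (bddAbove_Flx hf hv.1 hu₂.2) ((nonempty_Icc.2 h1.le).image _)
      (image_mono (Icc_subset_Icc le_rfl h))

/-- One-sided Lipschitz bound for the Godunov flux in its second argument: a point of one
interval is compared with its projection on the other, or, if `v₁ < u ≤ v₂`, any point of `[v₁,u]`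
with any point of `[u,v₂]`. -/
lemma God_le_add_right (hf : BellShaped f ρb) {u v₁ v₂ : ℝ} (hu : u ∈ Icc (0:ℝ) 1)
    (hv₁ : v₁ ∈ Icc (0:ℝ) 1) (hv₂ : v₂ ∈ Icc (0:ℝ) 1) (h : v₁ ≤ v₂) :
    God f s u v₁ ≤ God f s u v₂ + (supDeriv f + |s|) * (v₂ - v₁) := by
  have hL : 0 ≤ supDeriv f + |s| := add_nonneg (supDeriv_nonneg hf) (abs_nonneg s)
  have key : ∀ x y, x ∈ Icc (0:ℝ) 1 → y ∈ Icc (0:ℝ) 1 → |x - y| ≤ v₂ - v₁ →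
      Flx f s x ≤ Flx f s y + (supDeriv f + |s|) * (v₂ - v₁) := fun x y hx hy hxy =>
    (Flx_le_add hf hx hy).trans (by gcongr)
  unfold God
  split_ifs with h1 h2 h2
  · rw [← sub_le_iff_le_add]
    refine le_csInf ((nonempty_Icc.2 h2).image _) ?_
    rintro _ ⟨x, hx, rfl⟩
    rw [sub_le_iff_le_add]
    have hm : min x v₁ ∈ Icc u v₁ := ⟨le_min hx.1 h1, min_le_right _ _⟩
    refine (csInf_le (bddBelow_Flx hf hu.1 hv₁.2) ⟨_, hm, rfl⟩).trans
      (key _ _ ⟨hu.1.trans hm.1, hm.2.trans hv₁.2⟩ ⟨hu.1.trans hx.1, hx.2.trans hv₂.2⟩ ?_)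
    rw [abs_le]
    rcases min_cases x v₁ with ⟨e, _⟩ | ⟨e, _⟩ <;> rw [e] <;>
      constructor <;> linarith [hx.2]
  · exact absurd (h1.trans h) h2
  · push Not at h1
    refine csSup_le ((nonempty_Icc.2 h1.le).image _) ?_
    rintro _ ⟨x, hx, rfl⟩
    rw [← sub_le_iff_le_add]
    refine le_csInf ((nonempty_Icc.2 h2).image _) ?_
    rintro _ ⟨y, hy, rfl⟩
    rw [sub_le_iff_le_add]
    refine key _ _ ⟨hv₁.1.trans hx.1, hx.2.trans hu.2⟩ ⟨hu.1.trans hy.1, hy.2.trans hv₂.2⟩ ?_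
    rw [abs_le]
    constructor <;> linarith [hx.1, hx.2, hy.1, hy.2]
  · push Not at h1 h2
    refine csSup_le ((nonempty_Icc.2 h1.le).image _) ?_
    rintro _ ⟨x, hx, rfl⟩
    have hm : max x v₂ ∈ Icc v₂ u := ⟨le_max_right _ _, max_le hx.2 h2.le⟩
    refine (key x (max x v₂) ⟨hv₁.1.trans hx.1, hx.2.trans hu.2⟩
      ⟨hv₂.1.trans hm.1, hm.2.trans hu.2⟩ ?_).trans
      (add_le_add_left (le_csSup (bddAbove_Flx hf hv₂.1 hu.2) ⟨_, hm, rfl⟩) _)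
    rw [abs_le]
    rcases max_cases x v₂ with ⟨e, _⟩ | ⟨e, _⟩ <;> rw [e] <;>
      constructor <;> linarith [hx.1]

lemma EO_le_add_left (hf : BellShaped f ρb) {w₁ w₂ z : ℝ} (hw₁ : w₁ ∈ Icc (0:ℝ) 1)
    (hw₂ : w₂ ∈ Icc (0:ℝ) 1) (h : w₁ ≤ w₂) :
    EO f ρb w₂ z ≤ EO f ρb w₁ z + supDeriv f * (w₂ - w₁) := by
  have hmem : ∀ w ∈ Icc (0:ℝ) 1, min w ρb ∈ Icc (0:ℝ) 1 := fun w hw =>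
    ⟨le_min hw.1 hf.crit_mem.1.le, (min_le_left _ _).trans hw.2⟩
  have h1 := le_of_abs_le (abs_sub_le hf (hmem w₂ hw₂) (hmem w₁ hw₁))
  have h2 : |min w₂ ρb - min w₁ ρb| ≤ w₂ - w₁ := by
    have := abs_min_sub_min_le_max w₂ ρb w₁ ρb
    rwa [sub_self, abs_zero, max_eq_left (abs_nonneg _), abs_of_nonneg (sub_nonneg.2 h)] at this
  have h3 := mul_le_mul_of_nonneg_left h2 (supDeriv_nonneg hf)
  unfold EO
  linarith

lemma EO_anti_right (hf : BellShaped f ρb) (hmax : IsMaxOn f (Icc (0:ℝ) 1) ρb) {w z₁ z₂ : ℝ}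
    (hz₂ : z₂ ∈ Icc (0:ℝ) 1) (h : z₁ ≤ z₂) : EO f ρb w z₂ ≤ EO f ρb w z₁ := by
  have hρ : ρb ∈ Icc (0:ℝ) 1 := Ioo_subset_Icc_self hf.crit_mem
  have hm : max z₂ ρb ∈ Icc (0:ℝ) 1 := ⟨hρ.1.trans (le_max_right _ _), max_le hz₂.2 hρ.2⟩
  -- `max z₁ ρb` lies between `ρb` and `max z₂ ρb`, where a concave function is at least the
  -- smaller of its end values.
  have h1 : min (f ρb) (f (max z₂ ρb)) ≤ f (max z₁ ρb) :=
    hf.concave.min_le_of_mem_Icc hρ hm ⟨le_max_right _ _, max_le_max_right _ h⟩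
  rw [min_eq_right (hmax hm)] at h1
  unfold EO
  linarith

end MarchingRight

open MarchingRight

/-- monotonicity and stability of the constrained marching formula,
right-hand cell. -/
theorem marching_right_monotone_stable
    (f : ℝ → ℝ) (ρb : ℝ) (hf : BellShaped f ρb)
    (hmax : IsMaxOn f (Icc (0:ℝ) 1) ρb)
    (s q : ℝ) (hq : 0 ≤ q) (hsq : 0 ≤ s + q)
    (Δx Δt α : ℝ) (hΔx : 0 < Δx) (hΔt : 0 < Δt)
    (hCFL : 2 * (supDeriv f + |s|) * Δt ≤ Δx) (hα : Δx ≤ α) :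
    0 < α + Δx - s * Δt ∧
    (∀ u₁ u₂ v w z, u₁ ∈ Icc (0:ℝ) 1 → u₂ ∈ Icc (0:ℝ) 1 → v ∈ Icc (0:ℝ) 1 →
      w ∈ Icc (0:ℝ) 1 → z ∈ Icc (0:ℝ) 1 → u₁ ≤ u₂ →
      Hright f ρb s q Δx Δt α u₁ v w z ≤ Hright f ρb s q Δx Δt α u₂ v w z) ∧
    (∀ u v₁ v₂ w z, u ∈ Icc (0:ℝ) 1 → v₁ ∈ Icc (0:ℝ) 1 → v₂ ∈ Icc (0:ℝ) 1 →
      w ∈ Icc (0:ℝ) 1 → z ∈ Icc (0:ℝ) 1 → v₁ ≤ v₂ →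
      Hright f ρb s q Δx Δt α u v₁ w z ≤ Hright f ρb s q Δx Δt α u v₂ w z) ∧
    (∀ u v w₁ w₂ z, u ∈ Icc (0:ℝ) 1 → v ∈ Icc (0:ℝ) 1 → w₁ ∈ Icc (0:ℝ) 1 →
      w₂ ∈ Icc (0:ℝ) 1 → z ∈ Icc (0:ℝ) 1 → w₁ ≤ w₂ →
      Hright f ρb s q Δx Δt α u v w₁ z ≤ Hright f ρb s q Δx Δt α u v w₂ z) ∧
    (∀ u v w z₁ z₂, u ∈ Icc (0:ℝ) 1 → v ∈ Icc (0:ℝ) 1 → w ∈ Icc (0:ℝ) 1 →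
      z₁ ∈ Icc (0:ℝ) 1 → z₂ ∈ Icc (0:ℝ) 1 → z₁ ≤ z₂ →
      Hright f ρb s q Δx Δt α u v w z₁ ≤ Hright f ρb s q Δx Δt α u v w z₂) ∧
    Hright f ρb s q Δx Δt α 0 0 0 0 = 0 ∧
    Hright f ρb s q Δx Δt α 1 1 1 1 = 1 ∧
    (∀ u v w z, u ∈ Icc (0:ℝ) 1 → v ∈ Icc (0:ℝ) 1 → w ∈ Icc (0:ℝ) 1 →
      z ∈ Icc (0:ℝ) 1 → Hright f ρb s q Δx Δt α u v w z ∈ Icc (0:ℝ) 1) := by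
  have hM := supDeriv_nonneg hf
  have hρ := hf.crit_mem
  have hLs : (supDeriv f + |s|) * Δt ≤ Δx / 2 := by linarith
  have hMt : 0 ≤ supDeriv f * Δt := by positivity
  have hst : 0 ≤ |s| * Δt := by positivity
  have hβ : 0 < α + Δx - s * Δt := by
    have := mul_le_mul_of_nonneg_right (le_abs_self s) hΔt.le
    linarith
  have hu : ∀ u₁ u₂ v w z, u₁ ∈ Icc (0:ℝ) 1 → u₂ ∈ Icc (0:ℝ) 1 → v ∈ Icc (0:ℝ) 1 →
      w ∈ Icc (0:ℝ) 1 → z ∈ Icc (0:ℝ) 1 → u₁ ≤ u₂ →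
      Hright f ρb s q Δx Δt α u₁ v w z ≤ Hright f ρb s q Δx Δt α u₂ v w z := by
    intro u₁ u₂ v w z hu₁ hu₂ hv _ _ h
    have := God_mono_left (s := s) hf hu₁ hu₂ hv h
    unfold Hright
    gcongr
  have hv : ∀ u v₁ v₂ w z, u ∈ Icc (0:ℝ) 1 → v₁ ∈ Icc (0:ℝ) 1 → v₂ ∈ Icc (0:ℝ) 1 →
      w ∈ Icc (0:ℝ) 1 → z ∈ Icc (0:ℝ) 1 → v₁ ≤ v₂ →
      Hright f ρb s q Δx Δt α u v₁ w z ≤ Hright f ρb s q Δx Δt α u v₂ w z := by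
    intro u v₁ v₂ w z hu hv₁ hv₂ _ _ h
    have h1 := God_le_add_right (s := s) hf hu hv₁ hv₂ h
    have h0 : 0 ≤ (supDeriv f + |s|) * (v₂ - v₁) :=
      mul_nonneg (add_nonneg hM (abs_nonneg s)) (sub_nonneg.2 h)
    have h2 : min (God f s u v₁) q ≤
        min (God f s u v₂) q + (supDeriv f + |s|) * (v₂ - v₁) := by
      rw [← min_add_add_right]
      exact min_le_min h1 (le_add_of_nonneg_right h0)
    have h3 := mul_le_mul_of_nonneg_right h2 hΔt.le
    have h4 : (supDeriv f + |s|) * Δt * (v₂ - v₁) ≤ α * (v₂ - v₁) :=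
      mul_le_mul_of_nonneg_right (by linarith) (sub_nonneg.2 h)
    refine div_le_div_of_nonneg_right ?_ hβ.le
    linarith
  have hw : ∀ u v w₁ w₂ z, u ∈ Icc (0:ℝ) 1 → v ∈ Icc (0:ℝ) 1 → w₁ ∈ Icc (0:ℝ) 1 →
      w₂ ∈ Icc (0:ℝ) 1 → z ∈ Icc (0:ℝ) 1 → w₁ ≤ w₂ →
      Hright f ρb s q Δx Δt α u v w₁ z ≤ Hright f ρb s q Δx Δt α u v w₂ z := by
    intro u v w₁ w₂ z _ _ hw₁ hw₂ _ h
    have h3 := mul_le_mul_of_nonneg_right (EO_le_add_left (z := z) hf hw₁ hw₂ h) hΔt.le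
    have h4 : supDeriv f * Δt * (w₂ - w₁) ≤ Δx * (w₂ - w₁) :=
      mul_le_mul_of_nonneg_right (by linarith) (sub_nonneg.2 h)
    refine div_le_div_of_nonneg_right ?_ hβ.le
    linarith
  have hz : ∀ u v w z₁ z₂, u ∈ Icc (0:ℝ) 1 → v ∈ Icc (0:ℝ) 1 → w ∈ Icc (0:ℝ) 1 →
      z₁ ∈ Icc (0:ℝ) 1 → z₂ ∈ Icc (0:ℝ) 1 → z₁ ≤ z₂ →
      Hright f ρb s q Δx Δt α u v w z₁ ≤ Hright f ρb s q Δx Δt α u v w z₂ := by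
    intro u v w z₁ z₂ _ _ _ _ hz₂ h
    have := EO_anti_right (w := w) hf hmax hz₂ h
    unfold Hright
    gcongr
  have h0 : Hright f ρb s q Δx Δt α 0 0 0 0 = 0 := by
    simp [Hright, God_self, Flx, EO, hf.zero_at_zero, hρ.1.le, hq]
  have h1 : Hright f ρb s q Δx Δt α 1 1 1 1 = 1 := by
    have hqs : min (-s) q = -s := min_eq_left (by linarith)
    have hnum : Hright f ρb s q Δx Δt α 1 1 1 1 =
        (α + Δx - s * Δt) / (α + Δx - s * Δt) := by
      simp [Hright, God_self, Flx, EO, hf.zero_at_one, hρ.2.le, hqs]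
    rw [hnum, div_self hβ.ne']
  have i0 : (0:ℝ) ∈ Icc (0:ℝ) 1 := ⟨le_rfl, zero_le_one⟩
  have i1 : (1:ℝ) ∈ Icc (0:ℝ) 1 := ⟨zero_le_one, le_rfl⟩
  refine ⟨hβ, hu, hv, hw, hz, h0, h1, ?_⟩
  intro u v w z mu mv mw mz
  constructor
  · calc (0:ℝ) = Hright f ρb s q Δx Δt α 0 0 0 0 := h0.symm
      _ ≤ Hright f ρb s q Δx Δt α u 0 0 0 := hu _ _ _ _ _ i0 mu i0 i0 i0 mu.1
      _ ≤ Hright f ρb s q Δx Δt α u v 0 0 := hv _ _ _ _ _ mu i0 mv i0 i0 mv.1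
      _ ≤ Hright f ρb s q Δx Δt α u v w 0 := hw _ _ _ _ _ mu mv i0 mw i0 mw.1
      _ ≤ Hright f ρb s q Δx Δt α u v w z := hz _ _ _ _ _ mu mv mw i0 mz mz.1
  · calc Hright f ρb s q Δx Δt α u v w z
        ≤ Hright f ρb s q Δx Δt α 1 v w z := hu _ _ _ _ _ mu i1 mv mw mz mu.2
      _ ≤ Hright f ρb s q Δx Δt α 1 1 w z := hv _ _ _ _ _ i1 mv i1 mw mz mv.2
      _ ≤ Hright f ρb s q Δx Δt α 1 1 1 z := hw _ _ _ _ _ i1 i1 mw i1 mz mw.2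
      _ ≤ Hright f ρb s q Δx Δt α 1 1 1 1 := hz _ _ _ _ _ i1 i1 i1 mz i1 mz.2
      _ = 1 := h1
end
end
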